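/- arXiv:1009.0780 — 3 statements merged into one kernel-verified Lean document; each statement's English description precedes it below -/
import Mathlib

section
/- The partition function satisfies the Hardy–Ramanujan asymptotic: p(n) ~ (1/(4n√3))·e^{π√(2n/3)}, that is, lim_{n→∞} p(n)·4n√3·e^{−π√(2n/3)} = 1. -/
open Filter Topology

/-!
The proof is the circle method with a single major arc. By Cauchy's formula, for every `y > 0`,
`p(n) = ∫_{-1/2}^{1/2} P(e^{2πi(x+iy)}) e^{-2πin(x+iy)} dx`, where `P(q) = ∏ (1 - q^k)⁻¹` is the
generating function of the partition numbers (`hasSum_card`, `card_eq_integral`). Near `q = 1` the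
function `P` is controlled by the modularity of the Dedekind eta function, `η(-1/z) = √(z/i) η(z)`,
which reads (`genProd_transform`)
`P(e^{2πiz}) = √z/√i · e^{πiz/12} · e^{πi/(12z)} · P(e^{-2πi/z})`,
and the last factor tends to `1` as `z → 0` with `|Re z|` at most a multiple of `Im z`.

The height is taken to be `y = s²` with `24 n s⁴ = 1`, which is the saddle point of
`e^{π/(12y) + 2πny}`; both terms of the exponent then equal `π/(12s²)`.

* On the major arc `|x| ≤ 4y`, the substitution `x = s³u` turns the integrand into
  `s · e^{π/(6s²)} · kernel s u` (`integrand_eq_kernel`), where `kernel s u → e^{-πu²/12}` pointwise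
  as `s → 0` and is dominated by a fixed Gaussian. Hence the major arc contributes
  `s⁴ e^{π/(6s²)} (√12 + o(1))` (`tendsto_integral_kernel`).
* On the minor arc `4y ≤ |x| ≤ 1/2`, comparing only the `m = 1` term of
  `log |P(q)| = ∑_m m⁻¹ Re (q^m/(1-q^m))` with its value at `|q|` saves a factor `e^{-1/(16y)}` over
  the trivial bound `|P(q)| ≤ P(|q|)` (`norm_genProd_le`, `minor_bound`), so this part is negligible.

Since `s⁴ = 1/(24n)`, `√12/24 = 1/(4√3)` and `π/(6s²) = π√(2n/3)`, the asymptotic follows.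
-/

namespace HardyRamanujan

/-! ### The generating function of the partition numbers -/

/-- The product `∏_{k ≥ 1} (1 - q^k)⁻¹`, meaningful for `‖q‖ < 1`, where it equals `∑ p(n) qⁿ`
(`hasSum_card`). -/
noncomputable def genProd (q : ℂ) : ℂ := (∏' n : ℕ, (1 - q ^ (n + 1)))⁻¹

section GeneratingFunction

/-- The formal power series `F` converges absolutely at `q`, with sum `v`. This carries product
identities from formal power series to complex functions. -/
def AbsEval (F : PowerSeries ℂ) (q v : ℂ) : Prop :=
  Summable (fun n ↦ ‖PowerSeries.coeff n F * q ^ n‖) ∧ ∑' n, PowerSeries.coeff n F * q ^ n = v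

lemma AbsEval.mul {F G : PowerSeries ℂ} {q v w : ℂ} (hF : AbsEval F q v) (hG : AbsEval G q w) :
    AbsEval (F * G) q (v * w) := by
  have key : (fun n ↦ PowerSeries.coeff n (F * G) * q ^ n) = fun n ↦
      ∑ kl ∈ Finset.HasAntidiagonal.antidiagonal n,
        (PowerSeries.coeff kl.1 F * q ^ kl.1) * (PowerSeries.coeff kl.2 G * q ^ kl.2) := by
    funext n
    rw [PowerSeries.coeff_mul, Finset.sum_mul]
    refine Finset.sum_congr rfl fun kl hkl ↦ ?_
    rw [← Finset.HasAntidiagonal.mem_antidiagonal.mp hkl, pow_add]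
    ring
  refine ⟨?_, ?_⟩
  · have := summable_norm_sum_mul_antidiagonal_of_summable_norm hF.1 hG.1
    exact this.congr fun n ↦ by rw [congrFun key n]
  · rw [key, ← tsum_mul_tsum_eq_tsum_sum_antidiagonal_of_summable_norm hF.1 hG.1, hF.2, hG.2]

lemma absEval_one (q : ℂ) : AbsEval 1 q 1 := by
  have h : ∀ n ≠ 0, PowerSeries.coeff n (1 : PowerSeries ℂ) * q ^ n = 0 := by
    intro n hn
    simp [PowerSeries.coeff_one, hn]
  refine ⟨?_, ?_⟩
  · refine summable_of_ne_finset_zero (s := {0}) fun n hn ↦ ?_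
    rw [h n (by simpa using hn), norm_zero]
  · rw [tsum_eq_single 0 h]
    simp

open scoped PowerSeries.WithPiTopology in
/-- The geometric series `∑ X^{kj}` is the series with coefficients the indicator of `k ∣ n`; the
latter form has coefficients that can be read off. -/
lemma tsum_X_pow_eq (k : ℕ) (hk : 0 < k) :
    ∑' j : ℕ, (PowerSeries.X : PowerSeries ℂ) ^ (k * j) =
      PowerSeries.mk fun n ↦ if k ∣ n then 1 else 0 := by
  have h1 : (∑' j : ℕ, ((PowerSeries.X : PowerSeries ℂ) ^ k) ^ j) * (1 - PowerSeries.X ^ k) = 1 :=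
    PowerSeries.WithPiTopology.tsum_pow_mul_one_sub_of_constantCoeff_eq_zero (by simp [hk.ne'])
  have h2 : (PowerSeries.mk fun n ↦ if k ∣ n then (1 : ℂ) else 0) * (1 - PowerSeries.X ^ k) = 1 := by
    ext n
    rw [mul_sub, mul_one, map_sub, PowerSeries.coeff_mul_X_pow', PowerSeries.coeff_mk,
      PowerSeries.coeff_one]
    by_cases hn : k ≤ n
    · have h0 : n ≠ 0 := by omega
      have : k ∣ n - k ↔ k ∣ n := (Nat.dvd_sub_iff_left hn dvd_rfl)
      simp only [hn, if_true, PowerSeries.coeff_mk, this, h0, if_false, sub_self]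
    · have : k ∣ n ↔ n = 0 :=
        ⟨fun h ↦ Nat.eq_zero_of_dvd_of_lt h (by omega), fun h ↦ h ▸ dvd_zero k⟩
      simp [hn, this]
  simp_rw [pow_mul]
  exact mul_right_cancel₀ (fun h ↦ by simp [h] at h1) (h1.trans h2.symm)

lemma absEval_geom {q : ℂ} (hq : ‖q‖ < 1) (k : ℕ) (hk : 0 < k) :
    AbsEval (PowerSeries.mk fun n ↦ if k ∣ n then 1 else 0) q (1 - q ^ k)⁻¹ := by
  have hinj : Function.Injective fun j : ℕ ↦ k * j := fun a b h ↦ Nat.eq_of_mul_eq_mul_left hk h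
  have hout : ∀ n ∉ Set.range (fun j : ℕ ↦ k * j),
      PowerSeries.coeff n (PowerSeries.mk fun n ↦ if k ∣ n then (1 : ℂ) else 0) * q ^ n = 0 := by
    intro n hn
    have : ¬ k ∣ n := fun ⟨j, hj⟩ ↦ hn ⟨j, hj.symm⟩
    simp [this]
  have hs := hasSum_geometric_of_norm_lt_one
    (show ‖q ^ k‖ < 1 by rw [norm_pow]; exact pow_lt_one₀ (norm_nonneg q) hq hk.ne')
  refine ⟨?_, ?_⟩
  · refine Summable.of_nonneg_of_le (fun _ ↦ norm_nonneg _) (fun n ↦ ?_)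
      (summable_geometric_of_lt_one (norm_nonneg q) hq)
    rw [PowerSeries.coeff_mk, norm_mul, norm_pow]
    split_ifs <;> simp
  · refine HasSum.tsum_eq ((hinj.hasSum_iff hout).mp ?_)
    convert! hs using 2 with j
    simp [pow_mul]

open scoped PowerSeries.WithPiTopology in
/-- The generating function of the partitions into parts at most `N` is the finite product
`∏_{k ≤ N} (1 - q^k)⁻¹`. The full product is reached by letting `N → ∞`. -/
lemma absEval_restricted {q : ℂ} (hq : ‖q‖ < 1) (N : ℕ) :
    AbsEval (PowerSeries.mk fun n ↦ ((Nat.Partition.restricted n (· ≤ N)).card : ℂ)) q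
      (∏ i ∈ Finset.range N, (1 - q ^ (i + 1))⁻¹) := by
  have h := Nat.Partition.powerSeriesMk_card_restricted_eq_tprod ℂ (· ≤ N)
  rw [tprod_eq_prod (s := Finset.range N)
    (fun i hi ↦ if_neg (show ¬ i + 1 ≤ N from fun h' ↦ hi (Finset.mem_range.mpr h')))] at h
  rw [h]
  clear h
  have : ∀ s ⊆ Finset.range N, AbsEval (∏ i ∈ s, if i + 1 ≤ N then
        ∑' j : ℕ, (PowerSeries.X : PowerSeries ℂ) ^ ((i + 1) * j) else 1) q
      (∏ i ∈ s, (1 - q ^ (i + 1))⁻¹) := by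
    intro s
    induction s using Finset.induction_on with
    | empty => intro _; simpa using absEval_one q
    | insert a s ha ih =>
      intro hs
      rw [Finset.insert_subset_iff] at hs
      rw [Finset.prod_insert ha, Finset.prod_insert ha]
      refine AbsEval.mul ?_ (ih hs.2)
      rw [if_pos (Nat.succ_le_of_lt (Finset.mem_range.mp hs.1)), tsum_X_pow_eq _ a.succ_pos]
      exact absEval_geom hq _ a.succ_pos
  exact this _ subset_rfl

lemma restricted_card_le (n N : ℕ) :
    (Nat.Partition.restricted n (· ≤ N)).card ≤ Fintype.card (Nat.Partition n) :=
  Finset.card_le_univ _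

lemma restricted_card_eq {n N : ℕ} (h : n ≤ N) :
    (Nat.Partition.restricted n (· ≤ N)).card = Fintype.card (Nat.Partition n) := by
  rw [← Finset.card_univ]
  congr 1
  refine Finset.filter_true_of_mem fun p _ i hi ↦ ?_
  exact ((Multiset.le_sum_of_mem hi).trans_eq p.parts_sum).trans h

lemma one_sub_pow_ne_zero {q : ℂ} (hq : ‖q‖ < 1) (n : ℕ) : 1 - q ^ (n + 1) ≠ 0 := by
  intro h
  have h1 : ‖q ^ (n + 1)‖ < 1 := by
    rw [norm_pow]; exact pow_lt_one₀ (norm_nonneg q) hq n.succ_ne_zero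
  rw [← sub_eq_zero.mp h] at h1
  simp at h1

lemma prod_ne_zero {q : ℂ} (hq : ‖q‖ < 1) : ∏' n : ℕ, (1 - q ^ (n + 1)) ≠ 0 := by
  simp_rw [sub_eq_add_neg]
  refine tprod_one_add_ne_zero_of_summable (f := fun n : ℕ ↦ -q ^ (n + 1)) ?_ ?_
  · intro n
    rw [← sub_eq_add_neg]
    exact one_sub_pow_ne_zero hq n
  · simpa using (summable_nat_add_iff 1).mpr (summable_geometric_of_lt_one (norm_nonneg q) hq)

lemma tendsto_genProd {q : ℂ} (hq : ‖q‖ < 1) :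
    Tendsto (fun N ↦ ∏ i ∈ Finset.range N, (1 - q ^ (i + 1))⁻¹) atTop (𝓝 (genProd q)) := by
  simp_rw [Finset.prod_inv_distrib]
  exact (ModularForm.multipliable_one_sub_pow hq).hasProd.tendsto_prod_nat.inv₀ (prod_ne_zero hq)

/-- The partial sums up to `N` of `∑ p(n) rⁿ` only see partitions with parts at most `N`, so they
are bounded by the partial products, which converge. -/
lemma summable_card {r : ℝ} (h0 : 0 ≤ r) (h1 : r < 1) :
    Summable fun n ↦ (Fintype.card (Nat.Partition n) : ℝ) * r ^ n := by
  have hr : ‖(r : ℂ)‖ < 1 := by simpa [abs_of_nonneg h0] using h1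
  have hb := (tendsto_genProd hr).norm.bddAbove_range
  obtain ⟨C, hC⟩ := hb
  refine summable_of_sum_range_le (c := C) (fun n ↦ by positivity) fun N ↦ ?_
  refine le_trans ?_ (hC ⟨N, rfl⟩)
  obtain ⟨hs, ht⟩ := absEval_restricted hr N
  have hcast : ∀ n, PowerSeries.coeff n (PowerSeries.mk fun n ↦
        ((Nat.Partition.restricted n (· ≤ N)).card : ℂ)) * (r : ℂ) ^ n =
      (((Nat.Partition.restricted n (· ≤ N)).card * r ^ n : ℝ) : ℂ) := fun n ↦ by
    simp
  simp_rw [hcast] at hs ht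
  have hs' : Summable fun n ↦ ((Nat.Partition.restricted n (· ≤ N)).card * r ^ n : ℝ) := by
    refine hs.congr fun n ↦ ?_
    rw [Complex.norm_real, Real.norm_of_nonneg (by positivity)]
  dsimp only
  rw [← ht, ← Complex.ofReal_tsum, Complex.norm_real]
  refine le_trans ?_ (le_abs_self _)
  refine le_trans (Finset.sum_le_sum fun n hn ↦ ?_)
    (hs'.sum_le_tsum (Finset.range N) fun n _ ↦ by positivity)
  rw [restricted_card_eq (Finset.mem_range.mp hn).le]

/-- Euler's identity `∑ p(n) qⁿ = ∏ (1 - q^k)⁻¹` in the unit disc: dominated convergence applied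
to the generating functions of the partitions into parts at most `N`. -/
lemma hasSum_card {q : ℂ} (hq : ‖q‖ < 1) :
    HasSum (fun n ↦ (Fintype.card (Nat.Partition n) : ℂ) * q ^ n) (genProd q) := by
  have hs := summable_card (norm_nonneg q) hq
  have hsum : Summable fun n ↦ (Fintype.card (Nat.Partition n) : ℂ) * q ^ n := by
    refine Summable.of_norm (hs.congr fun n ↦ ?_)
    simp
  have hlim : Tendsto (fun N ↦ ∑' n, ((Nat.Partition.restricted n (· ≤ N)).card : ℂ) * q ^ n)
      atTop (𝓝 (∑' n, (Fintype.card (Nat.Partition n) : ℂ) * q ^ n)) := by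
    refine tendsto_tsum_of_dominated_convergence hs (fun n ↦ ?_) (Eventually.of_forall fun N n ↦ ?_)
    · refine tendsto_const_nhds.congr' ?_
      filter_upwards [eventually_ge_atTop n] with N hN
      rw [restricted_card_eq hN]
    · rw [norm_mul, norm_pow, Complex.norm_natCast]
      gcongr
      exact restricted_card_le n N
  have hlim' : Tendsto (fun N ↦ ∑' n, ((Nat.Partition.restricted n (· ≤ N)).card : ℂ) * q ^ n)
      atTop (𝓝 (genProd q)) := by
    refine (tendsto_genProd hq).congr fun N ↦ ?_
    rw [← (absEval_restricted hq N).2]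
    simp
  rw [← tendsto_nhds_unique hlim hlim']
  exact hsum.hasSum

end GeneratingFunction

/-! ### Cauchy integral, modular transformation and growth of the generating function -/

section Integral
open Complex

lemma norm_exp_two_pi_I_mul (z : ℂ) : ‖exp (2 * Real.pi * I * z)‖ = Real.exp (-(2 * Real.pi * z.im)) := by
  rw [norm_exp]
  congr 1
  simp

lemma norm_exp_lt_one {z : ℂ} (hz : 0 < z.im) : ‖exp (2 * Real.pi * I * z)‖ < 1 := by
  rw [norm_exp_two_pi_I_mul, Real.exp_lt_one_iff]
  have := Real.pi_pos
  simp only [Left.neg_neg_iff]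
  positivity

lemma integral_exp_int (k : ℤ) (hk : k ≠ 0) (y : ℝ) :
    ∫ x in (-1 / 2 : ℝ)..(1 / 2), exp (2 * Real.pi * I * k * (x + y * I)) = 0 := by
  have hc : (2 * Real.pi * I * k : ℂ) ≠ 0 := by
    simp [Real.pi_ne_zero, hk]
  have h : ∀ x : ℝ, exp (2 * Real.pi * I * k * (x + y * I)) =
      exp (2 * Real.pi * I * k * (y * I)) * exp (2 * Real.pi * I * k * x) := fun x ↦ by
    rw [← exp_add]; congr 1; ring
  simp_rw [h]
  rw [intervalIntegral.integral_const_mul, integral_exp_mul_complex hc]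
  have : exp (2 * Real.pi * I * k * (1 / 2 : ℝ)) = exp (2 * Real.pi * I * k * (-1 / 2 : ℝ)) := by
    rw [exp_eq_exp_iff_exists_int]
    exact ⟨k, by push_cast; ring⟩
  rw [this]
  simp

/-- Cauchy's formula for the coefficient `p(n)`, on the circle of radius `e^{-2πy}`. -/
lemma card_eq_integral (n : ℕ) {y : ℝ} (hy : 0 < y) :
    (Fintype.card (Nat.Partition n) : ℂ) = ∫ x in (-1 / 2 : ℝ)..(1 / 2),
      genProd (exp (2 * Real.pi * I * (x + y * I))) * exp (-(2 * Real.pi * I * n * (x + y * I))) := by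
  set r : ℝ := Real.exp (-(2 * Real.pi * y)) with hr
  have hnorm : ∀ x : ℝ, ‖exp (2 * Real.pi * I * (x + y * I))‖ = r := fun x ↦ by
    rw [norm_exp_two_pi_I_mul]; simp [hr]
  have hr1 : r < 1 := by
    rw [← hnorm 0]; exact norm_exp_lt_one (by simpa using hy)
  have hN : ∀ x : ℝ, ‖exp (-(2 * Real.pi * I * n * (x + y * I)))‖ =
      Real.exp (2 * Real.pi * n * y) := fun x ↦ by
    rw [norm_exp]; congr 1; simp
  have hS := intervalIntegral.hasSum_integral_of_dominated_convergence
    (μ := MeasureTheory.volume) (a := -1 / 2) (b := 1 / 2)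
    (F := fun (m : ℕ) (x : ℝ) ↦ (Fintype.card (Nat.Partition m) : ℂ) *
      exp (2 * Real.pi * I * (x + y * I)) ^ m * exp (-(2 * Real.pi * I * n * (x + y * I))))
    (f := fun x ↦ genProd (exp (2 * Real.pi * I * (x + y * I))) *
      exp (-(2 * Real.pi * I * n * (x + y * I))))
    (fun m _ ↦ (Fintype.card (Nat.Partition m) : ℝ) * r ^ m * Real.exp (2 * Real.pi * n * y))
    (fun m ↦ Continuous.aestronglyMeasurable (by fun_prop))
    (fun m ↦ Eventually.of_forall fun x _ ↦ by
      rw [norm_mul, norm_mul, norm_pow, hnorm, hN, norm_natCast])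
    (Eventually.of_forall fun x _ ↦ (summable_card (Real.exp_pos _).le hr1).mul_right _)
    intervalIntegrable_const
    (Eventually.of_forall fun x _ ↦ (hasSum_card (by rw [hnorm]; exact hr1)).mul_right _)
  refine HasSum.unique ?_ hS
  have hI : ∀ m : ℕ, ∫ x in (-1 / 2 : ℝ)..(1 / 2), (Fintype.card (Nat.Partition m) : ℂ) *
      exp (2 * Real.pi * I * (x + y * I)) ^ m * exp (-(2 * Real.pi * I * n * (x + y * I))) =
      if m = n then (Fintype.card (Nat.Partition n) : ℂ) else 0 := by
    intro m
    have h : ∀ x : ℝ, (Fintype.card (Nat.Partition m) : ℂ) *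
      exp (2 * Real.pi * I * (x + y * I)) ^ m * exp (-(2 * Real.pi * I * n * (x + y * I))) =
      (Fintype.card (Nat.Partition m) : ℂ) *
        exp (2 * Real.pi * I * ((m - n : ℤ) : ℂ) * (x + y * I)) := fun x ↦ by
      rw [mul_assoc, ← exp_nat_mul, ← exp_add]
      congr 2
      push_cast
      ring
    simp_rw [h]
    rw [intervalIntegral.integral_const_mul]
    split_ifs with hmn
    · subst hmn
      simp
      norm_num
    · rw [integral_exp_int _ (by omega), mul_zero]
  simp_rw [hI]
  exact hasSum_ite_eq n _

/-- The inversion formula for the generating function, obtained from that of the Dedekind eta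
function `η(z) = e^{πiz/12} / genProd (e^{2πiz})`. -/
lemma genProd_transform {z : ℂ} (hz : 0 < z.im) :
    genProd (exp (2 * Real.pi * I * z)) = sqrt z / sqrt I * exp (Real.pi * I / 12 * z) *
      exp (Real.pi * I / 12 * z⁻¹) * genProd (exp (2 * Real.pi * I * (-1 / z))) := by
  have hS := ModularForm.eta_comp_eq_csqrt_I_inv (x := z) hz
  have hz' : 0 < (-1 / z).im := by
    rw [neg_div, one_div, neg_im, inv_im, neg_div, neg_neg]
    exact div_pos hz (normSq_pos.mpr fun h ↦ by simp [h] at hz)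
  have heta : ∀ w : ℂ, 0 < w.im → ModularForm.eta w =
      exp (Real.pi * I / 12 * w) * (genProd (exp (2 * Real.pi * I * w)))⁻¹ := by
    intro w _
    rw [ModularForm.eta, genProd, inv_inv]
    simp_rw [ModularForm.eta_q_eq_pow]
    congr 1
    rw [Function.Periodic.qParam]
    congr 1
    push_cast
    ring
  simp only [Function.comp_apply, Pi.smul_apply, Pi.mul_apply, smul_eq_mul] at hS
  rw [heta z hz, heta _ hz'] at hS
  have h1 : genProd (exp (2 * Real.pi * I * z)) ≠ 0 := inv_ne_zero (prod_ne_zero (norm_exp_lt_one hz))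
  have h2 : genProd (exp (2 * Real.pi * I * (-1 / z))) ≠ 0 :=
    inv_ne_zero (prod_ne_zero (norm_exp_lt_one hz'))
  have h3 : sqrt I ≠ 0 := by simp [sqrt]
  have h4 : exp (Real.pi * I / 12 * z⁻¹) * exp (Real.pi * I / 12 * (-1 / z)) = 1 := by
    rw [← exp_add, ← mul_add, show z⁻¹ + -1 / z = 0 by ring, mul_zero, exp_zero]
  generalize genProd (exp (2 * Real.pi * I * z)) = A at *
  generalize genProd (exp (2 * Real.pi * I * (-1 / z))) = B at *
  generalize exp (Real.pi * I / 12 * (-1 / z)) = E at *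
  generalize exp (Real.pi * I / 12 * z⁻¹) = E' at *
  field_simp at hS ⊢
  calc sqrt I * A = (E' * E) * A * sqrt I := by rw [h4]; ring
    _ = E' * (E * A * sqrt I) := by ring
    _ = _ := by linear_combination E' * hS

lemma tendsto_genProd_zero : Tendsto genProd (𝓝 0) (𝓝 1) := by
  have h0 : (0 : ℂ) ∈ Metric.ball (0 : ℂ) 1 := Metric.mem_ball_self one_pos
  have h := (ModularForm.differentiableOn_tprod_one_sub_pow.differentiableAt
    (Metric.isOpen_ball.mem_nhds h0)).continuousAt.tendsto.inv₀ (prod_ne_zero (by simp))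
  simpa [genProd] using! h

/-- With `m ≥ 1`, each term of `-log |1 - u| = ∑ Re(u^m)/m` is at most the corresponding term of
`-log (1 - |u|) = ∑ |u|^m/m`; keeping the gap in the term `m = 1` gives this lower bound. -/
lemma norm_one_sub_ge {u : ℂ} (hu : ‖u‖ < 1) :
    (1 - ‖u‖) * Real.exp (‖u‖ - u.re) ≤ ‖1 - u‖ := by
  have hpos : 0 < 1 - ‖u‖ := by linarith
  have hne : 0 < ‖1 - u‖ := norm_pos_iff.mpr fun h ↦ by
    rw [← sub_eq_zero.mp h] at hu; simp at hu
  have h1 := hasSum_re (hasSum_taylorSeries_neg_log hu)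
  have h2 := hasSum_re (hasSum_taylorSeries_neg_log (z := (‖u‖ : ℂ)) (by simpa using hu))
  have h3 := le_hasSum (h2.sub h1) 1 fun n _ ↦ by
    rw [sub_nonneg]
    refine (re_le_norm _).trans (le_of_eq ?_)
    rw [norm_div, norm_pow, norm_natCast]
    norm_cast
  have e1 : (-log (1 - u)).re = -Real.log ‖1 - u‖ := by rw [neg_re, log_re]
  have e2 : (-log (1 - (‖u‖ : ℂ))).re = -Real.log (1 - ‖u‖) := by
    rw [neg_re, log_re]
    norm_cast
    rw [Real.norm_of_nonneg hpos.le]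
  rw [e1, e2] at h3
  simp only [pow_one, Nat.cast_one, div_one, ofReal_re] at h3
  rw [← Real.exp_log hne, ← Real.exp_log hpos, ← Real.exp_add]
  apply Real.exp_le_exp.mpr
  linarith

/-- The saving over the trivial bound `|P(q)| ≤ P(|q|)` when `q` is far from the positive real
axis: the product over `k` of `norm_one_sub_ge` at `u = q^k`, where the gaps sum to
`|q|/(1-|q|) - Re (q/(1-q))`. -/
lemma norm_genProd_le {q : ℂ} (hq : ‖q‖ < 1) :
    ‖genProd q‖ ≤ ‖genProd ‖q‖‖ * Real.exp (‖q‖ / ‖1 - q‖ - ‖q‖ / (1 - ‖q‖)) := by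
  have hq' : ‖(‖q‖ : ℂ)‖ < 1 := by simpa using hq
  have hg : HasSum (fun i : ℕ ↦ q ^ (i + 1)) (q / (1 - q)) := by
    simpa [pow_succ', div_eq_mul_inv] using (hasSum_geometric_of_norm_lt_one hq).mul_left q
  have hg' : HasSum (fun i : ℕ ↦ ‖q‖ ^ (i + 1)) (‖q‖ / (1 - ‖q‖)) := by
    simpa [pow_succ', div_eq_mul_inv] using
      (hasSum_geometric_of_lt_one (norm_nonneg q) hq).mul_left ‖q‖
  have hlim := ((tendsto_genProd hq').norm.mul
    ((Real.continuous_exp.tendsto _).comp ((hasSum_re hg).sub hg').tendsto_sum_nat))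
  have hle := le_of_tendsto_of_tendsto' (tendsto_genProd hq).norm hlim fun N ↦ by
    simp only [Function.comp_apply]
    rw [norm_prod, norm_prod, Real.exp_sum, ← Finset.prod_mul_distrib]
    refine Finset.prod_le_prod (fun _ _ ↦ norm_nonneg _) fun i _ ↦ ?_
    have hu : ‖q ^ (i + 1)‖ < 1 := by
      rw [norm_pow]; exact pow_lt_one₀ (norm_nonneg q) hq i.succ_ne_zero
    have h := norm_one_sub_ge hu
    have hpos : 0 < 1 - ‖q ^ (i + 1)‖ := by linarith
    have e : ‖(1 - (‖q‖ : ℂ) ^ (i + 1))⁻¹‖ = (1 - ‖q ^ (i + 1)‖)⁻¹ := by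
      rw [norm_inv, norm_pow]
      rw [norm_pow] at hpos
      norm_cast
      rw [Real.norm_of_nonneg hpos.le]
    rw [e, norm_inv, ← norm_pow, ← neg_sub ‖q ^ (i + 1)‖ (q ^ (i + 1)).re, Real.exp_neg, ← mul_inv]
    exact inv_anti₀ (by positivity) h
  refine hle.trans ?_
  gcongr
  exact (re_le_norm _).trans_eq (norm_div _ _)

end Integral

/-! ### The minor arc -/

section Minor
open Complex

lemma norm_sqrt (z : ℂ) : ‖sqrt z‖ = √‖z‖ := by
  have h : sqrt z ^ 2 = z := by
    rw [sqrt]; exact_mod_cast cpow_nat_inv_pow z two_ne_zero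
  rw [eq_comm, Real.sqrt_eq_iff_eq_sq (norm_nonneg _) (norm_nonneg _), ← norm_pow, h]

lemma sqrt_sq_mul {s : ℝ} (hs : 0 < s) {w : ℂ} (hw : w ≠ 0) :
    sqrt ((s : ℂ) ^ 2 * w) = s * sqrt w := by
  have hs2 : (s : ℂ) ≠ 0 := by exact_mod_cast hs.ne'
  have hlog : log ((s : ℂ) ^ 2 * w) = 2 * Real.log s + log w := by
    have := log_ofReal_mul (r := s ^ 2) (by positivity) hw
    rw [Real.log_pow] at this
    push_cast at this ⊢
    exact this
  rw [sqrt, sqrt, cpow_def_of_ne_zero (by simp [hs2, hw]), cpow_def_of_ne_zero hw, hlog, add_mul,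
    exp_add]
  congr 1
  rw [show (2 * Real.log s * 2⁻¹ : ℂ) = Real.log s by ring, ← ofReal_exp, Real.exp_log hs]

lemma im_neg_one_div (z : ℂ) : (-1 / z).im = z.im / normSq z := by
  rw [neg_div, one_div, neg_im, inv_im, neg_div, neg_neg]

lemma exists_norm_genProd_le_two : ∃ M : ℝ, ∀ w : ℂ, M ≤ w.im →
    ‖genProd (exp (2 * Real.pi * I * w))‖ ≤ 2 := by
  have h := tendsto_genProd_zero.norm.eventually_lt_const (show ‖(1 : ℂ)‖ < 2 by simp)
  obtain ⟨δ, hδ, hb⟩ := Metric.eventually_nhds_iff.mp h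
  have hlim : Tendsto (fun M : ℝ ↦ Real.exp (-(2 * Real.pi * M))) atTop (𝓝 0) :=
    Real.tendsto_exp_neg_atTop_nhds_zero.comp (tendsto_id.const_mul_atTop (by positivity))
  obtain ⟨M, hM⟩ := (hlim.eventually_lt_const hδ).exists
  refine ⟨M, fun w hw ↦ (hb ?_).le⟩
  rw [dist_zero_right, norm_exp_two_pi_I_mul]
  refine lt_of_le_of_lt ?_ hM
  gcongr

/-- Growth of the generating function along the positive real axis, `q = e^{-2πy}` with `y → 0`. -/
lemma norm_genProd_imaginary_le {y : ℝ} (hy : 0 < y) (hy1 : y ≤ 1) :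
    ‖genProd (exp (2 * Real.pi * I * (y * I)))‖ ≤
      Real.exp (Real.pi / (12 * y)) * ‖genProd (exp (2 * Real.pi * I * (-1 / (y * I))))‖ := by
  have hpi := Real.pi_pos
  rw [genProd_transform (by simpa using hy), norm_mul, norm_mul, norm_mul, norm_div, norm_sqrt,
    norm_sqrt]
  gcongr
  have e1 : ‖exp (Real.pi * I / 12 * (y * I))‖ ≤ 1 := by
    rw [norm_exp, Real.exp_le_one_iff,
      show (Real.pi * I / 12 * (y * I) : ℂ) = ((-(Real.pi / 12 * y) : ℝ) : ℂ) by
        push_cast; linear_combination (Real.pi / 12 * y : ℂ) * I_mul_I, ofReal_re]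
    have : 0 < Real.pi / 12 * y := by positivity
    linarith
  have e2 : ‖exp (Real.pi * I / 12 * (y * I)⁻¹)‖ = Real.exp (Real.pi / (12 * y)) := by
    have hy' : (y : ℂ) ≠ 0 := by exact_mod_cast hy.ne'
    rw [norm_exp, show (Real.pi * I / 12 * (y * I)⁻¹ : ℂ) = ((Real.pi / (12 * y) : ℝ) : ℂ) by
      push_cast; field_simp [I_ne_zero], ofReal_re]
  have e3 : √‖(y * I : ℂ)‖ / √‖I‖ ≤ 1 := by
    simp only [norm_mul, norm_I, mul_one, norm_real, Real.sqrt_one, div_one]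
    rw [Real.norm_of_nonneg hy.le]
    exact Real.sqrt_le_one.mpr hy1
  rw [e2]
  calc _ ≤ 1 * 1 * Real.exp (Real.pi / (12 * y)) := by gcongr
    _ = _ := by ring

/-- Follows from `|1 - re^{iθ}|² = (1-r)² + 4r sin²(θ/2)` and Jordan's inequality
`|sin (πx)| ≥ 2|x|` for `|x| ≤ 1/2`. -/
lemma norm_one_sub_exp_ge {x y : ℝ} (hx : |x| ≤ 1 / 2) :
    16 * Real.exp (-(2 * Real.pi * y)) * x ^ 2 ≤ ‖1 - exp (2 * Real.pi * I * (x + y * I))‖ ^ 2 := by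
  have hpi := Real.pi_pos
  set r := Real.exp (-(2 * Real.pi * y)) with hr
  have e : exp (2 * Real.pi * I * (x + y * I)) = r * exp ((2 * Real.pi * x : ℝ) * I) := by
    rw [hr, ofReal_exp, ← exp_add]
    congr 1
    push_cast
    linear_combination (2 * Real.pi * y : ℂ) * I_mul_I
  have hsin : 4 * x ^ 2 ≤ Real.sin (Real.pi * x) ^ 2 := by
    have h1 := Real.mul_le_sin (x := Real.pi * |x|) (by positivity) (by nlinarith)
    have h2 : Real.sin (Real.pi * |x|) ^ 2 = Real.sin (Real.pi * x) ^ 2 := by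
      rcases abs_choice x with h | h <;> rw [h]
      rw [mul_neg, Real.sin_neg, neg_sq]
    rw [← h2, ← sq_abs x]
    have h3 : 2 / Real.pi * (Real.pi * |x|) = 2 * |x| := by field_simp
    rw [h3] at h1
    nlinarith [abs_nonneg x]
  have hcos : Real.cos (2 * Real.pi * x) = 1 - 2 * Real.sin (Real.pi * x) ^ 2 := by
    rw [mul_assoc, Real.cos_two_mul, Real.cos_sq']; ring
  have hn : ‖1 - exp (2 * Real.pi * I * (x + y * I))‖ ^ 2 =
      (1 - r) ^ 2 + 4 * r * Real.sin (Real.pi * x) ^ 2 := by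
    rw [e, ← normSq_eq_norm_sq, normSq_apply]
    simp only [sub_re, one_re, sub_im, one_im, re_ofReal_mul, im_ofReal_mul, exp_ofReal_mul_I_re,
      exp_ofReal_mul_I_im]
    have := Real.sin_sq_add_cos_sq (2 * Real.pi * x)
    linear_combination r ^ 2 * this - 2 * r * hcos
  rw [hn]
  have : 0 < r := Real.exp_pos _
  nlinarith [sq_nonneg (1 - r)]

/-- Minor arc bound: for `4y ≤ |x| ≤ 1/2` the generating function is smaller by a factor
`e^{-1/(16y)}` than its size `e^{π/(12y)}` on the real axis. The constant `4` is large enough for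
`|q|/|1-q|` to be at most half of `|q|/(1-|q|)`. -/
lemma minor_bound : ∀ᶠ y : ℝ in 𝓝[>] 0, ∀ x : ℝ, 4 * y ≤ |x| → |x| ≤ 1 / 2 →
    ‖genProd (exp (2 * Real.pi * I * (x + y * I)))‖ ≤
      2 * Real.exp (Real.pi / (12 * y) - 1 / (16 * y)) := by
  obtain ⟨M, hM⟩ := exists_norm_genProd_le_two
  have hr : ∀ᶠ y : ℝ in 𝓝[>] 0, 7 / 8 < Real.exp (-(2 * Real.pi * y)) := by
    have : Tendsto (fun y : ℝ ↦ Real.exp (-(2 * Real.pi * y))) (𝓝 0) (𝓝 1) := by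
      have h : Continuous fun y : ℝ ↦ Real.exp (-(2 * Real.pi * y)) := by fun_prop
      simpa using h.tendsto 0
    exact (this.mono_left nhdsWithin_le_nhds).eventually_const_lt (by norm_num)
  have hinv : ∀ᶠ y : ℝ in 𝓝[>] 0, M ≤ y⁻¹ := tendsto_inv_nhdsGT_zero.eventually_ge_atTop M
  have h1 : ∀ᶠ y : ℝ in 𝓝[>] 0, y < 1 :=
    (tendsto_id.mono_left nhdsWithin_le_nhds).eventually_lt_const one_pos
  filter_upwards [hr, hinv, h1, self_mem_nhdsWithin] with y hr hinv hy1 (hy : 0 < y) x hx1 hx2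
  set q := exp (2 * Real.pi * I * (x + y * I)) with hq
  set r := Real.exp (-(2 * Real.pi * y)) with hrdef
  have hqr : ‖q‖ = r := by rw [hq, norm_exp_two_pi_I_mul]; simp [hrdef]
  have hq1 : ‖q‖ < 1 := norm_exp_lt_one (by simpa using hy)
  have hr1 : r < 1 := hqr ▸ hq1
  have hqi : ((‖q‖ : ℝ) : ℂ) = exp (2 * Real.pi * I * (y * I)) := by
    rw [hqr, hrdef, ofReal_exp]
    congr 1
    push_cast
    linear_combination (-2 * Real.pi * y : ℂ) * I_mul_I
  have hA : ‖genProd ‖q‖‖ ≤ Real.exp (Real.pi / (12 * y)) * 2 := by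
    rw [hqi]
    refine (norm_genProd_imaginary_le hy hy1.le).trans ?_
    gcongr
    refine hM _ (hinv.trans_eq ?_)
    rw [im_neg_one_div]
    simp
  have hB : ‖q‖ / ‖1 - q‖ - ‖q‖ / (1 - ‖q‖) ≤ -(1 / (16 * y)) := by
    rw [hqr]
    have hpi := Real.pi_lt_d2
    have hpi0 := Real.pi_pos
    have hr0 : 0 < r := by linarith
    -- as `1 - r ≤ 2πy` and `r > 7/8`, the quotient is at least `7/(16πy)`, and `π < 7/2`
    have hlow : 1 / (8 * y) ≤ r / (1 - r) := by
      have h1 : 1 - r ≤ 2 * Real.pi * y := by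
        have := Real.add_one_le_exp (-(2 * Real.pi * y))
        rw [← hrdef] at this
        linarith
      rw [div_le_div_iff₀ (by positivity) (by linarith)]
      nlinarith
    -- `|1 - q| ≥ 4 √r |x| ≥ 16 y √r ≥ 16 y r`
    have hup : r / ‖1 - q‖ ≤ 1 / (16 * y) := by
      have h2 := norm_one_sub_exp_ge (y := y) hx2
      rw [← hrdef, ← hq] at h2
      have h3 : (16 * y * r) ^ 2 ≤ ‖1 - q‖ ^ 2 := by
        refine le_trans ?_ h2
        have : (4 * y) ^ 2 ≤ x ^ 2 := by
          rw [← sq_abs x]; gcongr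
        nlinarith [mul_pos hr0 (sq_pos_of_pos hy), mul_nonneg hr0.le (sub_nonneg.mpr this),
          mul_nonneg (mul_pos hr0 (sq_pos_of_pos hy)).le (sub_nonneg.mpr hr1.le)]
      have h4 : 16 * y * r ≤ ‖1 - q‖ := le_of_sq_le_sq h3 (norm_nonneg _)
      have h5 : 0 < ‖1 - q‖ := lt_of_lt_of_le (by positivity) h4
      rw [div_le_div_iff₀ h5 (by positivity)]
      linarith
    have : 1 / (8 * y) = 1 / (16 * y) + 1 / (16 * y) := by field_simp; norm_num
    linarith
  calc ‖genProd q‖ ≤ _ := norm_genProd_le hq1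
    _ ≤ (Real.exp (Real.pi / (12 * y)) * 2) * Real.exp (-(1 / (16 * y))) := by gcongr
    _ = _ := by rw [sub_eq_add_neg, Real.exp_add]; ring

end Minor

/-! ### The major arc -/

section Major
open Complex

/-- The integrand of the Cauchy formula at `z = s³u + s²i = s²(su + i)`, with the modular
transformation applied and the factor `s e^{π/(6s²)}` removed; see `integrand_eq_kernel`. -/
noncomputable def kernel (s u : ℝ) : ℂ :=
  sqrt (s * u + I) / sqrt I * exp (Real.pi * I / 12 * (s ^ 2 * (s * u + I))) *
    genProd (exp (2 * Real.pi * I * (-1 / (s ^ 2 * (s * u + I))))) *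
    exp (-(Real.pi / 12 * u ^ 2 / (1 - I * (s * u))))

lemma add_I_ne_zero (t : ℝ) : (t + I : ℂ) ≠ 0 := fun h ↦ by
  simpa using congrArg im h

lemma one_sub_I_mul_ne_zero (t : ℝ) : (1 - I * t : ℂ) ≠ 0 := fun h ↦ by
  simpa using congrArg re h

/-- The condition `24 n s⁴ = 1` makes `s²i` the saddle point: the exponent `πi/(12z) - 2πinz` has
value `π/(6s²)` there and no linear term in `u`, so that exactly `-(π/12) u²/(1 - isu)` remains. -/
lemma integrand_eq_kernel {s : ℝ} (hs : 0 < s) {n : ℕ} (hn : 24 * (n : ℝ) * s ^ 4 = 1) (u : ℝ) :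
    genProd (exp (2 * Real.pi * I * ((s ^ 3 * u : ℝ) + (s ^ 2 : ℝ) * I))) *
      exp (-(2 * Real.pi * I * n * ((s ^ 3 * u : ℝ) + (s ^ 2 : ℝ) * I))) =
    s * Real.exp (Real.pi / (6 * s ^ 2)) * kernel s u := by
  have hs0 : (s : ℂ) ≠ 0 := by exact_mod_cast hs.ne'
  have hz : ((s ^ 3 * u : ℝ) + (s ^ 2 : ℝ) * I : ℂ) = s ^ 2 * (s * u + I) := by
    push_cast; ring
  have hw : (s * u + I : ℂ) ≠ 0 := by exact_mod_cast add_I_ne_zero (s * u)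
  have hw' : (1 - I * (s * u) : ℂ) ≠ 0 := by exact_mod_cast one_sub_I_mul_ne_zero (s * u)
  have him : 0 < (s ^ 2 * (s * u + I) : ℂ).im := by
    rw [← hz]
    simp only [add_im, ofReal_im, im_ofReal_mul, I_im, mul_one, zero_add]
    positivity
  have hnC : 24 * (n : ℂ) * s ^ 4 = 1 := by exact_mod_cast hn
  have hexp : exp (Real.pi * I / 12 * (s ^ 2 * (s * u + I) : ℂ)⁻¹) *
      exp (-(2 * Real.pi * I * n * (s ^ 2 * (s * u + I)))) =
      Real.exp (Real.pi / (6 * s ^ 2)) * exp (-(Real.pi / 12 * u ^ 2 / (1 - I * (s * u)))) := by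
    rw [ofReal_exp, ← exp_add, ← exp_add]
    congr 1
    have h1 : (s * u + I : ℂ) = I * (1 - I * (s * u)) := by
      linear_combination (s * u : ℂ) * I_mul_I
    have hn' : (n : ℂ) = 1 / (24 * s ^ 4) := by
      field_simp; linear_combination hnC
    rw [h1, hn']
    push_cast
    generalize hW : (1 - I * (s * u) : ℂ) = W at *
    -- eliminating `u` through `W = 1 - isu` leaves a rational identity in `W` and `s`
    have hu : (u : ℂ) ^ 2 * s ^ 2 = -(1 - W) ^ 2 := by
      rw [← hW]; linear_combination (s ^ 2 * u ^ 2 : ℂ) * I_mul_I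
    have hu' : (u : ℂ) ^ 2 = -(1 - W) ^ 2 / s ^ 2 := by
      field_simp; exact hu
    rw [hu']
    field_simp
    ring_nf
    simp only [I_sq]
    ring
  rw [hz, genProd_transform him, sqrt_sq_mul hs hw, kernel]
  linear_combination (s * sqrt (s * u + I) / sqrt I *
    exp (Real.pi * I / 12 * (s ^ 2 * (s * u + I))) *
    genProd (exp (2 * Real.pi * I * (-1 / (s ^ 2 * (s * u + I)))))) * hexp

lemma im_neg_one_div_eq {s : ℝ} (u : ℝ) :
    (-1 / (s ^ 2 * (s * u + I) : ℂ)).im = 1 / (s ^ 2 * (1 + (s * u) ^ 2)) := by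
  by_cases hs : s = 0
  · simp [hs]
  have hz : (s ^ 2 * (s * u + I) : ℂ) = (s ^ 2 * (s * u) : ℝ) + (s ^ 2 : ℝ) * I := by
    push_cast; ring
  rw [im_neg_one_div, hz, normSq_add_mul_I]
  simp only [add_im, ofReal_im, im_ofReal_mul, I_im, mul_one, zero_add]
  field_simp
  ring

lemma continuousAt_genProd {q : ℂ} (hq : ‖q‖ < 1) : ContinuousAt genProd q :=
  ((ModularForm.differentiableOn_tprod_one_sub_pow.differentiableAt
    (Metric.isOpen_ball.mem_nhds (by simpa using hq))).continuousAt).inv₀ (prod_ne_zero hq)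

lemma continuous_kernel {s : ℝ} (hs : 0 < s) : Continuous (kernel s) := by
  have hs0 : (s : ℂ) ≠ 0 := by exact_mod_cast hs.ne'
  have hw (u : ℝ) : (s * u + I : ℂ) ≠ 0 := by exact_mod_cast add_I_ne_zero (s * u)
  have hw' (u : ℝ) : (1 - I * (s * u) : ℂ) ≠ 0 := by
    exact_mod_cast one_sub_I_mul_ne_zero (s * u)
  have c1 : Continuous fun u : ℝ ↦ sqrt (s * u + I) :=
    continuous_iff_continuousAt.mpr fun u ↦
      ContinuousAt.comp (f := fun u : ℝ ↦ (s * u + I : ℂ))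
        (continuousAt_sqrt (Or.inr (by simp))) (by fun_prop)
  have c2 : Continuous fun u : ℝ ↦ exp (2 * Real.pi * I * (-1 / (s ^ 2 * (s * u + I)))) := by
    refine Continuous.cexp (continuous_const.mul (continuous_const.div (by fun_prop) fun u ↦ ?_))
    exact mul_ne_zero (pow_ne_zero 2 hs0) (hw u)
  have c3 : Continuous fun u : ℝ ↦
      genProd (exp (2 * Real.pi * I * (-1 / (s ^ 2 * (s * u + I))))) :=
    continuous_iff_continuousAt.mpr fun u ↦
      ContinuousAt.comp (f := fun u : ℝ ↦ exp (2 * Real.pi * I * (-1 / (s ^ 2 * (s * u + I)))))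
        (continuousAt_genProd (norm_exp_lt_one (by rw [im_neg_one_div_eq]; positivity)))
        c2.continuousAt
  have c4 : Continuous fun u : ℝ ↦ exp (-(Real.pi / 12 * u ^ 2 / (1 - I * (s * u)) : ℂ)) :=
    Continuous.cexp (Continuous.neg (Continuous.div (by fun_prop) (by fun_prop) hw'))
  unfold kernel
  exact (((c1.div_const _).mul (by fun_prop)).mul c3).mul c4

/-- Gaussian domination of the kernel on the rescaled major arc `|su| ≤ 4`: there
`Re (1/(1 - isu)) = 1/(1 + (su)²) ≥ 1/17`, and `204 = 12 · 17`. -/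
lemma norm_kernel_le : ∀ᶠ s : ℝ in 𝓝[>] 0, ∀ u : ℝ, |s * u| ≤ 4 →
    ‖kernel s u‖ ≤ 6 * Real.exp (-(Real.pi / 204) * u ^ 2) := by
  obtain ⟨M, hM⟩ := exists_norm_genProd_le_two
  have hinv : ∀ᶠ s : ℝ in 𝓝[>] 0, max (17 * M) 1 ≤ s⁻¹ :=
    tendsto_inv_nhdsGT_zero.eventually_ge_atTop _
  filter_upwards [hinv, self_mem_nhdsWithin] with s hinv (hs : 0 < s) u hu
  have hpi := Real.pi_pos
  have ht : (s * u) ^ 2 ≤ 16 := by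
    rw [← sq_abs]; nlinarith [abs_nonneg (s * u)]
  have hs1 : s ≤ 1 := by
    have := (le_max_right _ _).trans hinv
    exact (one_le_inv₀ hs).mp this
  have hs17 : M ≤ (-1 / (s ^ 2 * (s * u + I) : ℂ)).im := by
    rw [im_neg_one_div_eq]
    have h1 : M ≤ s⁻¹ / 17 := by
      have := (le_max_left _ _).trans hinv
      linarith
    refine h1.trans ?_
    rw [inv_eq_one_div, div_div, div_le_div_iff₀ (by positivity) (by positivity)]
    nlinarith [mul_nonneg hs.le (sub_nonneg.mpr hs1), sq_nonneg s, mul_nonneg (sq_nonneg s) (sub_nonneg.mpr ht)]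
  have n1 : ‖sqrt (s * u + I)‖ ≤ 3 := by
    rw [norm_sqrt]
    refine (Real.sqrt_le_left (by norm_num)).mpr ?_
    refine (norm_add_le _ _).trans ?_
    rw [norm_I, ← ofReal_mul, norm_real, Real.norm_eq_abs]
    linarith
  have n2 : ‖sqrt I‖ = 1 := by simp [norm_sqrt]
  have n3 : ‖exp (Real.pi * I / 12 * (s ^ 2 * (s * u + I)))‖ ≤ 1 := by
    rw [norm_exp, Real.exp_le_one_iff]
    have : (Real.pi * I / 12 * (s ^ 2 * (s * u + I)) : ℂ) =
        ((-(Real.pi / 12 * s ^ 2) : ℝ) : ℂ) + ((Real.pi / 12 * s ^ 3 * u : ℝ) : ℂ) * I := by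
      push_cast
      linear_combination (Real.pi / 12 * s ^ 2 : ℂ) * I_mul_I
    rw [this]
    simp only [add_re, ofReal_re, re_ofReal_mul, I_re, mul_zero, add_zero]
    have : 0 < Real.pi / 12 * s ^ 2 := by positivity
    linarith
  have n4 : ‖exp (-(Real.pi / 12 * u ^ 2 / (1 - I * (s * u)) : ℂ))‖ ≤
      Real.exp (-(Real.pi / 204) * u ^ 2) := by
    rw [norm_exp, Real.exp_le_exp]
    have e1 : (1 - I * (s * u) : ℂ) = (1 : ℝ) + (-(s * u) : ℝ) * I := by push_cast; ring
    have e2 : (-(Real.pi / 12 * u ^ 2 / (1 - I * (s * u))) : ℂ) =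
        ((-(Real.pi / 12 * u ^ 2) : ℝ) : ℂ) * (1 - I * (s * u))⁻¹ := by
      push_cast; ring
    rw [e2, re_ofReal_mul, inv_re, e1, normSq_add_mul_I]
    simp only [add_re, ofReal_re, re_ofReal_mul, I_re, mul_zero, add_zero, one_pow, neg_sq]
    have h3 : 1 / 17 ≤ 1 / (1 + (s * u) ^ 2) :=
      one_div_le_one_div_of_le (by positivity) (by linarith)
    have h4 : 0 ≤ Real.pi / 12 * u ^ 2 := by positivity
    nlinarith [mul_le_mul_of_nonneg_left h3 h4]
  rw [kernel, norm_mul, norm_mul, norm_mul, norm_div, n2, div_one]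
  calc _ ≤ 3 * 1 * 2 * Real.exp (-(Real.pi / 204) * u ^ 2) := by
        gcongr
        exact hM _ hs17
    _ = _ := by ring

/-- Pointwise limit of the kernel; its `genProd` factor tends to `1` because
`Im (-1/z) = 1/(s²(1 + (su)²)) → ∞`. -/
lemma tendsto_kernel (u : ℝ) :
    Tendsto (fun s ↦ kernel s u) (𝓝[>] 0) (𝓝 (exp (-(Real.pi / 12 * u ^ 2)))) := by
  have hI : sqrt I ≠ 0 := by simp [sqrt]
  have t1 : Tendsto (fun s : ℝ ↦ sqrt (s * u + I) / sqrt I *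
      exp (Real.pi * I / 12 * (s ^ 2 * (s * u + I)))) (𝓝[>] 0) (𝓝 1) := by
    have : ContinuousAt (fun s : ℝ ↦ sqrt (s * u + I) / sqrt I *
        exp (Real.pi * I / 12 * (s ^ 2 * (s * u + I)))) 0 := by
      refine ContinuousAt.mul (ContinuousAt.div_const ?_ _) (by fun_prop)
      exact ContinuousAt.comp (f := fun s : ℝ ↦ (s * u + I : ℂ))
        (continuousAt_sqrt (Or.inr (by simp))) (by fun_prop)
    have h := this.tendsto.mono_left (nhdsWithin_le_nhds (s := Set.Ioi 0))
    simpa [hI] using h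
  have t2 : Tendsto (fun s : ℝ ↦ exp (-(Real.pi / 12 * u ^ 2 / (1 - I * (s * u)) : ℂ)))
      (𝓝[>] 0) (𝓝 (exp (-(Real.pi / 12 * u ^ 2)))) := by
    have : ContinuousAt (fun s : ℝ ↦ exp (-(Real.pi / 12 * u ^ 2 / (1 - I * (s * u)) : ℂ))) 0 := by
      refine ContinuousAt.cexp (ContinuousAt.neg (ContinuousAt.div (by fun_prop) (by fun_prop) ?_))
      simp
    have h := this.tendsto.mono_left (nhdsWithin_le_nhds (s := Set.Ioi 0))
    simpa using h
  have t3 : Tendsto (fun s : ℝ ↦ genProd (exp (2 * Real.pi * I * (-1 / (s ^ 2 * (s * u + I))))))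
      (𝓝[>] 0) (𝓝 1) := by
    refine tendsto_genProd_zero.comp (tendsto_zero_iff_norm_tendsto_zero.mpr ?_)
    simp_rw [norm_exp_two_pi_I_mul, im_neg_one_div_eq]
    refine Real.tendsto_exp_neg_atTop_nhds_zero.comp (Tendsto.const_mul_atTop (by positivity) ?_)
    simp_rw [one_div]
    refine tendsto_inv_nhdsGT_zero.comp (tendsto_nhdsWithin_iff.mpr ⟨?_, ?_⟩)
    · have h : Continuous fun s : ℝ ↦ s ^ 2 * (1 + (s * u) ^ 2) := by fun_prop
      have := (h.tendsto 0).mono_left (nhdsWithin_le_nhds (s := Set.Ioi 0))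
      simpa using this
    · filter_upwards [self_mem_nhdsWithin] with s (hs : 0 < s)
      exact Set.mem_Ioi.mpr (by positivity)
  have := (t1.mul t3).mul t2
  simpa [kernel] using this

lemma integral_gauss : ∫ u : ℝ, exp (-(Real.pi / 12 * u ^ 2) : ℂ) = (√12 : ℝ) := by
  have h := integral_gaussian (Real.pi / 12)
  have e : Real.pi / (Real.pi / 12) = 12 := by field_simp
  rw [e] at h
  rw [← h, ← integral_complex_ofReal]
  congr 1
  funext u
  push_cast
  congr 1
  ring

/-- Dominated convergence; the value of the limiting Gaussian integral is `√12`. -/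
lemma tendsto_integral_kernel :
    Tendsto (fun s : ℝ ↦ ∫ u in (-(4 / s))..(4 / s), kernel s u) (𝓝[>] 0) (𝓝 (√12 : ℝ)) := by
  rw [← integral_gauss]
  have hset : ∀ᶠ s : ℝ in 𝓝[>] 0, (∫ u, (Set.Ioc (-(4 / s)) (4 / s)).indicator (kernel s) u) =
      ∫ u in (-(4 / s))..(4 / s), kernel s u := by
    filter_upwards [self_mem_nhdsWithin] with s (hs : 0 < s)
    rw [intervalIntegral.integral_of_le (by have : 0 < 4 / s := by positivity
                                            linarith),
      MeasureTheory.integral_indicator measurableSet_Ioc]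
  refine Tendsto.congr' hset ?_
  refine MeasureTheory.tendsto_integral_filter_of_dominated_convergence
    (fun u ↦ 6 * Real.exp (-(Real.pi / 204) * u ^ 2)) ?_ ?_ ?_ ?_
  · filter_upwards [self_mem_nhdsWithin] with s (hs : 0 < s)
    exact (continuous_kernel hs).aestronglyMeasurable.indicator measurableSet_Ioc
  · filter_upwards [norm_kernel_le, self_mem_nhdsWithin] with s hk (hs : 0 < s)
    refine Eventually.of_forall fun u ↦ ?_
    by_cases hu : u ∈ Set.Ioc (-(4 / s)) (4 / s)
    · rw [Set.indicator_of_mem hu]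
      refine hk u ?_
      rw [abs_mul, abs_of_pos hs, ← le_div_iff₀' hs]
      exact abs_le.mpr ⟨hu.1.le, hu.2⟩
    · rw [Set.indicator_of_notMem hu, norm_zero]
      positivity
  · exact (integrable_exp_neg_mul_sq (by positivity)).const_mul 6
  · refine Eventually.of_forall fun u ↦ (tendsto_kernel u).congr' ?_
    have hlim : Tendsto (fun s : ℝ ↦ 4 / s) (𝓝[>] 0) atTop := by
      simp_rw [div_eq_mul_inv]
      exact tendsto_inv_nhdsGT_zero.const_mul_atTop (by norm_num)
    filter_upwards [hlim.eventually_gt_atTop |u|] with s hs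
    rw [Set.indicator_of_mem]
    exact ⟨(abs_lt.mp hs).1, (abs_lt.mp hs).2.le⟩

end Major

/-! ### The asymptotic formula -/

section Assembly
open Complex

/-- `p(n)` differs from the major arc contribution by the integral over the minor arc. The
factor `s⁴` in the main term is `s³` from `x = s³u` times `s` from `integrand_eq_kernel`. -/
lemma norm_sub_main_le : ∀ᶠ s : ℝ in 𝓝[>] 0, ∀ n : ℕ, 24 * (n : ℝ) * s ^ 4 = 1 →
    ‖(Fintype.card (Nat.Partition n) : ℂ) -
      s ^ 4 * Real.exp (Real.pi / (6 * s ^ 2)) * ∫ u in (-(4 / s))..(4 / s), kernel s u‖ ≤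
    4 * (Real.exp (Real.pi / (6 * s ^ 2)) * Real.exp (-(1 / (16 * s ^ 2)))) := by
  have hsq : Tendsto (fun s : ℝ ↦ s ^ 2) (𝓝[>] 0) (𝓝[>] 0) := by
    refine tendsto_nhdsWithin_iff.mpr ⟨?_, ?_⟩
    · have h : Continuous fun s : ℝ ↦ s ^ 2 := by fun_prop
      simpa using (h.tendsto 0).mono_left (nhdsWithin_le_nhds (s := Set.Ioi 0))
    · filter_upwards [self_mem_nhdsWithin] with s (hs : 0 < s)
      exact Set.mem_Ioi.mpr (by positivity)
  have hsmall : ∀ᶠ y : ℝ in 𝓝[>] 0, y < 1 / 8 :=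
    (tendsto_id.mono_left nhdsWithin_le_nhds).eventually_lt_const (by norm_num)
  filter_upwards [hsq.eventually minor_bound, hsq.eventually hsmall, self_mem_nhdsWithin] with
    s hb hs8 (hs : 0 < s) n hn
  set f : ℝ → ℂ := fun x ↦ genProd (exp (2 * Real.pi * I * (x + (s ^ 2 : ℝ) * I))) *
      exp (-(2 * Real.pi * I * n * (x + (s ^ 2 : ℝ) * I))) with hf
  have hs2 : 0 < s ^ 2 := by positivity
  have hcont : Continuous f := by
    refine Continuous.mul ?_ (by fun_prop)
    refine continuous_iff_continuousAt.mpr fun x ↦ ?_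
    exact ContinuousAt.comp (f := fun x : ℝ ↦ exp (2 * Real.pi * I * (x + (s ^ 2 : ℝ) * I)))
      (continuousAt_genProd (norm_exp_lt_one (by
        simp only [add_im, ofReal_im, im_ofReal_mul, I_im, mul_one, zero_add]
        exact hs2))) (by fun_prop)
  have hfi (a b : ℝ) : IntervalIntegrable f MeasureTheory.volume a b := hcont.intervalIntegrable a b
  have hmain : ∫ x in (-(4 * s ^ 2))..(4 * s ^ 2), f x =
      s ^ 4 * Real.exp (Real.pi / (6 * s ^ 2)) * ∫ u in (-(4 / s))..(4 / s), kernel s u := by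
    have h := intervalIntegral.smul_integral_comp_mul_left (a := -(4 / s)) (b := 4 / s) f (s ^ 3)
    have e1 : s ^ 3 * (4 / s) = 4 * s ^ 2 := by field_simp
    have e2 : s ^ 3 * -(4 / s) = -(4 * s ^ 2) := by rw [mul_neg, e1]
    rw [e1, e2] at h
    rw [← h]
    simp_rw [hf, integrand_eq_kernel hs hn]
    rw [intervalIntegral.integral_const_mul, real_smul]
    push_cast
    ring
  have hbound : ∀ x : ℝ, 4 * s ^ 2 ≤ |x| → |x| ≤ 1 / 2 → ‖f x‖ ≤
      2 * (Real.exp (Real.pi / (6 * s ^ 2)) * Real.exp (-(1 / (16 * s ^ 2)))) := by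
    intro x h1 h2
    have hE : ‖exp (-(2 * Real.pi * I * n * (x + (s ^ 2 : ℝ) * I)))‖ =
        Real.exp (Real.pi / (12 * s ^ 2)) := by
      rw [norm_exp]
      congr 1
      have : (n : ℝ) = 1 / (24 * s ^ 4) := by field_simp; linarith
      simp only [neg_re, mul_re, re_ofNat, ofReal_re, im_ofNat, ofReal_im, I_re, I_im, natCast_re,
        natCast_im, add_re, add_im, mul_im]
      rw [this]
      field_simp
      ring
    rw [hf, norm_mul, hE]
    calc _ ≤ 2 * Real.exp (Real.pi / (12 * s ^ 2) - 1 / (16 * s ^ 2)) *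
          Real.exp (Real.pi / (12 * s ^ 2)) := by
            gcongr
            exact hb x h1 h2
      _ = _ := by
        rw [mul_assoc, ← Real.exp_add, ← Real.exp_add]
        congr 2
        field_simp
        ring
  have hsplit : (Fintype.card (Nat.Partition n) : ℂ) =
      (∫ x in (-1 / 2 : ℝ)..(-(4 * s ^ 2)), f x) + (∫ x in (-(4 * s ^ 2))..(4 * s ^ 2), f x) +
        ∫ x in (4 * s ^ 2)..(1 / 2), f x := by
    rw [intervalIntegral.integral_add_adjacent_intervals (hfi _ _) (hfi _ _),
      intervalIntegral.integral_add_adjacent_intervals (hfi _ _) (hfi _ _)]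
    exact card_eq_integral n hs2
  set C := Real.exp (Real.pi / (6 * s ^ 2)) * Real.exp (-(1 / (16 * s ^ 2))) with hC
  have hCpos : 0 < C := by positivity
  have hL : ‖∫ x in (-1 / 2 : ℝ)..(-(4 * s ^ 2)), f x‖ ≤ 2 * C := by
    refine (intervalIntegral.norm_integral_le_of_norm_le_const (C := 2 * C) fun x hx ↦ ?_).trans ?_
    · rw [Set.uIoc_of_le (by linarith)] at hx
      have : |x| = -x := abs_of_nonpos (by linarith [hx.2])
      exact hbound x (by rw [this]; linarith [hx.2]) (by rw [this]; linarith [hx.1])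
    · rw [abs_of_nonneg (by linarith)]
      nlinarith
  have hR : ‖∫ x in (4 * s ^ 2)..(1 / 2), f x‖ ≤ 2 * C := by
    refine (intervalIntegral.norm_integral_le_of_norm_le_const (C := 2 * C) fun x hx ↦ ?_).trans ?_
    · rw [Set.uIoc_of_le (by linarith)] at hx
      have : |x| = x := abs_of_nonneg (by linarith [hx.1])
      exact hbound x (by rw [this]; linarith [hx.1]) (by rw [this]; linarith [hx.2])
    · rw [abs_of_nonneg (by linarith)]
      nlinarith
  rw [hsplit, ← hmain]
  calc _ = ‖(∫ x in (-1 / 2 : ℝ)..(-(4 * s ^ 2)), f x) + ∫ x in (4 * s ^ 2)..(1 / 2), f x‖ := by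
        congr 1; ring
    _ ≤ 2 * C + 2 * C := (norm_add_le _ _).trans (add_le_add hL hR)
    _ = _ := by ring

lemma tendsto_error :
    Tendsto (fun s : ℝ ↦ 4 * (s ^ 4)⁻¹ * Real.exp (-(1 / (16 * s ^ 2)))) (𝓝[>] 0) (𝓝 0) := by
  have hlim : Tendsto (fun s : ℝ ↦ 16⁻¹ * (s⁻¹) ^ 2) (𝓝[>] 0) atTop :=
    ((tendsto_pow_atTop two_ne_zero).comp tendsto_inv_nhdsGT_zero).const_mul_atTop (by norm_num)
  have h := ((Real.tendsto_pow_mul_exp_neg_atTop_nhds_zero 2).comp hlim).const_mul 1024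
  rw [mul_zero] at h
  refine h.congr' ?_
  filter_upwards [self_mem_nhdsWithin] with s (hs : 0 < s)
  simp only [Function.comp_apply]
  have : (16 : ℝ)⁻¹ * (s⁻¹) ^ 2 = 1 / (16 * s ^ 2) := by field_simp
  rw [this]
  field_simp
  norm_num

end Assembly

end HardyRamanujan

open HardyRamanujan

/-- The Hardy–Ramanujan asymptotic for the partition function:
`p(n) ~ (1/(4n√3))·e^{π√(2n/3)}`, i.e.
`p(n)·4n√3·e^{−π√(2n/3)} → 1`. -/
theorem hardy_ramanujan :
    Tendsto (fun n : ℕ =>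
        (Fintype.card (Nat.Partition n) : ℝ) * (4 * n * Real.sqrt 3) *
          Real.exp (-(Real.pi * Real.sqrt (2 * n / 3))))
      atTop (𝓝 1) := by
  -- `σ n = (24n)^{-1/4}` solves `24 n s⁴ = 1`
  set σ : ℕ → ℝ := fun n ↦ √√(1 / (24 * n)) with hσ
  have hσlim : Tendsto σ atTop (𝓝[>] 0) := by
    refine tendsto_nhdsWithin_iff.mpr ⟨?_, ?_⟩
    · have h : Tendsto (fun n : ℕ ↦ 1 / (24 * (n : ℝ))) atTop (𝓝 0) := by
        simp_rw [one_div]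
        exact tendsto_inv_atTop_zero.comp
          (tendsto_natCast_atTop_atTop.const_mul_atTop (by norm_num))
      have h' := h.sqrt.sqrt
      simp only [Real.sqrt_zero] at h'
      exact h'
    · filter_upwards [eventually_gt_atTop 0] with n hn
      exact Set.mem_Ioi.mpr (by positivity)
  have hJ := tendsto_integral_kernel.comp hσlim
  have hE := tendsto_error.comp hσlim
  -- after division by `s⁴ e^{π/(6s²)}`, the coefficient and the major arc integral differ by `o(1)`
  have hdiff : Tendsto (fun n : ℕ ↦ (((Fintype.card (Nat.Partition n) : ℝ) * ((σ n) ^ 4)⁻¹ *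
      Real.exp (-(Real.pi / (6 * σ n ^ 2))) : ℝ) : ℂ) -
      ∫ u in (-(4 / σ n))..(4 / σ n), kernel (σ n) u) atTop (𝓝 0) := by
    refine squeeze_zero_norm' ?_ hE
    filter_upwards [hσlim.eventually norm_sub_main_le, eventually_gt_atTop 0] with n hmain hn
    have hs : 0 < σ n := by positivity
    have h4 : 24 * (n : ℝ) * σ n ^ 4 = 1 := by
      rw [show σ n ^ 4 = ((σ n) ^ 2) ^ 2 by ring, hσ]
      rw [Real.sq_sqrt (by positivity), Real.sq_sqrt (by positivity)]
      field_simp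
    have h := hmain n h4
    simp only [Function.comp_apply]
    generalize σ n = s at *
    have hsC : (s : ℂ) ≠ 0 := by exact_mod_cast hs.ne'
    have hexp : ((Real.exp (Real.pi / (6 * s ^ 2)) : ℝ) : ℂ) *
        (Real.exp (-(Real.pi / (6 * s ^ 2))) : ℝ) = 1 := by
      rw [← Complex.ofReal_mul, ← Real.exp_add, add_neg_cancel, Real.exp_zero, Complex.ofReal_one]
    have e : (((Fintype.card (Nat.Partition n) : ℝ) * (s ^ 4)⁻¹ *
        Real.exp (-(Real.pi / (6 * s ^ 2))) : ℝ) : ℂ) - ∫ u in (-(4 / s))..(4 / s), kernel s u =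
        (((s ^ 4)⁻¹ * Real.exp (-(Real.pi / (6 * s ^ 2))) : ℝ) : ℂ) *
        ((Fintype.card (Nat.Partition n) : ℂ) - s ^ 4 * (Real.exp (Real.pi / (6 * s ^ 2)) : ℝ) *
          ∫ u in (-(4 / s))..(4 / s), kernel s u) := by
      generalize (∫ u in (-(4 / s))..(4 / s), kernel s u) = J
      rw [Complex.ofReal_mul, Complex.ofReal_mul, Complex.ofReal_mul]
      generalize ((Real.exp (Real.pi / (6 * s ^ 2)) : ℝ) : ℂ) = A at *
      generalize ((Real.exp (-(Real.pi / (6 * s ^ 2))) : ℝ) : ℂ) = B at *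
      push_cast
      field_simp
      linear_combination (s ^ 4 * J : ℂ) * hexp
    rw [e, norm_mul, Complex.norm_real, Real.norm_of_nonneg (by positivity)]
    calc _ ≤ ((s ^ 4)⁻¹ * Real.exp (-(Real.pi / (6 * s ^ 2)))) *
          (4 * (Real.exp (Real.pi / (6 * s ^ 2)) * Real.exp (-(1 / (16 * s ^ 2))))) := by gcongr
      _ = 4 * (s ^ 4)⁻¹ * Real.exp (-(1 / (16 * s ^ 2))) *
          (Real.exp (-(Real.pi / (6 * s ^ 2))) * Real.exp (Real.pi / (6 * s ^ 2))) := by ring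
      _ = _ := by rw [← Real.exp_add, neg_add_cancel, Real.exp_zero, mul_one]
  have hC := (hdiff.add hJ)
  simp only [Function.comp_apply, sub_add_cancel, zero_add] at hC
  have hR := (Complex.continuous_re.tendsto _).comp hC
  simp only [Function.comp_def, Complex.ofReal_re] at hR
  -- `p(n) · 4n√3 · e^{-π√(2n/3)}` is `√3/6` times the normalisation `p(n) · 24n · e^{-π/(6s²)}`
  have hfin := hR.const_mul (√3 / 6)
  have hval : √3 / 6 * √12 = 1 := by
    rw [div_mul_eq_mul_div, ← Real.sqrt_mul (by norm_num), show (3 : ℝ) * 12 = 6 ^ 2 by norm_num,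
      Real.sqrt_sq (by norm_num)]
    norm_num
  rw [hval] at hfin
  refine hfin.congr' ?_
  filter_upwards [eventually_gt_atTop 0] with n hn
  have hn' : (0 : ℝ) < n := by exact_mod_cast hn
  have h2 : σ n ^ 2 = √(1 / (24 * n)) := by rw [hσ]; exact Real.sq_sqrt (by positivity)
  have h4 : σ n ^ 4 = 1 / (24 * n) := by
    rw [show σ n ^ 4 = ((σ n) ^ 2) ^ 2 by ring, h2, Real.sq_sqrt (by positivity)]
  have h6 : Real.pi / (6 * σ n ^ 2) = Real.pi * √(2 * n / 3) := by
    have hpos : 0 < σ n ^ 2 := by rw [h2]; positivity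
    have : √(2 * n / 3) = 1 / (6 * σ n ^ 2) := by
      rw [Real.sqrt_eq_iff_eq_sq (by positivity) (by positivity), div_pow, mul_pow, ← pow_mul]
      rw [show 2 * 2 = 4 from rfl, h4]
      field_simp
      norm_num
    rw [this]
    ring
  rw [h4, h6]
  field_simp
  norm_num
end

section
/- The partition function p(n) is Benford: for every integer base k ≥ 2 and every positive integer d, the natural density of the set of n for which the base-k expansion of p(n) begins with the digit string of d equals log_k(d+1) − log_k(d). -/
/-!
The proof is elementary: neither the Hardy-Ramanujan asymptotic formula nor Fourier analysis is
needed, because only the growth of `log p(n)` on the scale `√n` matters.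

* Counting the parts of all partitions of `n` gives `n p(n) = ∑ σ(j) p(n - j)`
  (`partition_recurrence`), and `∑_{j ≤ N} σ(j) ~ (b / 2) N²` for a constant `b > 0`
  (`sigma_average`; its value `π² / 6` plays no role).
* Let `D(n) = ∑_{m ≤ n} p(m)` and `Q(n) = ∑_{m < n} D(m) = ∑ j p(n - j)`. As `p` is monotone, Abel
  summation allows `σ(j)` to be replaced by its average `b j` in the recurrence, so that
  `n p(n) ~ b Q(n)` (`tendsto_mul_div_doubleSum`). Since `p` is the second difference of `Q`, this
  is a discrete form of the equation `Q'' ~ (b / n) Q`.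
* Comparing the increments of `(n + 1) D(n + 1) D(n)` with those of `b Q(n + 1)²` (the discrete
  version of integrating `Q' Q'' ~ (b / n) Q Q'`), the Stolz-Cesàro theorem yields
  `√n D(n) / Q(n) → √b` (`sqrt_mul_partialSum_div_doubleSum`). Hence `log p(n) = F(n) + o(1)`, where
  `F(n) = log Q(n) - log n + log b` has increments
  `F(n + 1) - F(n) ~ 2 √b (√(n + 1) - √n)`.
* For a monotone sequence with this property, let `A m` and `B m` be the first indices at which `p`
  reaches `d k^m` and `(d + 1) k^m`. The indices with leading digits `d` fill the blocks
  `[A m, B m)`. Moreover `√(B m) - √(A m)` and `√(A (m + 1)) - √(A m)` converge to limits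
  proportional to `log ((d + 1) / d)` and `log k`, and the quotient of these limits is the density
  (`hasNatDensity_of_blocks`, `isBenford_of_regular`).
-/

open Filter Topology

/-- `|x|` begins with the base-`k` digit string of `d`:
there is an integer `m ≥ 0` with `d·k^m ≤ |x| < (d+1)·k^m`. -/
def BeginsWith (k d : ℕ) (x : ℝ) : Prop :=
  ∃ m : ℕ, (d : ℝ) * (k : ℝ) ^ m ≤ |x| ∧ |x| < ((d : ℝ) + 1) * (k : ℝ) ^ m

open scoped Classical in
/-- The set `S ⊆ ℕ` has natural density `r`. -/
def HasNatDensity (S : Set ℕ) (r : ℝ) : Prop :=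
  Tendsto (fun N : ℕ => (((Finset.range N).filter (fun n => n ∈ S)).card : ℝ) / N)
    atTop (𝓝 r)

/-- The sequence `a` is Benford. -/
def IsBenford (a : ℕ → ℝ) : Prop :=
  ∀ k : ℕ, 2 ≤ k → ∀ d : ℕ, 0 < d →
    HasNatDensity {n | BeginsWith k d (a n)} (Real.logb k (d + 1) - Real.logb k d)

open scoped Classical in
/-- The real sequence `x` is uniformly distributed modulo 1. -/
def UnifDistMod1 (x : ℕ → ℝ) : Prop :=
  ∀ a b : ℝ, 0 ≤ a → a < b → b ≤ 1 →
    Tendsto (fun N : ℕ =>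
        (((Finset.Icc 1 N).filter (fun n => Int.fract (x n) ∈ Set.Ico a b)).card : ℝ) / N)
      atTop (𝓝 (b - a))

/-! ### The recurrence for the partition function -/

theorem card_partition_with_part {n a : ℕ} (ha1 : 1 ≤ a) (ha : a ≤ n) :
    ((Finset.univ : Finset n.Partition).filter (fun l => a ∈ l.parts)).card
      = Fintype.card (Nat.Partition (n - a)) := by
  rw [← Fintype.card_congr (Nat.Partition.partitionWithPartEquiv ha1 ha), Fintype.card_subtype]

theorem card_partition_mono : Monotone (fun n => Fintype.card (Nat.Partition n)) := by
  refine monotone_nat_of_le_succ fun n => ?_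
  have h := card_partition_with_part (n := n + 1) (a := 1) le_rfl (by omega)
  simp only [Nat.add_sub_cancel] at h
  rw [← h]
  exact Finset.card_le_univ _

/-- Removing one part `a` from every partition of `n` that contains it: each such partition
contributes one occurrence of `a` plus the occurrences left over. -/
theorem sum_count_step {n a : ℕ} (ha1 : 1 ≤ a) (ha : a ≤ n) :
    ∑ l : n.Partition, l.parts.count a
      = Fintype.card (Nat.Partition (n - a)) + ∑ l : (n - a).Partition, l.parts.count a := by
  have h1 : ∑ l : n.Partition, l.parts.count a
      = ∑ l ∈ (Finset.univ : Finset n.Partition).filter (fun l => a ∈ l.parts),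
          l.parts.count a := by
    symm
    apply Finset.sum_subset (Finset.filter_subset _ _)
    intro l _ hl
    simpa using hl
  rw [h1, Finset.sum_subtype (p := fun l : n.Partition => a ∈ l.parts) _ (by simp),
    ← Equiv.sum_comp (Nat.Partition.partitionWithPartEquiv ha1 ha).symm]
  simp [Finset.sum_add_distrib, add_comm]

/-- The number of occurrences of `a` as a part, over all partitions of `n`, is
`p(n - a) + p(n - 2a) + ⋯`. -/
theorem sum_count_eq (a : ℕ) (ha1 : 1 ≤ a) (n : ℕ) :
    ∑ l : n.Partition, l.parts.count a
      = ∑ j ∈ (Finset.Ioc 0 n).filter (fun j => a ∣ j), Fintype.card (Nat.Partition (n - j)) := by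
  induction n using Nat.strong_induction_on with
  | _ n ih =>
    rcases lt_or_ge n a with h | h
    · rw [Finset.sum_eq_zero, Finset.sum_eq_zero]
      · intro j hj
        simp only [Finset.mem_filter, Finset.mem_Ioc] at hj
        exact absurd (Nat.le_of_dvd hj.1.1 hj.2) (by omega)
      · intro l _
        rw [Multiset.count_eq_zero]
        intro hl
        exact absurd (l.le_of_mem_parts hl) (by omega)
    · rw [sum_count_step ha1 h, ih (n - a) (by omega)]
      have : (Finset.Ioc 0 n).filter (fun j => a ∣ j)
          = insert a (((Finset.Ioc 0 (n - a)).filter (fun j => a ∣ j)).image (· + a)) := by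
        ext j
        simp only [Finset.mem_filter, Finset.mem_Ioc, Finset.mem_insert, Finset.mem_image]
        constructor
        · rintro ⟨⟨h0, h1⟩, h2⟩
          rcases eq_or_ne j a with rfl | hne
          · exact Or.inl rfl
          · have := Nat.le_of_dvd h0 h2
            exact Or.inr ⟨j - a, ⟨⟨by omega, by omega⟩, Nat.dvd_sub h2 dvd_rfl⟩, by omega⟩
        · rintro (rfl | ⟨i, ⟨⟨h0, h1⟩, h2⟩, rfl⟩)
          · exact ⟨⟨by omega, h⟩, dvd_rfl⟩
          · exact ⟨⟨by omega, by omega⟩, Dvd.dvd.add h2 dvd_rfl⟩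
      rw [this, Finset.sum_insert, Finset.sum_image]
      · congr 1
        refine Finset.sum_congr rfl fun j _ => ?_
        rw [Nat.sub_sub, add_comm]
      · intro x _ y _ hxy
        exact Nat.add_right_cancel hxy
      · simp

/-- Both sides compute the sum of all parts of all partitions of `n`. -/
theorem partition_recurrence (n : ℕ) :
    n * Fintype.card (Nat.Partition n)
      = ∑ j ∈ Finset.Ioc 0 n,
          ArithmeticFunction.sigma 1 j * Fintype.card (Nat.Partition (n - j)) := by
  have h1 : ∀ l : n.Partition, n = ∑ v ∈ Finset.Ioc 0 n, v * l.parts.count v := by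
    intro l
    conv_lhs => rw [← l.parts_sum, Finset.sum_multiset_count]
    refine (Finset.sum_congr rfl fun v _ => by rw [smul_eq_mul, mul_comm]).trans
      (Finset.sum_subset ?_ ?_)
    · intro v hv
      rw [Multiset.mem_toFinset] at hv
      exact Finset.mem_Ioc.2 ⟨l.parts_pos hv, l.le_of_mem_parts hv⟩
    · intro v _ hv
      rw [Multiset.mem_toFinset] at hv
      simp [hv]
  calc n * Fintype.card (Nat.Partition n)
      = ∑ l : n.Partition, n := by simp [mul_comm]
    _ = ∑ l : n.Partition, ∑ v ∈ Finset.Ioc 0 n, v * l.parts.count v :=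
        Finset.sum_congr rfl fun l _ => h1 l
    _ = ∑ v ∈ Finset.Ioc 0 n, v * ∑ l : n.Partition, l.parts.count v := by
        rw [Finset.sum_comm]; simp_rw [Finset.mul_sum]
    _ = ∑ v ∈ Finset.Ioc 0 n, ∑ j ∈ Finset.Ioc 0 n,
          if v ∣ j then v * Fintype.card (Nat.Partition (n - j)) else 0 := by
        refine Finset.sum_congr rfl fun v hv => ?_
        rw [sum_count_eq v (Finset.mem_Ioc.1 hv).1, Finset.mul_sum, Finset.sum_filter]
    _ = ∑ j ∈ Finset.Ioc 0 n,
          ArithmeticFunction.sigma 1 j * Fintype.card (Nat.Partition (n - j)) := by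
        rw [Finset.sum_comm]
        refine Finset.sum_congr rfl fun j hj => ?_
        rw [ArithmeticFunction.sigma_one_apply, Finset.sum_mul, ← Finset.sum_filter]
        refine Finset.sum_congr ?_ fun _ _ => rfl
        ext v
        simp only [Finset.mem_filter, Finset.mem_Ioc, Nat.mem_divisors] at hj ⊢
        constructor
        · rintro ⟨_, h⟩
          exact ⟨h, by omega⟩
        · rintro ⟨h, _⟩
          have := Nat.le_of_dvd hj.1 h
          exact ⟨⟨Nat.pos_of_dvd_of_pos h hj.1, by omega⟩, h⟩

theorem sum_Ioc_zero_eq_sum_range (f : ℕ → ℝ) (n : ℕ) :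
    ∑ j ∈ Finset.Ioc 0 n, f j = ∑ i ∈ Finset.range n, f (i + 1) := by
  induction n with
  | zero => simp
  | succ n ih =>
    rw [← Finset.insert_Ioc_right_eq_Ioc_add_one (Nat.zero_le n), Finset.sum_insert (by simp), ih,
      Finset.sum_range_succ, add_comm]

/-! ### The average order of the sum of divisors -/

theorem sum_sigma_eq (N : ℕ) :
    ∑ n ∈ Finset.Ioc 0 N, (ArithmeticFunction.sigma 1 n : ℝ)
      = ∑ d ∈ Finset.Ioc 0 N, ((N / d : ℕ) : ℝ) * (((N / d : ℕ) : ℝ) + 1) / 2 := by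
  have hid : ∀ m : ℕ, ∑ i ∈ Finset.Ioc 0 m, (i : ℝ) = (m : ℝ) * (m + 1) / 2 := by
    intro m
    induction m with
    | zero => simp
    | succ m ih =>
      rw [← Finset.insert_Ioc_right_eq_Ioc_add_one (Nat.zero_le m), Finset.sum_insert (by simp), ih]
      push_cast; ring
  have h := ArithmeticFunction.sum_Ioc_mul_eq_sum_sum (ArithmeticFunction.zeta)
    (ArithmeticFunction.pow 1) N
  rw [ArithmeticFunction.zeta_mul_pow_eq_sigma] at h
  have h' := congrArg (Nat.cast (R := ℝ)) h
  push_cast at h'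
  rw [h']
  refine Finset.sum_congr rfl fun d hd => ?_
  rw [ArithmeticFunction.zeta_apply_ne (by have := Finset.mem_Ioc.1 hd; omega), ← hid]
  simp [ArithmeticFunction.pow_apply]

/-- The limit is `b / 2` with `b = ∑ 1 / d²`, by dominated convergence in the divisor sum of
`sum_sigma_eq`. -/
theorem sigma_average : ∃ b : ℝ, 0 < b ∧
    Tendsto (fun N : ℕ => (∑ n ∈ Finset.Ioc 0 N, (ArithmeticFunction.sigma 1 n : ℝ)) / (N : ℝ) ^ 2)
      atTop (𝓝 (b / 2)) := by
  have hs : Summable (fun d : ℕ => 1 / (d : ℝ) ^ 2) := Real.summable_one_div_nat_pow.2 one_lt_two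
  refine ⟨∑' d : ℕ, 1 / (d : ℝ) ^ 2, ?_, ?_⟩
  · exact hs.tsum_pos (fun d => by positivity) 1 (by norm_num)
  have key : Tendsto (fun N : ℕ => ∑' d : ℕ,
      (if d ∈ Finset.Ioc 0 N then ((N / d : ℕ) : ℝ) * (((N / d : ℕ) : ℝ) + 1) / 2 / (N : ℝ) ^ 2
        else 0)) atTop (𝓝 (∑' d : ℕ, 1 / (d : ℝ) ^ 2 / 2)) := by
    refine tendsto_tsum_of_dominated_convergence (bound := fun d : ℕ => 1 / (d : ℝ) ^ 2) hs ?_ ?_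
    · intro d
      rcases Nat.eq_zero_or_pos d with rfl | hd
      · simp
      have hd' : (0 : ℝ) < d := by exact_mod_cast hd
      have h1 : Tendsto (fun N : ℕ => ((N / d : ℕ) : ℝ) / N) atTop (𝓝 (1 / d)) := by
        have := (tendsto_nat_floor_mul_div_atTop (R := ℝ) (a := 1 / d) (by positivity)).comp
          tendsto_natCast_atTop_atTop
        refine this.congr fun N => ?_
        simp only [Function.comp]
        rw [one_div_mul_eq_div, Nat.floor_div_eq_div]
      have h2 : Tendsto (fun N : ℕ => (1 : ℝ) / N) atTop (𝓝 0) :=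
        tendsto_one_div_atTop_nhds_zero_nat
      have h3 := (h1.mul (h1.add h2)).div_const 2
      have e : (1 / (d : ℝ)) * (1 / d + 0) / 2 = 1 / (d : ℝ) ^ 2 / 2 := by
        field_simp; simp
      rw [e] at h3
      refine h3.congr' ?_
      filter_upwards [eventually_ge_atTop d] with N hN
      have hN' : (0 : ℝ) < N := by exact_mod_cast lt_of_lt_of_le hd hN
      rw [if_pos (Finset.mem_Ioc.2 ⟨hd, hN⟩)]
      field_simp
    · refine Eventually.of_forall fun N d => ?_
      split_ifs with h
      · have h' := Finset.mem_Ioc.1 h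
        have hd' : (0 : ℝ) < d := by exact_mod_cast h'.1
        have hN' : (0 : ℝ) < N := by exact_mod_cast lt_of_lt_of_le h'.1 h'.2
        have h1 : ((N / d : ℕ) : ℝ) ≤ N / d := Nat.cast_div_le
        have h2 : (1 : ℝ) ≤ ((N / d : ℕ) : ℝ) := by
          exact_mod_cast Nat.div_pos h'.2 h'.1
        rw [Real.norm_of_nonneg (by positivity)]
        calc ((N / d : ℕ) : ℝ) * (((N / d : ℕ) : ℝ) + 1) / 2 / (N : ℝ) ^ 2
            ≤ (N / d : ℝ) * (N / d : ℝ) / (N : ℝ) ^ 2 := by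
              gcongr
              nlinarith
          _ = 1 / (d : ℝ) ^ 2 := by field_simp
      · simp
  rw [tsum_div_const] at key
  refine key.congr fun N => ?_
  rw [sum_sigma_eq, Finset.sum_div, tsum_eq_sum (s := Finset.Ioc 0 N)]
  · exact Finset.sum_congr rfl fun d hd => by rw [if_pos hd]
  · intro d hd
    rw [if_neg hd]

/-! ### Averaging the recurrence -/

/-- `D(n) = p(0) + ⋯ + p(n)`; the upper end is included. -/
noncomputable def partialSum (p : ℕ → ℝ) (n : ℕ) : ℝ := ∑ m ∈ Finset.range (n + 1), p m

/-- `Q(n) = D(0) + ⋯ + D(n - 1)`; the upper end is excluded, so that `Q(n + 1) - Q(n) = D(n)` and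
`Q(n) = ∑_{j ≤ n} j p(n - j)`. -/
noncomputable def doubleSum (p : ℕ → ℝ) (n : ℕ) : ℝ := ∑ m ∈ Finset.range n, partialSum p m

theorem partialSum_succ (p : ℕ → ℝ) (n : ℕ) :
    partialSum p (n + 1) = partialSum p n + p (n + 1) := Finset.sum_range_succ _ _

theorem doubleSum_succ (p : ℕ → ℝ) (n : ℕ) :
    doubleSum p (n + 1) = doubleSum p n + partialSum p n := Finset.sum_range_succ _ _

theorem doubleSum_eq (p : ℕ → ℝ) (n : ℕ) :
    doubleSum p n = ∑ i ∈ Finset.range n, ((i : ℝ) + 1) * p (n - 1 - i) := by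
  have h : doubleSum p n = ∑ m ∈ Finset.range n, ((n : ℝ) - m) * p m := by
    induction n with
    | zero => simp [doubleSum]
    | succ n ih =>
      rw [doubleSum_succ, ih, Finset.sum_range_succ, partialSum, Finset.sum_range_succ,
        ← add_assoc, ← Finset.sum_add_distrib]
      congr 1
      · exact Finset.sum_congr rfl fun m _ => by push_cast; ring
      · push_cast; ring
  rw [h, ← Finset.sum_range_reflect]
  refine Finset.sum_congr rfl fun i hi => ?_
  have hi' := Finset.mem_range.1 hi
  rw [Nat.cast_sub (by omega), Nat.cast_sub (by omega)]
  push_cast; ring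

/-- Abel summation in the form of an inequality, for antitone weights. -/
theorem partialSum_mul_le_weighted (a w : ℕ → ℝ) (hw : Antitone w)
    (hA : ∀ n, 0 ≤ ∑ i ∈ Finset.range n, a i) (n : ℕ) :
    (∑ i ∈ Finset.range n, a i) * w n ≤ ∑ i ∈ Finset.range n, a i * w i := by
  induction n with
  | zero => simp
  | succ n ih =>
    have h1 := mul_le_mul_of_nonneg_left (hw (Nat.le_succ n)) (hA (n + 1))
    rw [Finset.sum_range_succ] at h1 ⊢
    rw [Finset.sum_range_succ]
    simp only [Nat.succ_eq_add_one] at h1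
    linarith

theorem weighted_nonneg (a w : ℕ → ℝ) (hw : Antitone w) (hw0 : ∀ i, 0 ≤ w i)
    (hA : ∀ n, 0 ≤ ∑ i ∈ Finset.range n, a i) (n : ℕ) :
    0 ≤ ∑ i ∈ Finset.range n, a i * w i :=
  (mul_nonneg (hA n) (hw0 n)).trans (partialSum_mul_le_weighted a w hw hA n)

/-- A majorization of partial sums is preserved by nonnegative antitone weights. -/
theorem abs_weighted_le (e g w : ℕ → ℝ) (hw : Antitone w) (hw0 : ∀ i, 0 ≤ w i)
    (h : ∀ n, |∑ i ∈ Finset.range n, e i| ≤ ∑ i ∈ Finset.range n, g i) (n : ℕ) :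
    |∑ i ∈ Finset.range n, e i * w i| ≤ ∑ i ∈ Finset.range n, g i * w i := by
  have h1 := weighted_nonneg (fun i => g i - e i) w hw hw0
    (fun n => by
      have := abs_le.1 (h n)
      rw [Finset.sum_sub_distrib]; linarith) n
  have h2 := weighted_nonneg (fun i => g i + e i) w hw hw0
    (fun n => by
      have := abs_le.1 (h n)
      rw [Finset.sum_add_distrib]; linarith) n
  simp only [sub_mul, add_mul, Finset.sum_sub_distrib, Finset.sum_add_distrib] at h1 h2
  exact abs_le.2 ⟨by linarith, by linarith⟩

theorem sum_range_add_one (n : ℕ) :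
    ∑ i ∈ Finset.range n, ((i : ℝ) + 1) = (n : ℝ) * (n + 1) / 2 := by
  induction n with
  | zero => simp
  | succ n ih => rw [Finset.sum_range_succ, ih]; push_cast; ring

/-- The coefficients `s i` of the recurrence may be replaced by their average `b (i + 1)`. The bound
`i + 1 ≤ s i` gives `Q(n) ≤ n p(n)`, which absorbs the error without any information on the growth
of `p`. -/
theorem tendsto_mul_div_doubleSum (p s : ℕ → ℝ) (b : ℝ) (hb : 0 < b) (hmono : Monotone p)
    (hpos : ∀ n, 0 < p n) (hs : ∀ i : ℕ, (i : ℝ) + 1 ≤ s i)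
    (hrec : ∀ n : ℕ, (n : ℝ) * p n = ∑ i ∈ Finset.range n, s i * p (n - 1 - i))
    (havg : Tendsto (fun N : ℕ => (∑ i ∈ Finset.range N, s i) / (N : ℝ) ^ 2) atTop (𝓝 (b / 2))) :
    Tendsto (fun n : ℕ => (n : ℝ) * p n / doubleSum p n) atTop (𝓝 b) := by
  have hanti : ∀ n, Antitone (fun i => p (n - 1 - i)) := fun n i j hij => hmono (by omega)
  have hQle : ∀ n, doubleSum p n ≤ n * p n := by
    intro n
    rw [doubleSum_eq, hrec]
    exact Finset.sum_le_sum fun i _ => mul_le_mul_of_nonneg_right (hs i) (hpos _).le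
  -- the partial sums of `s i - b (i + 1)` are `o(N²)`
  have hE : Tendsto (fun N : ℕ => (∑ i ∈ Finset.range N, (s i - b * ((i : ℝ) + 1))) / (N : ℝ) ^ 2)
      atTop (𝓝 0) := by
    have h2 : Tendsto (fun N : ℕ => (1 : ℝ) / N) atTop (𝓝 0) :=
      tendsto_one_div_atTop_nhds_zero_nat
    have h3 := havg.sub ((h2.const_add 1).const_mul (b / 2))
    rw [show b / 2 - b / 2 * (1 + 0) = 0 by ring] at h3
    refine h3.congr' ?_
    filter_upwards [eventually_ge_atTop 1] with N hN
    have hN' : (0 : ℝ) < N := by exact_mod_cast hN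
    rw [Finset.sum_sub_distrib, ← Finset.mul_sum, sum_range_add_one]
    field_simp
  have hbound : ∀ ε : ℝ, 0 < ε → ∃ C : ℝ, 0 ≤ C ∧ ∀ n : ℕ,
      |(n : ℝ) * p n - b * doubleSum p n| ≤ 2 * ε * doubleSum p n + C * p n := by
    intro ε hε
    have h1 : ∀ᶠ N : ℕ in atTop,
        |∑ i ∈ Finset.range N, (s i - b * ((i : ℝ) + 1))| ≤ ε * (N : ℝ) ^ 2 := by
      filter_upwards [(Metric.tendsto_nhds.1 hE) ε hε, eventually_ge_atTop 1] with N hN hN1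
      have hN' : (0 : ℝ) < N := by exact_mod_cast hN1
      rw [Real.dist_0_eq_abs, abs_div, abs_of_pos (by positivity : (0 : ℝ) < (N : ℝ) ^ 2),
        div_lt_iff₀ (by positivity)] at hN
      exact hN.le
    obtain ⟨J, hJ⟩ := eventually_atTop.1 h1
    -- `C` bounds the partial sums before the index `J` where the asymptotic bound takes over
    set C := ∑ j ∈ Finset.range J, |∑ i ∈ Finset.range j, (s i - b * ((i : ℝ) + 1))| with hC
    have hC0 : 0 ≤ C := Finset.sum_nonneg fun _ _ => abs_nonneg _
    refine ⟨C, hC0, fun n => ?_⟩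
    -- the majorant has partial sums `ε m (m + 1) + C`; placing `C` at `i = 0` makes it cost only
    -- `C p(n - 1)` after weighting
    have h2 : ∀ m : ℕ, |∑ i ∈ Finset.range m, (s i - b * ((i : ℝ) + 1))|
        ≤ ∑ i ∈ Finset.range m, (2 * ε * ((i : ℝ) + 1) + if i = 0 then C else 0) := by
      intro m
      rcases Nat.eq_zero_or_pos m with rfl | hm
      · simp
      rw [Finset.sum_add_distrib, ← Finset.mul_sum, sum_range_add_one, Finset.sum_ite_eq' ,
        if_pos (Finset.mem_range.2 hm)]
      have hm' : (0 : ℝ) < m := by exact_mod_cast hm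
      have hsq : ε * (m : ℝ) ^ 2 ≤ 2 * ε * ((m : ℝ) * (m + 1) / 2) := by nlinarith [mul_pos hε hm']
      rcases lt_or_ge m J with h | h
      · have : |∑ i ∈ Finset.range m, (s i - b * ((i : ℝ) + 1))| ≤ C :=
          Finset.single_le_sum
            (f := fun j => |∑ i ∈ Finset.range j, (s i - b * ((i : ℝ) + 1))|)
            (fun _ _ => abs_nonneg _) (Finset.mem_range.2 h)
        nlinarith [mul_pos hε (pow_pos hm' 2)]
      · linarith [hJ m h]
    have h3 := abs_weighted_le _ _ _ (hanti n) (fun i => (hpos _).le) h2 n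
    have e1 : (n : ℝ) * p n - b * doubleSum p n
        = ∑ i ∈ Finset.range n, (s i - b * ((i : ℝ) + 1)) * p (n - 1 - i) := by
      rw [hrec, doubleSum_eq, Finset.mul_sum, ← Finset.sum_sub_distrib]
      exact Finset.sum_congr rfl fun i _ => by ring
    have e2 : ∑ i ∈ Finset.range n,
        (2 * ε * ((i : ℝ) + 1) + if i = 0 then C else 0) * p (n - 1 - i)
        ≤ 2 * ε * doubleSum p n + C * p n := by
      simp only [add_mul, Finset.sum_add_distrib, ite_mul, zero_mul, Finset.sum_ite_eq']
      rw [doubleSum_eq, Finset.mul_sum]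
      refine add_le_add (le_of_eq (Finset.sum_congr rfl fun i _ => by ring)) ?_
      split_ifs
      · exact mul_le_mul_of_nonneg_left (hmono (by omega)) hC0
      · exact mul_nonneg hC0 (hpos n).le
    rw [e1]
    exact h3.trans e2
  have hlim : Tendsto (fun n : ℕ => b * doubleSum p n / (n * p n)) atTop (𝓝 1) := by
    rw [Metric.tendsto_nhds]
    intro ε hε
    obtain ⟨C, hC0, hC⟩ := hbound (ε / 4) (by positivity)
    have h4 : ∀ᶠ n : ℕ in atTop, C / n < ε / 2 :=
      (tendsto_const_div_atTop_nhds_zero_nat C).eventually_lt_const (by positivity)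
    filter_upwards [h4, eventually_ge_atTop 1] with n hn hn1
    have hn' : (0 : ℝ) < n := by exact_mod_cast hn1
    have hp := hpos n
    have hnp : 0 < n * p n := by positivity
    rw [Real.dist_eq, abs_sub_comm, show 1 - b * doubleSum p n / (n * p n)
      = (n * p n - b * doubleSum p n) / (n * p n) by field_simp, abs_div, abs_of_pos hnp,
      div_lt_iff₀ hnp]
    rw [div_lt_iff₀ hn'] at hn
    calc _ ≤ _ := hC n
      _ ≤ 2 * (ε / 4) * (n * p n) + C * p n := by gcongr; exact hQle n
      _ < ε * (n * p n) := by nlinarith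
  have h5 := (hlim.inv₀ one_ne_zero).const_mul b
  rw [inv_one, mul_one] at h5
  refine h5.congr fun n => ?_
  rw [inv_div, mul_div_assoc', mul_div_mul_left _ _ hb.ne']

/-! ### Integrating the second-order difference equation -/

theorem stolz_cesaro (a b : ℕ → ℝ) (L : ℝ) (hb : Monotone b) (hbt : Tendsto b atTop atTop)
    (hne : ∀ᶠ n in atTop, b (n + 1) - b n ≠ 0)
    (h : Tendsto (fun n => (a (n + 1) - a n) / (b (n + 1) - b n)) atTop (𝓝 L)) :
    Tendsto (fun n => a n / b n) atTop (𝓝 L) := by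
  have h1 : (fun n => (a (n + 1) - a n) - L * (b (n + 1) - b n))
      =o[atTop] (fun n => b (n + 1) - b n) := by
    rw [Asymptotics.isLittleO_iff_tendsto' (hne.mono fun n hn h0 => absurd h0 hn)]
    have := h.sub_const L
    rw [sub_self] at this
    refine this.congr' ?_
    filter_upwards [hne] with n hn
    field_simp
  have h2 : (fun n => (a n - a 0) - L * (b n - b 0)) =o[atTop] (fun n => b n - b 0) := by
    refine (h1.sum_range (fun n => sub_nonneg.2 (hb (Nat.le_succ n))) ?_).congr
      (fun n => ?_) (fun n => Finset.sum_range_sub b n)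
    · simp only [Finset.sum_range_sub]
      exact tendsto_atTop_add_const_right _ _ hbt
    · rw [Finset.sum_sub_distrib (f := fun n => a (n + 1) - a n), ← Finset.mul_sum,
        Finset.sum_range_sub, Finset.sum_range_sub]
  have hc : ∀ c : ℝ, (fun _ : ℕ => c) =o[atTop] b := fun c =>
    Asymptotics.isLittleO_const_left.2 (Or.inr (tendsto_norm_atTop_atTop.comp hbt))
  have h3 : (fun n => b n - b 0) =O[atTop] b :=
    (Asymptotics.isBigO_refl b atTop).sub (hc _).isBigO
  have h4 : (fun n => a n - L * b n) =o[atTop] b := by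
    refine ((h2.trans_isBigO h3).add (hc (a 0 - L * b 0))).congr_left fun n => ?_
    ring
  have h5 := h4.tendsto_div_nhds_zero.add_const L
  rw [zero_add] at h5
  refine h5.congr' ?_
  filter_upwards [hbt.eventually_gt_atTop 0] with n hn
  field_simp
  ring

section Riccati

variable {p : ℕ → ℝ}

theorem partialSum_pos (hpos : ∀ n, 0 < p n) (n : ℕ) : 0 < partialSum p n :=
  Finset.sum_pos (fun _ _ => hpos _) ⟨0, by simp⟩

theorem doubleSum_pos (hpos : ∀ n, 0 < p n) (n : ℕ) : 0 < doubleSum p (n + 1) :=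
  Finset.sum_pos (fun _ _ => partialSum_pos hpos _) ⟨0, by simp⟩

theorem doubleSum_mono (hpos : ∀ n, 0 < p n) : Monotone (doubleSum p) :=
  monotone_nat_of_le_succ fun n => by
    rw [doubleSum_succ]; linarith [partialSum_pos hpos n]

/-- Discrete form of `(Q')² ≤ 2 Q'' Q`, which holds because `Q''` is nondecreasing. -/
theorem partialSum_sq_le (hmono : Monotone p) (hpos : ∀ n, 0 < p n) (n : ℕ) :
    partialSum p n ^ 2 ≤ 2 * p n * doubleSum p (n + 1) := by
  induction n with
  | zero =>
    have := hpos 0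
    simp [partialSum, doubleSum]; nlinarith
  | succ n ih =>
    have h1 := partialSum_pos hpos n
    have h2 := doubleSum_pos hpos n
    have h3 := hmono (Nat.le_succ n)
    have h4 := hpos (n + 1)
    simp only [Nat.succ_eq_add_one] at h3
    rw [doubleSum_succ, partialSum_succ]
    nlinarith [mul_le_mul_of_nonneg_right h3 h2.le]

/-- With `u = D / Q` and `δ = 2 p / Q`, `partialSum_sq_le` reads `u² ≤ δ (1 + u)`, which forces
`u ≤ δ + √δ`; and `δ → 0` because `n p(n) / Q(n)` converges. -/
theorem partialSum_div_doubleSum_tendsto_zero (b : ℝ)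
    (hmono : Monotone p) (hpos : ∀ n, 0 < p n)
    (h : Tendsto (fun n : ℕ => (n : ℝ) * p n / doubleSum p n) atTop (𝓝 b)) :
    Tendsto (fun n => partialSum p n / doubleSum p n) atTop (𝓝 0) := by
  have h1 : Tendsto (fun n : ℕ => 2 * p n / doubleSum p n) atTop (𝓝 0) := by
    have h2 : Tendsto (fun N : ℕ => (1 : ℝ) / N) atTop (𝓝 0) :=
      tendsto_one_div_atTop_nhds_zero_nat
    have h3 := (h.mul h2).const_mul 2
    rw [mul_zero, mul_zero] at h3
    refine h3.congr' ?_
    filter_upwards [eventually_ge_atTop 1] with n hn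
    have hn' : (0 : ℝ) < n := by exact_mod_cast hn
    field_simp
  have h2 := h1.add (h1.sqrt)
  rw [Real.sqrt_zero, add_zero] at h2
  refine squeeze_zero' ?_ ?_ h2
  · filter_upwards [eventually_ge_atTop 1] with n hn
    obtain ⟨m, rfl⟩ := Nat.exists_eq_add_of_le' hn
    exact (div_pos (partialSum_pos hpos _) (doubleSum_pos hpos m)).le
  · filter_upwards [eventually_ge_atTop 1] with n hn
    obtain ⟨m, rfl⟩ := Nat.exists_eq_add_of_le' hn
    have hQ := doubleSum_pos hpos m
    have hD := partialSum_pos hpos (m + 1)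
    have hp := hpos (m + 1)
    have hle := partialSum_sq_le hmono hpos (m + 1)
    rw [doubleSum_succ] at hle
    set δ := 2 * p (m + 1) / doubleSum p (m + 1) with hδ
    set u := partialSum p (m + 1) / doubleSum p (m + 1) with hu
    have hu0 : 0 < u := div_pos hD hQ
    have hδ0 : 0 < δ := by positivity
    have hq : u ^ 2 ≤ δ * (1 + u) := by
      rw [hu, hδ, div_pow, div_mul_eq_mul_div, div_le_div_iff₀ (by positivity) hQ]
      have e : 2 * p (m + 1) * (1 + partialSum p (m + 1) / doubleSum p (m + 1))
          * doubleSum p (m + 1) ^ 2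
          = 2 * p (m + 1) * (doubleSum p (m + 1) + partialSum p (m + 1)) * doubleSum p (m + 1) := by
        field_simp
      rw [e]
      exact mul_le_mul_of_nonneg_right hle hQ.le
    by_contra! hlt
    have hs := Real.sq_sqrt hδ0.le
    have hs0 := Real.sqrt_pos.2 hδ0
    nlinarith [mul_pos hs0 hδ0, mul_pos hs0 hu0, mul_pos hu0 hδ0]

theorem doubleSum_ratio (b : ℝ) (hmono : Monotone p) (hpos : ∀ n, 0 < p n)
    (h : Tendsto (fun n : ℕ => (n : ℝ) * p n / doubleSum p n) atTop (𝓝 b)) :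
    Tendsto (fun n => doubleSum p (n + 1) / doubleSum p n) atTop (𝓝 1) := by
  have h1 := (partialSum_div_doubleSum_tendsto_zero b hmono hpos h).const_add 1
  rw [add_zero] at h1
  refine h1.congr' ?_
  filter_upwards [eventually_ge_atTop 1] with n hn
  obtain ⟨m, rfl⟩ := Nat.exists_eq_add_of_le' hn
  have hQ := doubleSum_pos hpos m
  rw [doubleSum_succ p (m + 1)]
  field_simp

theorem doubleSum_tendsto (hpos : ∀ n, 0 < p n) :
    Tendsto (doubleSum p) atTop atTop := by
  refine tendsto_atTop_mono (f := fun n : ℕ => (n : ℝ) * p 0) (fun n => ?_)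
    (tendsto_natCast_atTop_atTop.atTop_mul_const (hpos 0))
  rw [doubleSum, ← nsmul_eq_mul]
  conv_lhs => rw [← Finset.card_range n]
  refine Finset.card_nsmul_le_sum _ _ _ fun m _ => ?_
  exact Finset.single_le_sum (f := p) (fun i _ => (hpos i).le) (by simp)

/-- Discrete form of `n (Q')² ~ b Q²`, obtained by multiplying `n Q'' ~ b Q` by `2 Q'` and
integrating. The product `D(n + 1) D(n)` replaces `D(n)²` since its increment
`D(n + 1) (p(n + 2) + p(n + 1))` has `D(n + 1)` as an exact factor. -/
theorem sqrt_mul_partialSum_div_doubleSum (b : ℝ) (hmono : Monotone p) (hpos : ∀ n, 0 < p n)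
    (h : Tendsto (fun n : ℕ => (n : ℝ) * p n / doubleSum p n) atTop (𝓝 b)) :
    Tendsto (fun n : ℕ => √n * (partialSum p n / doubleSum p n)) atTop (𝓝 √b) := by
  have hu := partialSum_div_doubleSum_tendsto_zero b hmono hpos h
  have hr := doubleSum_ratio b hmono hpos h
  have hinv : Tendsto (fun N : ℕ => (1 : ℝ) / N) atTop (𝓝 0) :=
    tendsto_one_div_atTop_nhds_zero_nat
  have hQ := doubleSum_pos hpos
  have hD := partialSum_pos hpos
  -- the two products `(n+1) p(n+1)` and `(n+1) p(n+2)` compared with `Q(n+1)`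
  have hp1 : Tendsto (fun n : ℕ => ((n : ℝ) + 1) * p (n + 1) / doubleSum p (n + 1)) atTop (𝓝 b) := by
    refine ((tendsto_add_atTop_iff_nat 1).2 h).congr fun n => ?_
    push_cast; rfl
  have hp2 : Tendsto (fun n : ℕ => ((n : ℝ) + 1) * p (n + 2) / doubleSum p (n + 2)) atTop (𝓝 b) := by
    have h1 := (tendsto_add_atTop_iff_nat 2).2 h
    have h2 := ((tendsto_add_atTop_iff_nat 2).2 hinv).const_sub 1
    have h3 := h2.mul h1
    rw [sub_zero, one_mul] at h3
    refine h3.congr fun n => ?_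
    push_cast
    have : (n : ℝ) + 2 ≠ 0 := by positivity
    have := (hQ (n + 1)).ne'
    field_simp
    ring
  have hr1 : Tendsto (fun n => doubleSum p (n + 2) / doubleSum p (n + 1)) atTop (𝓝 1) :=
    (tendsto_add_atTop_iff_nat 1).2 hr
  -- ratio of the increments of `(n + 1) D(n + 1) D(n)` and of `Q(n + 1)²`; the common factor
  -- `D(n + 1)` cancels
  have hratio : Tendsto (fun n : ℕ =>
      (((n + 1 : ℕ) + 1 : ℝ) * partialSum p (n + 1 + 1) * partialSum p (n + 1)
        - ((n : ℝ) + 1) * partialSum p (n + 1) * partialSum p n)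
      / (doubleSum p (n + 1 + 1) ^ 2 - doubleSum p (n + 1) ^ 2)) atTop (𝓝 b) := by
    have hu2 : Tendsto (fun n => partialSum p (n + 2) / doubleSum p (n + 2)) atTop (𝓝 0) :=
      (tendsto_add_atTop_iff_nat 2).2 hu
    have h1 := (((hu2.add hp2).mul hr1).add hp1).div (hr1.add_const 1) (by norm_num)
    rw [show ((0 + b) * 1 + b) / (1 + 1) = b by ring] at h1
    refine h1.congr fun n => ?_
    have q1 := hQ n
    have q2 := hQ (n + 1)
    have d1 := hD (n + 1)
    have e : doubleSum p (n + 1 + 1) ^ 2 - doubleSum p (n + 1) ^ 2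
        = partialSum p (n + 1) * (doubleSum p (n + 2) + doubleSum p (n + 1)) := by
      rw [doubleSum_succ p (n + 1)]; ring
    have e2 : ((n + 1 : ℕ) + 1 : ℝ) * partialSum p (n + 1 + 1) * partialSum p (n + 1)
        - ((n : ℝ) + 1) * partialSum p (n + 1) * partialSum p n
        = partialSum p (n + 1)
          * (partialSum p (n + 2) + ((n : ℝ) + 1) * (p (n + 2) + p (n + 1))) := by
      rw [partialSum_succ p (n + 1), partialSum_succ p n]; push_cast; ring
    rw [e, e2, mul_div_mul_left _ _ d1.ne']
    simp only [Pi.div_apply]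
    field_simp
    ring
  have hQt : Tendsto (fun n => doubleSum p (n + 1)) atTop atTop :=
    (tendsto_add_atTop_iff_nat 1).2 (doubleSum_tendsto hpos)
  have hst := stolz_cesaro
    (fun n : ℕ => ((n : ℝ) + 1) * partialSum p (n + 1) * partialSum p n)
    (fun n => doubleSum p (n + 1) ^ 2) b
    (fun m n hmn => pow_le_pow_left₀ (hQ m).le (doubleSum_mono hpos (by omega)) 2)
    (by
      have := hQt.atTop_mul_atTop₀ hQt
      refine this.congr fun n => by ring)
    (Eventually.of_forall fun n => by
      rw [doubleSum_succ p (n + 1)]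
      have := hQ n
      have := hD (n + 1)
      nlinarith [mul_pos (hQ n) (hD (n + 1))])
    hratio
  -- squeeze `(n+1) D(n+1)²` between consecutive products
  have hup : Tendsto (fun n : ℕ => ((n : ℝ) + 1) * (partialSum p (n + 1) / doubleSum p (n + 1)) ^ 2)
      atTop (𝓝 b) := by
    have hst1 := (tendsto_add_atTop_iff_nat 1).2 hst
    have hc := ((tendsto_add_atTop_iff_nat 2).2 hinv).const_sub 1
    have h3 := (hc.mul hst1).mul (hr1.pow 2)
    rw [sub_zero, one_mul, one_pow, mul_one] at h3
    refine tendsto_of_tendsto_of_tendsto_of_le_of_le hst h3 ?_ ?_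
    · intro n
      have := hQ n
      have := hD (n + 1)
      have h4 : partialSum p n ≤ partialSum p (n + 1) := by
        rw [partialSum_succ]; linarith [hpos (n + 1)]
      simp only
      rw [div_pow, mul_div_assoc', mul_assoc, sq (partialSum p (n + 1))]
      gcongr
    · intro n
      have := hQ n
      have := hQ (n + 1)
      have := hD (n + 1)
      have h4 : partialSum p (n + 1) ≤ partialSum p (n + 2) := by
        rw [partialSum_succ p (n + 1)]; linarith [hpos (n + 2)]
      have e : (1 - 1 / ((n + 2 : ℕ) : ℝ)) *
          ((((n + 1 : ℕ) : ℝ) + 1) * partialSum p (n + 1 + 1) * partialSum p (n + 1)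
            / doubleSum p (n + 1 + 1) ^ 2)
          * (doubleSum p (n + 2) / doubleSum p (n + 1)) ^ 2
          = ((n : ℝ) + 1) * (partialSum p (n + 2) * partialSum p (n + 1))
            / doubleSum p (n + 1) ^ 2 := by
        push_cast
        have : (n : ℝ) + 2 ≠ 0 := by positivity
        field_simp
        ring
      simp only
      rw [e, div_pow, mul_div_assoc', sq (partialSum p (n + 1))]
      gcongr
  rw [← tendsto_add_atTop_iff_nat 1]
  refine hup.sqrt.congr fun n => ?_
  rw [Real.sqrt_mul (by positivity), Real.sqrt_sq (div_pos (hD _) (hQ _)).le]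
  push_cast; rfl

end Riccati

/-! ### From regular growth to Benford behaviour -/

/-- If `F` grows like `γ √n` increment by increment, then so it does over intervals: increments of
`F` over `[a m, b m]` determine those of the square root in the limit. -/
theorem tendsto_sqrt_sub_sqrt (F : ℕ → ℝ) (γ : ℝ) (hγ : 0 < γ)
    (hF : Tendsto (fun n : ℕ => (F (n + 1) - F n) / (√(n + 1 : ℕ) - √n)) atTop (𝓝 γ))
    (a b : ℕ → ℕ) (hab : ∀ m, a m ≤ b m) (ha : Tendsto a atTop atTop) (l : ℝ)
    (hl : Tendsto (fun m => F (b m) - F (a m)) atTop (𝓝 l)) :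
    Tendsto (fun m => √(b m) - √(a m)) atTop (𝓝 (l / γ)) := by
  have hlt : ∀ n : ℕ, 0 < √(n + 1 : ℕ) - √n := fun n =>
    sub_pos.2 (Real.sqrt_lt_sqrt (by positivity) (by push_cast; linarith))
  -- the bound on single increments telescopes over `[a m, b m]`
  have key : (fun m => (F (b m) - F (a m)) - γ * (√(b m) - √(a m)))
      =o[atTop] (fun m => γ * (√(b m) - √(a m))) := by
    rw [Asymptotics.isLittleO_iff]
    intro ε hε
    have h1 : ∀ᶠ n : ℕ in atTop,
        |(F (n + 1) - F n) - γ * (√(n + 1 : ℕ) - √n)| ≤ ε * γ * (√(n + 1 : ℕ) - √n) := by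
      filter_upwards [Metric.tendsto_nhds.1 hF (ε * γ) (by positivity)] with n hn
      have h0 := hlt n
      rw [Real.dist_eq, div_sub' h0.ne', abs_div, abs_of_pos h0, div_lt_iff₀ h0] at hn
      rw [mul_comm γ]
      exact hn.le
    obtain ⟨N, hN⟩ := eventually_atTop.1 h1
    have h2 : ∀ x y : ℕ, N ≤ x → x ≤ y →
        |(F y - F x) - γ * (√y - √x)| ≤ ε * γ * (√y - √x) := by
      intro x y hx hxy
      induction y, hxy using Nat.le_induction with
      | base => simp
      | succ y hy ih =>
        have h3 := hN y (hx.trans hy)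
        have h4 := abs_add_le ((F y - F x) - γ * (√y - √x))
          ((F (y + 1) - F y) - γ * (√(y + 1 : ℕ) - √y))
        rw [show (F y - F x) - γ * (√y - √x) + ((F (y + 1) - F y) - γ * (√(y + 1 : ℕ) - √y))
          = (F (y + 1) - F x) - γ * (√(y + 1 : ℕ) - √x) by ring] at h4
        linarith
    filter_upwards [ha.eventually_ge_atTop N] with m hm
    have h5 : 0 ≤ √(b m) - √(a m) := sub_nonneg.2 (Real.sqrt_le_sqrt (by exact_mod_cast hab m))
    rw [Real.norm_eq_abs, Real.norm_of_nonneg (by positivity), ← mul_assoc]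
    exact h2 _ _ hm (hab m)
  have h6 := (Asymptotics.IsEquivalent.symm (show Asymptotics.IsEquivalent atTop
    (fun m => F (b m) - F (a m)) (fun m => γ * (√(b m) - √(a m))) from key)).symm.tendsto_nhds hl
  refine (h6.div_const γ).congr fun m => ?_
  field_simp

theorem tendsto_div_of_sqrt_sub (a b : ℕ → ℕ) (ha : Tendsto a atTop atTop) (l : ℝ)
    (h : Tendsto (fun m => √(b m) - √(a m)) atTop (𝓝 l)) :
    Tendsto (fun m => √(b m) / √(a m)) atTop (𝓝 1) := by
  have hs : Tendsto (fun m => √(a m)) atTop atTop :=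
    Real.tendsto_sqrt_atTop.comp (tendsto_natCast_atTop_atTop.comp ha)
  have h1 := (h.div_atTop hs).add_const 1
  rw [zero_add] at h1
  refine h1.congr' ?_
  filter_upwards [hs.eventually_gt_atTop 0] with m hm
  field_simp
  ring

open scoped Classical in
/-- A union of blocks `[a m, b m)`, with `√(a m)` asymptotically in arithmetic progression of step
`l₂` and blocks of length `l₁` on the square-root scale, has density `l₁ / l₂`: the Stolz-Cesàro
theorem gives the density along `a m`, and `a (m + 1) / a m → 1` fills the gaps. -/
theorem hasNatDensity_of_blocks (S : Set ℕ) (a b : ℕ → ℕ) (hab : ∀ m, a m ≤ b m)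
    (hba : ∀ m, b m ≤ a (m + 1)) (hS : ∀ n, n ∈ S ↔ ∃ m, a m ≤ n ∧ n < b m)
    (ha : Tendsto a atTop atTop) (l₁ l₂ : ℝ) (hl₂ : 0 < l₂)
    (h₁ : Tendsto (fun m => √(b m) - √(a m)) atTop (𝓝 l₁))
    (h₂ : Tendsto (fun m => √(a (m + 1)) - √(a m)) atTop (𝓝 l₂)) :
    HasNatDensity S (l₁ / l₂) := by
  have hmono : Monotone a := monotone_nat_of_le_succ fun m => (hab m).trans (hba m)
  have haR : Tendsto (fun m => (a m : ℝ)) atTop atTop := tendsto_natCast_atTop_atTop.comp ha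
  set c : ℕ → ℕ := fun N => ((Finset.range N).filter (fun n => n ∈ S)).card with hc
  have hcmono : Monotone c := fun x y hxy =>
    Finset.card_le_card (Finset.filter_subset_filter _ (Finset.range_mono hxy))
  have hstep : ∀ m, c (a (m + 1)) = c (a m) + (b m - a m) := by
    intro m
    have e : (Finset.range (a (m + 1))).filter (fun n => n ∈ S)
        = (Finset.range (a m)).filter (fun n => n ∈ S) ∪ Finset.Ico (a m) (b m) := by
      ext n
      simp only [Finset.mem_filter, Finset.mem_range, Finset.mem_union, Finset.mem_Ico]
      constructor
      · rintro ⟨h1, h2⟩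
        rcases lt_or_ge n (a m) with h | h
        · exact Or.inl ⟨h, h2⟩
        · obtain ⟨i, hi1, hi2⟩ := (hS n).1 h2
          have : i = m := by
            rcases lt_trichotomy i m with hlt | heq | hgt
            · have := hmono (show i + 1 ≤ m from hlt)
              have := hba i
              omega
            · exact heq
            · have := hmono (show m + 1 ≤ i from hgt)
              omega
          subst this
          exact Or.inr ⟨h, hi2⟩
      · rintro (⟨h1, h2⟩ | ⟨h1, h2⟩)
        · exact ⟨h1.trans_le (hmono (Nat.le_succ m)), h2⟩
        · exact ⟨h2.trans_le (hba m), (hS n).2 ⟨m, h1, h2⟩⟩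
    simp only [hc]
    rw [e, Finset.card_union_of_disjoint, Nat.card_Ico]
    rw [Finset.disjoint_left]
    intro n h1 h2
    simp only [Finset.mem_filter, Finset.mem_range, Finset.mem_Ico] at h1 h2
    omega
  have hr₁ := tendsto_div_of_sqrt_sub a b ha l₁ h₁
  have hr₂ := tendsto_div_of_sqrt_sub a (fun m => a (m + 1)) ha l₂ h₂
  have hpos : ∀ᶠ m in atTop, (0 : ℝ) < √(a m) :=
    (haR.eventually_gt_atTop 0).mono fun m hm => Real.sqrt_pos.2 hm
  have hpos₂ : ∀ᶠ m in atTop, 0 < √(a (m + 1)) - √(a m) := h₂.eventually_const_lt hl₂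
  have hfac : ∀ x y : ℕ, (y : ℝ) - x = (√y - √x) * (√y + √x) := by
    intro x y
    have h1 := Real.sq_sqrt (Nat.cast_nonneg (α := ℝ) x)
    have h2 := Real.sq_sqrt (Nat.cast_nonneg (α := ℝ) y)
    linear_combination h1 - h2
  have hA : Tendsto (fun m => (c (a m) : ℝ) / a m) atTop (𝓝 (l₁ / l₂)) := by
    refine stolz_cesaro (fun m => (c (a m) : ℝ)) (fun m => (a m : ℝ)) _
      (fun x y h => Nat.cast_le.2 (hmono h)) haR ?_ ?_
    · filter_upwards [hpos, hpos₂] with m h3 h4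
      rw [hfac]
      positivity
    · have h5 := (h₁.div h₂ hl₂.ne').mul ((hr₁.add_const 1).div (hr₂.add_const 1) (by norm_num))
      rw [div_self (by norm_num : (1 : ℝ) + 1 ≠ 0), mul_one] at h5
      refine h5.congr' ?_
      filter_upwards [hpos, hpos₂] with m h3 h4
      rw [hstep, Nat.cast_add, Nat.cast_sub (hab m), add_sub_cancel_left, hfac, hfac]
      simp only [Pi.div_apply]
      have : 0 < √(a (m + 1) : ℝ) := by linarith
      field_simp
  have hratio : Tendsto (fun m => (a (m + 1) : ℝ) / a m) atTop (𝓝 1) := by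
    have := hr₂.pow 2
    rw [one_pow] at this
    refine this.congr fun m => ?_
    rw [div_pow, Real.sq_sqrt (by positivity), Real.sq_sqrt (by positivity)]
  have haR' : ∀ᶠ m in atTop, (0 : ℝ) < a m := haR.eventually_gt_atTop 0
  have hlow : Tendsto (fun m => (c (a m) : ℝ) / a (m + 1)) atTop (𝓝 (l₁ / l₂)) := by
    have := hA.div hratio one_ne_zero
    rw [div_one] at this
    refine this.congr' ?_
    filter_upwards [haR', (tendsto_add_atTop_iff_nat 1).2 haR |>.eventually_gt_atTop 0] with m h3 h4
    simp only [Pi.div_apply]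
    field_simp
  have hupp : Tendsto (fun m => (c (a (m + 1)) : ℝ) / a m) atTop (𝓝 (l₁ / l₂)) := by
    have := ((tendsto_add_atTop_iff_nat 1).2 hA).mul hratio
    rw [mul_one] at this
    refine this.congr' ?_
    filter_upwards [haR', (tendsto_add_atTop_iff_nat 1).2 haR |>.eventually_gt_atTop 0] with m h3 h4
    field_simp
  -- every large `N` lies in a block `[a m, a (m + 1))` with `m` large
  have hblock : ∀ P : ℕ → Prop, (∀ᶠ m in atTop, P m) →
      ∀ᶠ N in atTop, ∃ m, P m ∧ 0 < a m ∧ a m ≤ N ∧ N < a (m + 1) := by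
    intro P hP
    obtain ⟨m₀, hm₀⟩ := eventually_atTop.1 (hP.and (ha.eventually_gt_atTop 0))
    filter_upwards [eventually_ge_atTop (a m₀)] with N hN
    have hex : ∃ i, N < a (m₀ + i + 1) := by
      obtain ⟨M, hM⟩ := eventually_atTop.1 (ha.eventually_gt_atTop N)
      exact ⟨M, hM _ (by omega)⟩
    refine ⟨m₀ + Nat.find hex, (hm₀ _ (by omega)).1, (hm₀ _ (by omega)).2, ?_, Nat.find_spec hex⟩
    rcases Nat.eq_zero_or_pos (Nat.find hex) with h0 | h0
    · rw [h0]; exact hN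
    · have h3 := Nat.find_min hex (m := Nat.find hex - 1) (by omega)
      rw [show m₀ + (Nat.find hex - 1) + 1 = m₀ + Nat.find hex by omega] at h3
      omega
  unfold HasNatDensity
  rw [tendsto_order]
  constructor
  · intro y hy
    filter_upwards [hblock _ (hlow.eventually_const_lt hy)] with N hN
    obtain ⟨m, hP, h0, h3, h4⟩ := hN
    refine hP.trans_le ?_
    have h5 : (c (a m) : ℝ) ≤ c N := by exact_mod_cast hcmono h3
    have h6 : (0 : ℝ) < N := by exact_mod_cast h0.trans_le h3
    have h7 : (N : ℝ) ≤ a (m + 1) := by exact_mod_cast h4.le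
    show _ ≤ (c N : ℝ) / N
    gcongr
  · intro y hy
    filter_upwards [hblock _ (hupp.eventually_lt_const hy)] with N hN
    obtain ⟨m, hP, h0, h3, h4⟩ := hN
    refine lt_of_le_of_lt ?_ hP
    have h5 : (c N : ℝ) ≤ c (a (m + 1)) := by exact_mod_cast hcmono h4.le
    have h6 : (0 : ℝ) < a m := by exact_mod_cast h0
    have h7 : (a m : ℝ) ≤ N := by exact_mod_cast h3
    show (c N : ℝ) / N ≤ _
    gcongr

/-- A monotone positive sequence whose logarithm is, up to `o(1)`, a function `F` with
`F(n + 1) - F(n) ~ γ (√(n + 1) - √n)` is Benford. -/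
theorem isBenford_of_regular (p F : ℕ → ℝ) (γ : ℝ) (hγ : 0 < γ) (hmono : Monotone p)
    (hpos : ∀ n, 0 < p n)
    (hpF : Tendsto (fun n => Real.log (p n) - F n) atTop (𝓝 0))
    (hF : Tendsto (fun n : ℕ => (F (n + 1) - F n) / (√(n + 1 : ℕ) - √n)) atTop (𝓝 γ)) :
    IsBenford p := by
  have hlt : ∀ n : ℕ, 0 < √(n + 1 : ℕ) - √n := fun n =>
    sub_pos.2 (Real.sqrt_lt_sqrt (by positivity) (by push_cast; linarith))
  have hsq : Tendsto (fun n : ℕ => √n) atTop atTop :=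
    Real.tendsto_sqrt_atTop.comp tendsto_natCast_atTop_atTop
  have hFt : Tendsto F atTop atTop := by
    have h1 := stolz_cesaro F (fun n : ℕ => √n) γ
      (fun x y h => Real.sqrt_le_sqrt (by exact_mod_cast h)) hsq
      (Eventually.of_forall fun n => (hlt n).ne') hF
    refine (h1.pos_mul_atTop hγ hsq).congr' ?_
    filter_upwards [hsq.eventually_gt_atTop 0] with n hn
    field_simp
  have hlogt : Tendsto (fun n => Real.log (p n)) atTop atTop := by
    refine (hpF.add_atTop hFt).congr fun n => ?_
    ring
  have hpt : Tendsto p atTop atTop := by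
    refine (Real.tendsto_exp_atTop.comp hlogt).congr fun n => ?_
    exact Real.exp_log (hpos n)
  -- consecutive logarithms get close
  have hF0 : Tendsto (fun n : ℕ => F (n + 1) - F n) atTop (𝓝 0) := by
    have h1 : Tendsto (fun n : ℕ => √(n + 1 : ℕ) - √n) atTop (𝓝 0) := by
      have h2 : Tendsto (fun n : ℕ => (√n)⁻¹) atTop (𝓝 0) := hsq.inv_tendsto_atTop
      refine squeeze_zero' (Eventually.of_forall fun n => (hlt n).le) ?_ h2
      filter_upwards [eventually_ge_atTop 1] with n hn
      have h3 : 0 < √(n : ℝ) := Real.sqrt_pos.2 (by exact_mod_cast hn)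
      rw [inv_eq_one_div, le_div_iff₀ h3]
      have h4 := Real.sq_sqrt (Nat.cast_nonneg (α := ℝ) n)
      have h5 := Real.sq_sqrt (Nat.cast_nonneg (α := ℝ) (n + 1))
      have h6 := hlt n
      push_cast at *
      nlinarith
    have h2 := hF.mul h1
    rw [mul_zero] at h2
    refine h2.congr fun n => ?_
    have := (hlt n).ne'
    field_simp
  have hlog0 : Tendsto (fun n : ℕ => Real.log (p (n + 1)) - Real.log (p n)) atTop (𝓝 0) := by
    have h1 := (((tendsto_add_atTop_iff_nat 1).2 hpF).sub hpF).add hF0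
    rw [sub_zero, add_zero] at h1
    refine h1.congr fun n => ?_
    ring
  -- `Nf x` is the first index at which `p` reaches `x`
  have hex : ∀ x : ℝ, ∃ n, x ≤ p n := fun x => (hpt.eventually_ge_atTop x).exists
  classical
  let Nf : ℝ → ℕ := fun x => Nat.find (hex x)
  have hN : ∀ x n, Nf x ≤ n ↔ x ≤ p n := fun x n =>
    ⟨fun h => (Nat.find_spec (hex x)).trans (hmono h), fun h => Nat.find_min' (hex x) h⟩
  have hNmono : Monotone Nf := fun x y hxy =>
    (hN _ _).2 (hxy.trans ((hN y _).1 le_rfl))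
  have hNt : Tendsto Nf atTop atTop := by
    refine tendsto_atTop.2 fun n => ?_
    filter_upwards [eventually_gt_atTop (p n)] with x hx
    by_contra! h
    exact absurd ((hN _ _).1 h.le) (not_le.2 hx)
  -- `p` overshoots `x` at its first index by a factor tending to `1`
  have hFN : Tendsto (fun x => F (Nf x) - Real.log x) atTop (𝓝 0) := by
    have h1 : Tendsto (fun x => Real.log (p (Nf x)) - Real.log x) atTop (𝓝 0) := by
      have h2 : Tendsto (fun x => Nf x - 1) atTop atTop := (tendsto_sub_atTop_nat 1).comp hNt
      refine squeeze_zero' ?_ ?_ (hlog0.comp h2)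
      · filter_upwards [eventually_gt_atTop 0] with x hx
        exact sub_nonneg.2 (Real.log_le_log hx ((hN x _).1 le_rfl))
      · filter_upwards [eventually_gt_atTop 0, hNt.eventually_ge_atTop 1] with x hx hx1
        simp only [Function.comp]
        rw [Nat.sub_add_cancel hx1]
        have h3 : p (Nf x - 1) < x := by
          by_contra! h
          have := (hN _ _).2 h
          omega
        have := Real.log_le_log (hpos _) h3.le
        linarith
    have h2 := h1.sub (hpF.comp hNt)
    rw [sub_zero] at h2
    refine h2.congr fun x => ?_
    simp only [Function.comp]
    ring
  intro k hk d hd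
  have hk1 : (1 : ℝ) < k := by exact_mod_cast hk
  have hk0 : (0 : ℝ) < k := by linarith
  have hd0 : (0 : ℝ) < d := by exact_mod_cast hd
  have hpow : Tendsto (fun m : ℕ => (k : ℝ) ^ m) atTop atTop := tendsto_pow_atTop_atTop_of_one_lt hk1
  have hx : Tendsto (fun m : ℕ => (d : ℝ) * (k : ℝ) ^ m) atTop atTop := hpow.const_mul_atTop hd0
  have hy : Tendsto (fun m : ℕ => ((d : ℝ) + 1) * (k : ℝ) ^ m) atTop atTop :=
    hpow.const_mul_atTop (by linarith)
  have hxy : ∀ m : ℕ, (d : ℝ) * (k : ℝ) ^ m ≤ ((d : ℝ) + 1) * (k : ℝ) ^ m := fun m =>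
    mul_le_mul_of_nonneg_right (by linarith) (by positivity)
  have hyx : ∀ m : ℕ, ((d : ℝ) + 1) * (k : ℝ) ^ m ≤ (d : ℝ) * (k : ℝ) ^ (m + 1) := by
    intro m
    have h1 : (d : ℝ) + 1 ≤ d * k := by
      have h2 : (2 : ℝ) ≤ k := by exact_mod_cast hk
      have h3 : (1 : ℝ) ≤ d := by exact_mod_cast hd
      nlinarith
    calc ((d : ℝ) + 1) * (k : ℝ) ^ m ≤ (d * k) * (k : ℝ) ^ m := by gcongr
      _ = (d : ℝ) * (k : ℝ) ^ (m + 1) := by ring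
  have hat : Tendsto (fun m : ℕ => Nf ((d : ℝ) * (k : ℝ) ^ m)) atTop atTop := hNt.comp hx
  have hlogk : 0 < Real.log k := Real.log_pos hk1
  have hl₁ : Tendsto (fun m : ℕ => F (Nf (((d : ℝ) + 1) * (k : ℝ) ^ m))
      - F (Nf ((d : ℝ) * (k : ℝ) ^ m))) atTop (𝓝 (Real.log (d + 1) - Real.log d)) := by
    have h1 := ((hFN.comp hy).sub (hFN.comp hx)).add_const (Real.log (d + 1) - Real.log d)
    rw [sub_zero, zero_add] at h1
    refine h1.congr fun m => ?_
    simp only [Function.comp]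
    rw [Real.log_mul (by positivity) (by positivity), Real.log_mul (by positivity) (by positivity)]
    ring
  have hl₂ : Tendsto (fun m : ℕ => F (Nf ((d : ℝ) * (k : ℝ) ^ (m + 1)))
      - F (Nf ((d : ℝ) * (k : ℝ) ^ m))) atTop (𝓝 (Real.log k)) := by
    have h0 := hFN.comp hx
    have h1 := (((tendsto_add_atTop_iff_nat 1).2 h0).sub h0).add_const (Real.log k)
    rw [sub_zero, zero_add] at h1
    refine h1.congr fun m => ?_
    simp only [Function.comp]
    rw [Real.log_mul (by positivity) (by positivity), Real.log_mul (by positivity) (by positivity),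
      Real.log_pow, Real.log_pow]
    push_cast
    ring
  have hfin := hasNatDensity_of_blocks {n | BeginsWith k d (p n)}
    (fun m => Nf ((d : ℝ) * (k : ℝ) ^ m)) (fun m => Nf (((d : ℝ) + 1) * (k : ℝ) ^ m))
    (fun m => hNmono (hxy m)) (fun m => hNmono (hyx m))
    (fun n => by
      simp only [Set.mem_ofPred_eq, BeginsWith, abs_of_pos (hpos n), hN, ← not_le])
    hat _ _ (div_pos hlogk hγ)
    (tendsto_sqrt_sub_sqrt F γ hγ hF _ _ (fun m => hNmono (hxy m)) hat _ hl₁)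
    (tendsto_sqrt_sub_sqrt F γ hγ hF _ _ (fun m => hNmono ((hxy m).trans (hyx m))) hat _ hl₂)
  rw [div_div_div_cancel_right₀ hγ.ne'] at hfin
  rwa [Real.logb, Real.logb, ← sub_div]

/-! ### The logarithm of the partition function -/

theorem sqrt_mul_log_one_add (u : ℕ → ℝ) (L : ℝ) (hu : ∀ᶠ n in atTop, 0 ≤ u n)
    (hu0 : Tendsto u atTop (𝓝 0)) (h : Tendsto (fun n : ℕ => √n * u n) atTop (𝓝 L)) :
    Tendsto (fun n : ℕ => √n * Real.log (1 + u n)) atTop (𝓝 L) := by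
  have h1 := h.div (hu0.const_add 1) (by norm_num)
  rw [add_zero, div_one] at h1
  refine tendsto_of_tendsto_of_tendsto_of_le_of_le' h1 h ?_ ?_
  · filter_upwards [hu] with n hn
    simp only [Pi.div_apply]
    rw [mul_div_assoc]
    refine mul_le_mul_of_nonneg_left ?_ (Real.sqrt_nonneg _)
    have h2 := Real.one_sub_inv_le_log_of_pos (show 0 < 1 + u n by linarith)
    refine le_trans (le_of_eq ?_) h2
    have : 1 + u n ≠ 0 := by linarith
    field_simp
    ring
  · filter_upwards [hu] with n hn
    refine mul_le_mul_of_nonneg_left ?_ (Real.sqrt_nonneg _)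
    have := Real.log_le_sub_one_of_pos (show 0 < 1 + u n by linarith)
    linarith

/-- The increments of `F(n) = log Q(n) - log n + log b` are
`log (1 + D(n) / Q(n)) - log (1 + 1 / n)`, of which the second term is negligible on the scale
`1 / √n`. -/
theorem log_doubleSum_increment (p : ℕ → ℝ) (b : ℝ) (hmono : Monotone p) (hpos : ∀ n, 0 < p n)
    (h : Tendsto (fun n : ℕ => (n : ℝ) * p n / doubleSum p n) atTop (𝓝 b)) :
    Tendsto (fun n : ℕ => ((Real.log (doubleSum p (n + 1)) - Real.log (n + 1 : ℕ) + Real.log b)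
      - (Real.log (doubleSum p n) - Real.log n + Real.log b)) / (√(n + 1 : ℕ) - √n))
      atTop (𝓝 (2 * √b)) := by
  have hinv : Tendsto (fun N : ℕ => (1 : ℝ) / N) atTop (𝓝 0) :=
    tendsto_one_div_atTop_nhds_zero_nat
  have hsq : Tendsto (fun n : ℕ => √n) atTop atTop :=
    Real.tendsto_sqrt_atTop.comp tendsto_natCast_atTop_atTop
  have h1 := sqrt_mul_log_one_add _ _ (by
      filter_upwards [eventually_ge_atTop 1] with n hn
      obtain ⟨m, rfl⟩ := Nat.exists_eq_add_of_le' hn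
      exact (div_pos (partialSum_pos hpos _) (doubleSum_pos hpos m)).le)
    (partialSum_div_doubleSum_tendsto_zero b hmono hpos h)
    (sqrt_mul_partialSum_div_doubleSum b hmono hpos h)
  have h2 := sqrt_mul_log_one_add (fun n : ℕ => (1 : ℝ) / n) 0
    (Eventually.of_forall fun n => by positivity) hinv (by
      refine hsq.inv_tendsto_atTop.congr' ?_
      refine Eventually.of_forall fun n => ?_
      simp only [Pi.inv_apply]
      rw [mul_one_div, Real.sqrt_div_self])
  have h3 : Tendsto (fun n : ℕ => √(1 + 1 / (n : ℝ)) + 1) atTop (𝓝 2) := by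
    have := (hinv.const_add 1).sqrt.add_const 1
    rw [add_zero, Real.sqrt_one] at this
    convert this using 2; norm_num
  have h4 := h3.mul (h1.sub h2)
  rw [sub_zero] at h4
  refine h4.congr' ?_
  filter_upwards [eventually_ge_atTop 1] with n hn
  have hn' : (0 : ℝ) < n := by exact_mod_cast hn
  obtain ⟨m, hm⟩ := Nat.exists_eq_add_of_le' hn
  have hQ : 0 < doubleSum p n := hm ▸ doubleSum_pos hpos m
  have hQ1 := doubleSum_pos hpos n
  have e1 : 1 + partialSum p n / doubleSum p n = doubleSum p (n + 1) / doubleSum p n := by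
    rw [doubleSum_succ]; field_simp
  have e2 : 1 + 1 / (n : ℝ) = ((n + 1 : ℕ) : ℝ) / n := by push_cast; field_simp
  have hlt : 0 < √(n + 1 : ℕ) - √n :=
    sub_pos.2 (Real.sqrt_lt_sqrt (by positivity) (by push_cast; linarith))
  rw [e1, e2, Real.log_div hQ1.ne' hQ.ne', Real.log_div (by positivity) hn'.ne',
    Real.sqrt_div (by positivity), eq_div_iff hlt.ne']
  have hs : 0 < √(n : ℝ) := Real.sqrt_pos.2 hn'
  have s1 := Real.sq_sqrt hn'.le
  have s2 := Real.sq_sqrt (Nat.cast_nonneg (α := ℝ) (n + 1))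
  field_simp
  push_cast at s1 s2 ⊢
  linear_combination ((Real.log (doubleSum p (n + 1)) - Real.log (doubleSum p n))
    - (Real.log (n + 1) - Real.log n)) * (s2 - s1)

/-- The partition function `p(n)` is Benford. -/
theorem partition_isBenford :
    IsBenford (fun n => (Fintype.card (Nat.Partition n) : ℝ)) := by
  obtain ⟨b, hb, havg⟩ := sigma_average
  set p : ℕ → ℝ := fun n => (Fintype.card (Nat.Partition n) : ℝ) with hp
  have hmono : Monotone p := fun m n h => Nat.cast_le.2 (card_partition_mono h)
  have hpos : ∀ n, 0 < p n := fun n => Nat.cast_pos.2 Fintype.card_pos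
  have hlim := tendsto_mul_div_doubleSum p
    (fun i => (ArithmeticFunction.sigma 1 (i + 1) : ℝ)) b hb hmono hpos
    (fun i => by
      rw [ArithmeticFunction.sigma_one_apply]
      exact_mod_cast Finset.single_le_sum (f := fun d : ℕ => d) (fun _ _ => Nat.zero_le _)
        (Nat.mem_divisors_self (i + 1) (Nat.succ_ne_zero i)))
    (fun n => by
      have h := congrArg (Nat.cast (R := ℝ)) (partition_recurrence n)
      push_cast at h
      rw [hp, h, sum_Ioc_zero_eq_sum_range]
      refine Finset.sum_congr rfl fun i _ => ?_
      rw [Nat.sub_sub, add_comm 1 i])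
    (by
      refine havg.congr fun N => ?_
      rw [sum_Ioc_zero_eq_sum_range])
  refine isBenford_of_regular p
    (fun n => Real.log (doubleSum p n) - Real.log n + Real.log b) (2 * √b)
    (by positivity) hmono hpos ?_ (log_doubleSum_increment p b hmono hpos hlim)
  have h1 := (hlim.log hb.ne').sub_const (Real.log b)
  rw [sub_self] at h1
  refine h1.congr' ?_
  filter_upwards [eventually_ge_atTop 1] with n hn
  obtain ⟨m, rfl⟩ := Nat.exists_eq_add_of_le' hn
  have hQ := doubleSum_pos hpos m
  have hn' : (0 : ℝ) < ((m + 1 : ℕ) : ℝ) := by positivity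
  rw [Real.log_div (mul_pos hn' (hpos _)).ne' hQ.ne', Real.log_mul hn'.ne' (hpos _).ne']
  ring
end

section
/- For every integer s ≥ 2, the sequence b_s(n) counting the s-regular partitions of n is Benford: for every integer base k ≥ 2 and every positive integer d, the natural density of the set of n for which the base-k expansion of b_s(n) begins with the digit string of d equals log_k(d+1) − log_k(d). -/
/-!
The generating function of the `s`-regular partitions gives, after logarithmic differentiation, the
recurrence `n b(n) = ∑_{k=1}^n σ(k) b(n-k)`, where `σ(k)` is the sum of the divisors of `k` not
divisible by `s` (`mul_numRegularPartitions`, proved here by double counting). The proof of the Benford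
property uses only this recurrence, the monotonicity of `b`, and the estimate
`∑_{k ≤ N} σ(k) ~ γ N²` with `γ > 0` (`tendsto_sum_regSigma`); no asymptotic formula for `b` itself is
needed.

Since `b` is monotone, Abel summation allows `σ(k)` to be replaced in the recurrence by its average
order `2γk`. Hence `n b(n) ~ 2γ W(n)`, where `W` is the double summatory function of `b`
(`tendsto_ratio`). So `W` almost satisfies the second-order equation `W'' = 2γ W / x`, and
`y(n) = (W(n+1) - W(n)) / W(n)` satisfies a discrete Riccati equation `y' = -y² + 2γ/x`, from which
`y(n) ~ √(2γ/n)` (`riccati`). Therefore `log b(n) = f(n) + o(1)` with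
`f(n+1) - f(n) ~ √(2γ) / √n`.

A sequence with such increments is equidistributed modulo `1`. The first-moment statement that suffices
is that `{f(n) - α}` has mean `1/2` for every `α` (`tendsto_avg_fract_of_close`), because the indicator
of a leading digit string is a constant plus the difference of two such fractional parts
(`isBenford_of_avg`). The first moment is computed by summation by parts from the primitive
`({x}² - {x}) / 2` of `{x} - 1/2`, whose one-sided quadratic bound (`fract_sq_semiconcave`) makes the
jumps harmless.
-/

open Filter Topology

/-- The number of `s`-regular partitions of `n` (partitions with no part
divisible by `s`). -/
noncomputable def numRegularPartitions (s n : ℕ) : ℕ :=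
  Nat.card {p : Nat.Partition n // ∀ i ∈ p.parts, ¬ s ∣ i}

/-! ### Equidistribution of slowly varying sequences -/

/-- The periodic function `Ψ x = ({x}² - {x}) / 2` is a primitive of `{x} - 1/2`, and its kinks at
the integers point upwards, so that `Ψ (x + h) ≤ Ψ x + h ({x} - 1/2) + h² / 2` holds for all `h`,
however many integers separate `x` from `x + h`. -/
theorem fract_sq_semiconcave (x h : ℝ) :
    (Int.fract (x + h) ^ 2 - Int.fract (x + h)) / 2 ≤
      (Int.fract x ^ 2 - Int.fract x) / 2 + h * (Int.fract x - 1 / 2) + h ^ 2 / 2 := by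
  obtain ⟨m, hm⟩ : ∃ m : ℤ, Int.fract x + h = Int.fract (x + h) + m :=
    ⟨⌊x + h⌋ - ⌊x⌋, by push_cast; simp only [Int.fract]; ring⟩
  have h0 := Int.fract_nonneg (x + h)
  have h1 := (Int.fract_lt_one (x + h)).le
  generalize Int.fract (x + h) = v at *
  have key : 0 ≤ (m : ℝ) * (m - 1 + 2 * v) := by
    rcases le_or_gt m 0 with hm0 | hm0
    · rcases hm0.lt_or_eq with hlt | rfl
      · have : (m : ℝ) ≤ -1 := by exact_mod_cast Int.le_sub_one_of_lt hlt
        nlinarith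
      · simp
    · have : (1 : ℝ) ≤ m := by exact_mod_cast hm0
      apply mul_nonneg <;> linarith
  obtain rfl : h = v + m - Int.fract x := by linarith
  nlinarith

/-- If `f (n + 1) - f n ~ c / √n` with `c > 0`, then the fractional parts of `f n` have mean `1/2`.
By `fract_sq_semiconcave`, applied forwards from `f n` and backwards from `f (n + 1)`, the term
`c ({f n} - 1/2)` is bounded on both sides by increments of `√n Ψ` up to `o(1)`; these sum to
`O(√N)` by partial summation. -/
theorem tendsto_avg_fract {f : ℕ → ℝ} {c : ℝ} (hc : 0 < c)
    (hf : Tendsto (fun n : ℕ => √n * (f (n + 1) - f n)) atTop (𝓝 c)) :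
    Tendsto (fun N : ℕ => (N : ℝ)⁻¹ * ∑ n ∈ Finset.range N, (Int.fract (f n) - 1 / 2))
      atTop (𝓝 0) := by
  set D : ℕ → ℝ := fun n => f (n + 1) - f n with hD
  set P : ℕ → ℝ := fun n => (Int.fract (f n) ^ 2 - Int.fract (f n)) / 2 with hP
  set u : ℕ → ℝ := fun n => Int.fract (f n) - 1 / 2 with hu
  have hu1 : ∀ n, |u n| ≤ 1 / 2 := fun n => by
    have h0 := Int.fract_nonneg (f n)
    have h1 := (Int.fract_lt_one (f n)).le
    rw [abs_le]; constructor <;> simp only [hu] <;> linarith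
  have hP0 : ∀ n, P n ≤ 0 := fun n => by
    have h0 := Int.fract_nonneg (f n)
    have h1 := (Int.fract_lt_one (f n)).le
    simp only [hP]; nlinarith
  have hP1 : ∀ n, -1 ≤ P n := fun n => by
    have h0 := Int.fract_nonneg (f n)
    have h1 := (Int.fract_lt_one (f n)).le
    simp only [hP]; nlinarith
  set e : ℕ → ℝ := fun n => √n * D n ^ 2 / 2 + |√n * D n - c| / 2 with he
  have hsq : Tendsto (fun n : ℕ => √(n : ℝ)) atTop atTop :=
    Real.tendsto_sqrt_atTop.comp tendsto_natCast_atTop_atTop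
  have hD0 : Tendsto D atTop (𝓝 0) := by
    have := hf.mul (tendsto_inv_atTop_zero.comp hsq)
    rw [mul_zero] at this
    refine this.congr' ?_
    filter_upwards [eventually_gt_atTop 0] with n hn
    have : (0 : ℝ) < √n := Real.sqrt_pos.2 (by exact_mod_cast hn)
    simp only [Function.comp, hD]; field_simp
  have he0 : Tendsto e atTop (𝓝 0) := by
    have h1 := ((hf.mul hD0).div_const 2).add (((hf.sub_const c).abs).div_const 2)
    simp only [mul_zero, sub_self, abs_zero, zero_div, add_zero] at h1
    refine h1.congr fun n => ?_
    simp only [he, hD]; ring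
  have hlo : ∀ n : ℕ, √n * (P (n + 1) - P n) - e n ≤ c * u n := fun n => by
    have h := fract_sq_semiconcave (f n) (D n)
    have h3 : f n + D n = f (n + 1) := by simp [hD]
    rw [h3] at h
    have hs : 0 ≤ √(n : ℝ) := Real.sqrt_nonneg _
    have h4 := mul_le_mul_of_nonneg_left h hs
    have h5 : (√n * D n - c) * u n ≤ |√n * D n - c| / 2 := by
      calc _ ≤ |(√n * D n - c) * u n| := le_abs_self _
        _ = |√n * D n - c| * |u n| := abs_mul _ _
        _ ≤ |√n * D n - c| * (1 / 2) := by gcongr; exact hu1 n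
        _ = _ := by ring
    simp only [he, hP, hu] at *
    nlinarith
  have hhi : ∀ n : ℕ, c * u (n + 1) ≤ √n * (P (n + 1) - P n) + e n := fun n => by
    have h := fract_sq_semiconcave (f (n + 1)) (-D n)
    have h3 : f (n + 1) + -D n = f n := by simp [hD]
    rw [h3] at h
    have hs : 0 ≤ √(n : ℝ) := Real.sqrt_nonneg _
    have h4 := mul_le_mul_of_nonneg_left h hs
    have h5 : -((√n * D n - c) * u (n + 1)) ≤ |√n * D n - c| / 2 := by
      calc _ ≤ |(√n * D n - c) * u (n + 1)| := neg_le_abs _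
        _ = |√n * D n - c| * |u (n + 1)| := abs_mul _ _
        _ ≤ |√n * D n - c| * (1 / 2) := by gcongr; exact hu1 _
        _ = _ := by ring
    simp only [he, hP, hu] at *
    nlinarith
  -- Abel summation: since `-1 ≤ P ≤ 0`, subtracting the sum of `(√(n+1) - √n) P (n+1)` from the
  -- boundary term `√N P N` adds between `0` and `√N`
  have hT : ∀ N : ℕ, -√N ≤ ∑ n ∈ Finset.range N, √n * (P (n + 1) - P n) ∧
      ∑ n ∈ Finset.range N, √n * (P (n + 1) - P n) ≤ √N * P N + √N := by
    intro N
    suffices H : √N * P N ≤ ∑ n ∈ Finset.range N, √n * (P (n + 1) - P n) ∧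
      ∑ n ∈ Finset.range N, √n * (P (n + 1) - P n) ≤ √N * P N + √N by
      refine ⟨le_trans ?_ H.1, H.2⟩
      nlinarith [Real.sqrt_nonneg (N : ℝ), hP1 N]
    induction N with
    | zero => simp
    | succ N ih =>
      rw [Finset.sum_range_succ]
      have h1 : √(N : ℝ) ≤ √((N + 1 : ℕ) : ℝ) := Real.sqrt_le_sqrt (by push_cast; linarith)
      have h2 := hP0 (N + 1)
      have h3 := hP1 (N + 1)
      constructor <;> nlinarith
  have hce := he0.cesaro
  have hsN : Tendsto (fun N : ℕ => (N : ℝ)⁻¹ * √N) atTop (𝓝 0) := by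
    refine (tendsto_inv_atTop_zero.comp hsq).congr fun n => ?_
    rcases Nat.eq_zero_or_pos n with rfl | hn
    · simp
    · have hn' : (0 : ℝ) < n := by exact_mod_cast hn
      have : 0 < √(n : ℝ) := Real.sqrt_pos.2 hn'
      simp only [Function.comp]
      rw [inv_mul_eq_div, ← one_div, div_eq_div_iff this.ne' hn'.ne', one_mul,
        Real.mul_self_sqrt hn'.le]
  have hiN : Tendsto (fun N : ℕ => (N : ℝ)⁻¹) atTop (𝓝 0) :=
    tendsto_inv_atTop_zero.comp tendsto_natCast_atTop_atTop
  refine tendsto_of_tendsto_of_tendsto_of_le_of_le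
    (g := fun N : ℕ => c⁻¹ * (-((N : ℝ)⁻¹ * √N) - (N : ℝ)⁻¹ * ∑ n ∈ Finset.range N, e n))
    (h := fun N : ℕ => c⁻¹ * ((N : ℝ)⁻¹ * √N + (N : ℝ)⁻¹ * ∑ n ∈ Finset.range N, e n)
      + (N : ℝ)⁻¹) ?_ ?_ ?_ ?_
  · simpa using (hsN.neg.sub hce).const_mul c⁻¹
  · simpa using ((hsN.add hce).const_mul c⁻¹).add hiN
  · intro N
    have h1 := Finset.sum_le_sum fun n (_ : n ∈ Finset.range N) => hlo n
    rw [Finset.sum_sub_distrib, ← Finset.mul_sum] at h1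
    have h2 := (hT N).1
    have h3 : (0 : ℝ) ≤ (N : ℝ)⁻¹ := by positivity
    calc c⁻¹ * (-((N : ℝ)⁻¹ * √N) - (N : ℝ)⁻¹ * ∑ n ∈ Finset.range N, e n)
        = (N : ℝ)⁻¹ * (c⁻¹ * (-√N - ∑ n ∈ Finset.range N, e n)) := by ring
      _ ≤ (N : ℝ)⁻¹ * (c⁻¹ * (c * ∑ n ∈ Finset.range N, u n)) := by gcongr; linarith
      _ = _ := by rw [inv_mul_cancel_left₀ hc.ne']
  · intro N
    have h1 := Finset.sum_le_sum fun n (_ : n ∈ Finset.range N) => hhi n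
    rw [Finset.sum_add_distrib, ← Finset.mul_sum] at h1
    have h2 := (hT N).2
    have h3 : (0 : ℝ) ≤ (N : ℝ)⁻¹ := by positivity
    have h4 : ∑ n ∈ Finset.range N, u n = ∑ n ∈ Finset.range N, u (n + 1) + u 0 - u N := by
      have := Finset.sum_range_succ u N
      rw [Finset.sum_range_succ'] at this
      linarith
    have h5 := abs_le.1 (hu1 0)
    have h6 := abs_le.1 (hu1 N)
    have h7 : √N * P N ≤ 0 := mul_nonpos_of_nonneg_of_nonpos (Real.sqrt_nonneg _) (hP0 N)
    calc (N : ℝ)⁻¹ * ∑ n ∈ Finset.range N, u n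
        ≤ (N : ℝ)⁻¹ * (∑ n ∈ Finset.range N, u (n + 1) + 1) := by gcongr; linarith
      _ = (N : ℝ)⁻¹ * (c⁻¹ * (c * ∑ n ∈ Finset.range N, u (n + 1)) + 1) := by
        rw [inv_mul_cancel_left₀ hc.ne']
      _ ≤ (N : ℝ)⁻¹ * (c⁻¹ * (√N + ∑ n ∈ Finset.range N, e n) + 1) := by gcongr; linarith
      _ = _ := by ring

/-- The conclusion of `tendsto_avg_fract` for every translate of a sequence `x = f + o(1)`. Replacing
`f` by `f ± η` makes `⌊x n - γ⌋` comparable with `⌊f n - γ ± η⌋` in one fixed direction, so the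
jumps of the fractional part do no harm. -/
theorem tendsto_avg_fract_of_close {f x : ℕ → ℝ} {c : ℝ} (hc : 0 < c)
    (hf : Tendsto (fun n : ℕ => √n * (f (n + 1) - f n)) atTop (𝓝 c))
    (hx : Tendsto (fun n => x n - f n) atTop (𝓝 0)) (γ : ℝ) :
    Tendsto (fun N : ℕ => (N : ℝ)⁻¹ * ∑ n ∈ Finset.range N, (Int.fract (x n - γ) - 1 / 2))
      atTop (𝓝 0) := by
  rw [Metric.tendsto_atTop']
  intro ε hε
  set η := ε / 4 with hη
  have hηpos : 0 < η := by positivity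
  -- `i` marks the finitely many `n` at which `x n` is not yet within `η` of `f n`
  set i : ℕ → ℝ := fun n => if |x n - f n| ≤ η then 0 else 1 with hi
  have hi0 : Tendsto i atTop (𝓝 0) := by
    refine tendsto_const_nhds.congr' ?_
    filter_upwards [(tendsto_order.1 (by simpa using hx.abs)).2 η hηpos] with n hn
    simp [hi, hn.le]
  have key : ∀ n, Int.fract (f n - γ + η) - 1 / 2 - 2 * η - i n ≤ Int.fract (x n - γ) - 1 / 2 ∧
      Int.fract (x n - γ) - 1 / 2 ≤ Int.fract (f n - γ - η) - 1 / 2 + 2 * η + i n := by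
    intro n
    by_cases h : |x n - f n| ≤ η
    · simp only [hi, h, if_true]
      rw [abs_le] at h
      have h1 : ⌊x n - γ⌋ ≤ ⌊f n - γ + η⌋ := Int.floor_le_floor (by linarith)
      have h2 : ⌊f n - γ - η⌋ ≤ ⌊x n - γ⌋ := Int.floor_le_floor (by linarith)
      have h1' : (⌊x n - γ⌋ : ℝ) ≤ ⌊f n - γ + η⌋ := by exact_mod_cast h1
      have h2' : (⌊f n - γ - η⌋ : ℝ) ≤ ⌊x n - γ⌋ := by exact_mod_cast h2
      simp only [Int.fract]
      constructor <;> linarith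
    · simp only [hi, h, if_false]
      have h0 := Int.fract_nonneg (x n - γ)
      have h1 := (Int.fract_lt_one (x n - γ)).le
      have h2 := Int.fract_nonneg (f n - γ - η)
      have h3 := (Int.fract_lt_one (f n - γ + η)).le
      constructor <;> linarith
  have hshift : ∀ t : ℝ, Tendsto (fun N : ℕ => (N : ℝ)⁻¹ *
      ∑ n ∈ Finset.range N, (Int.fract (f n + t) - 1 / 2)) atTop (𝓝 0) := fun t =>
    tendsto_avg_fract (f := fun n => f n + t) hc (by simpa using hf)
  have hup := (hshift (-γ - η)).add hi0.cesaro
  have hlo := (hshift (-γ + η)).sub hi0.cesaro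
  rw [add_zero] at hup
  rw [sub_zero] at hlo
  have e1 := (tendsto_order.1 hup).2 η hηpos
  have e2 := (tendsto_order.1 hlo).1 (-η) (by linarith)
  obtain ⟨N₀, hN₀⟩ := eventually_atTop.1 (e1.and (e2.and (eventually_gt_atTop 0)))
  refine ⟨N₀, fun N hN => ?_⟩
  obtain ⟨a1, a2, a3⟩ := hN₀ N hN.le
  have hNp : (0 : ℝ) < N := by exact_mod_cast a3
  have s1 := Finset.sum_le_sum fun n (_ : n ∈ Finset.range N) => (key n).1
  have s2 := Finset.sum_le_sum fun n (_ : n ∈ Finset.range N) => (key n).2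
  rw [Finset.sum_sub_distrib, Finset.sum_sub_distrib, Finset.sum_const, Finset.card_range,
    nsmul_eq_mul] at s1
  rw [Finset.sum_add_distrib, Finset.sum_add_distrib, Finset.sum_const, Finset.card_range,
    nsmul_eq_mul] at s2
  have t1 := mul_le_mul_of_nonneg_left s1 (inv_pos.2 hNp).le
  have t2 := mul_le_mul_of_nonneg_left s2 (inv_pos.2 hNp).le
  rw [mul_sub, mul_sub, inv_mul_cancel_left₀ hNp.ne'] at t1
  rw [mul_add, mul_add, inv_mul_cancel_left₀ hNp.ne'] at t2
  have r1 : ∀ n, f n - γ + η = f n + (-γ + η) := fun n => by ring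
  have r2 : ∀ n, f n - γ - η = f n + (-γ - η) := fun n => by ring
  simp only [r1] at t1
  simp only [r2] at t2
  rw [Real.dist_eq, sub_zero, abs_lt]
  constructor <;> linarith

/-! ### A discrete Riccati equation -/

/-- A sequence bounded below cannot decrease by `κ / n` at every step, as the harmonic series diverges. -/
theorem not_forall_sub_ge {u : ℕ → ℝ} {κ L : ℝ} (hκ : 0 < κ) {N : ℕ}
    (hL : ∀ n, N ≤ n → L ≤ u n) (h : ∀ n : ℕ, N ≤ n → κ / n ≤ u n - u (n + 1)) : False := by
  have hsum : ∀ M, N ≤ M → κ * (∑ n ∈ Finset.range M, 1 / (n : ℝ) -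
      ∑ n ∈ Finset.range N, 1 / (n : ℝ)) ≤ u N - u M := by
    intro M hM
    induction M, hM using Nat.le_induction with
    | base => simp
    | succ M hM ih =>
      rw [Finset.sum_range_succ]
      have := h M hM
      rw [div_eq_mul_one_div] at this
      linarith
  have hdiv := (not_summable_iff_tendsto_nat_atTop_of_nonneg
    (fun n : ℕ => by positivity)).1 Real.not_summable_one_div_natCast
  obtain ⟨M, hM, hNM⟩ := ((hdiv.eventually_gt_atTop
    ((u N - L) / κ + ∑ n ∈ Finset.range N, 1 / (n : ℝ))).and (eventually_ge_atTop N)).exists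
  have h1 : (u N - L) / κ < ∑ n ∈ Finset.range M, 1 / (n : ℝ) -
      ∑ n ∈ Finset.range N, 1 / (n : ℝ) := by linarith
  rw [div_lt_iff₀ hκ] at h1
  linarith [hsum M hNM, hL M hNM]

/-- With `y = a / √n`, the sequence `a / √n` solves `y (n + 1) = y n / (1 + y n) + ρ n / n` for some
`ρ n → a²`; moreover the decrement `y - y / (1 + y)` is asymptotic to `a² / n`. -/
theorem riccati_step (a : ℝ) (ha : 0 < a) :
    Tendsto (fun n : ℕ => (n : ℝ) * (a / √((n + 1 : ℕ) : ℝ) - a / √n / (1 + a / √n)))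
      atTop (𝓝 (a ^ 2)) ∧
    Tendsto (fun n : ℕ => (n : ℝ) * (a / √n - a / √n / (1 + a / √n))) atTop (𝓝 (a ^ 2)) := by
  have hsq : Tendsto (fun n : ℕ => √(n : ℝ)) atTop atTop :=
    Real.tendsto_sqrt_atTop.comp tendsto_natCast_atTop_atTop
  have hr : Tendsto (fun n : ℕ => (√(n : ℝ))⁻¹) atTop (𝓝 0) := tendsto_inv_atTop_zero.comp hsq
  have hr2 := hr.pow 2
  have h2 : Tendsto (fun n : ℕ => (n : ℝ) * (a / √n - a / √n / (1 + a / √n))) atTop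
      (𝓝 (a ^ 2)) := by
    have : Tendsto (fun n : ℕ => a ^ 2 / (1 + a * (√(n : ℝ))⁻¹)) atTop (𝓝 (a ^ 2 / (1 + a * 0))) :=
      Tendsto.div tendsto_const_nhds ((hr.const_mul a).const_add 1) (by simp)
    rw [mul_zero, add_zero, div_one] at this
    refine this.congr' ?_
    filter_upwards [eventually_gt_atTop 0] with n hn
    have hn' : (0 : ℝ) < n := by exact_mod_cast hn
    have hp : 0 < √(n : ℝ) := Real.sqrt_pos.2 hn'
    nth_rewrite 2 [← Real.sq_sqrt hn'.le]
    field_simp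
    ring
  refine ⟨?_, h2⟩
  -- `n (1/√n - 1/√(n+1)) = O(1/√n)`
  have h3 : Tendsto (fun n : ℕ => (n : ℝ) * (a / √n - a / √((n + 1 : ℕ) : ℝ))) atTop (𝓝 0) := by
    refine squeeze_zero' ?_ ?_ (by simpa using hr.const_mul a)
    · filter_upwards [eventually_gt_atTop 0] with n hn
      have hn' : (0 : ℝ) < n := by exact_mod_cast hn
      have hp : 0 < √(n : ℝ) := Real.sqrt_pos.2 hn'
      have h1 : √(n : ℝ) ≤ √((n + 1 : ℕ) : ℝ) := Real.sqrt_le_sqrt (by push_cast; linarith)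
      have : a / √((n + 1 : ℕ) : ℝ) ≤ a / √n := by gcongr
      exact mul_nonneg hn'.le (by linarith)
    · filter_upwards [eventually_gt_atTop 0] with n hn
      have hn' : (0 : ℝ) < n := by exact_mod_cast hn
      have hp : 0 < √(n : ℝ) := Real.sqrt_pos.2 hn'
      have h1 : √(n : ℝ) ≤ √((n + 1 : ℕ) : ℝ) := Real.sqrt_le_sqrt (by push_cast; linarith)
      have e1 := Real.sq_sqrt hn'.le
      have e2 : √((n + 1 : ℕ) : ℝ) ^ 2 = n + 1 := by
        rw [Real.sq_sqrt (by positivity)]; push_cast; ring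
      have e3 : (n : ℝ) * (a / √n - a / √((n + 1 : ℕ) : ℝ)) =
          √n ^ 2 * (a / √n - a / √((n + 1 : ℕ) : ℝ)) := by rw [e1]
      rw [e3]
      generalize √((n + 1 : ℕ) : ℝ) = q at *
      generalize √(n : ℝ) = p at *
      have hq : 0 < q := hp.trans_le h1
      have e4 : p * (q - p) ≤ 1 := by nlinarith
      have e5 : p ^ 2 * (a / p - a / q) = a * (p * (q - p)) * q⁻¹ := by field_simp
      rw [e5]
      have : q⁻¹ ≤ p⁻¹ := by gcongr
      calc a * (p * (q - p)) * q⁻¹ ≤ a * 1 * q⁻¹ := by gcongr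
        _ ≤ _ := by rw [mul_one]; gcongr
  have h4 := h2.sub h3
  rw [sub_zero] at h4
  exact h4.congr fun n => by ring

/-- A positive solution of `y (n + 1) = y n / (1 + y n) + ρ n / n` with `ρ → C` satisfies
`y n ~ √C / √n`. This is the discrete form of `y' = -y² + C / x`. If `a > √C`, the bound
`y n ≤ a / √n` propagates once it holds, since `t ↦ t / (1 + t)` is increasing; and it must hold at
some point, since as long as it fails `y` decreases by a multiple of `1 / n`. The lower bounds for
`a < √C` are symmetric. -/
theorem riccati {y ρ : ℕ → ℝ} {C : ℝ} (hC : 0 < C) (hy : ∀ n, 0 < n → 0 < y n)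
    (hρ : Tendsto ρ atTop (𝓝 C))
    (hrec : ∀ n : ℕ, 0 < n → y (n + 1) = y n / (1 + y n) + ρ n / n) :
    Tendsto (fun n : ℕ => √n * y n) atTop (𝓝 √C) := by
  have hsC : 0 < √C := Real.sqrt_pos.2 hC
  have mono : ∀ s t : ℝ, 0 ≤ s → s ≤ t → s / (1 + s) ≤ t / (1 + t) := fun s t hs hst => by
    rw [div_le_div_iff₀ (by linarith) (by linarith)]; nlinarith
  have mono2 : ∀ s t : ℝ, 0 ≤ s → s ≤ t → s - s / (1 + s) ≤ t - t / (1 + t) := fun s t hs hst => by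
    have e : ∀ r : ℝ, 0 ≤ r → r - r / (1 + r) = r * (r / (1 + r)) := fun r hr => by
      have : 1 + r ≠ 0 := by linarith
      field_simp; ring
    rw [e s hs, e t (hs.trans hst)]
    exact mul_le_mul hst (mono s t hs hst) (by positivity) (hs.trans hst)
  have upper : ∀ a : ℝ, √C < a → ∀ᶠ n : ℕ in atTop, y n ≤ a / √n := by
    intro a ha
    have ha0 : 0 < a := hsC.trans ha
    have hCa : C < a ^ 2 := by
      rw [← Real.sq_sqrt hC.le]; gcongr
    obtain ⟨c₁, h1, h1'⟩ := exists_between hCa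
    obtain ⟨c₂, h2, h2'⟩ := exists_between h1'
    obtain ⟨s1, s2⟩ := riccati_step a ha0
    obtain ⟨N, hN⟩ := eventually_atTop.1 ((((tendsto_order.1 hρ).2 c₁ h1).and
      ((tendsto_order.1 s1).1 c₂ h2')).and
      (((tendsto_order.1 s2).1 c₂ h2').and (eventually_gt_atTop 0)))
    have inv : ∀ n, N ≤ n → y n ≤ a / √n → y (n + 1) ≤ a / √((n + 1 : ℕ) : ℝ) := by
      intro n hn hyn
      obtain ⟨⟨p1, p2⟩, p3, p4⟩ := hN n hn
      have hn' : (0 : ℝ) < n := by exact_mod_cast p4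
      have := mono _ _ (hy n p4).le hyn
      rw [hrec n p4]
      have : ρ n / n ≤ a / √((n + 1 : ℕ) : ℝ) - a / √n / (1 + a / √n) := by
        rw [div_le_iff₀ hn']; linarith
      linarith
    obtain ⟨M, hM, hyM⟩ : ∃ M, N ≤ M ∧ y M ≤ a / √M := by
      by_contra! hcon
      refine not_forall_sub_ge (u := y) (κ := c₂ - c₁) (L := 0) (N := N) (by linarith)
        (fun n hn => (hy n (hN n hn).2.2).le) fun n hn => ?_
      obtain ⟨⟨p1, p2⟩, p3, p4⟩ := hN n hn
      have hn' : (0 : ℝ) < n := by exact_mod_cast p4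
      have q1 := mono2 _ _ (by positivity) (hcon n hn).le
      have q2 : c₂ / n ≤ a / √n - a / √n / (1 + a / √n) := by
        rw [div_le_iff₀ hn']; linarith
      have q3 : ρ n / n ≤ c₁ / n := by gcongr
      rw [hrec n p4, sub_div]
      linarith
    filter_upwards [eventually_ge_atTop M] with n hn
    induction n, hn using Nat.le_induction with
    | base => exact hyM
    | succ n hn ih => exact inv n (hM.trans hn) ih
  have lower : ∀ a : ℝ, 0 < a → a < √C → ∀ᶠ n : ℕ in atTop, a / √n ≤ y n := by
    intro a ha0 ha
    have hCa : a ^ 2 < C := by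
      rw [← Real.sq_sqrt hC.le]; gcongr
    obtain ⟨c₁, h1, h1'⟩ := exists_between hCa
    obtain ⟨c₂, h2, h2'⟩ := exists_between h1'
    obtain ⟨s1, s2⟩ := riccati_step a ha0
    obtain ⟨N, hN⟩ := eventually_atTop.1 ((((tendsto_order.1 hρ).1 c₂ h2').and
      ((tendsto_order.1 s1).2 c₁ h1)).and
      (((tendsto_order.1 s2).2 c₁ h1).and (eventually_gt_atTop 0)))
    have inv : ∀ n, N ≤ n → a / √n ≤ y n → a / √((n + 1 : ℕ) : ℝ) ≤ y (n + 1) := by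
      intro n hn hyn
      obtain ⟨⟨p1, p2⟩, p3, p4⟩ := hN n hn
      have hn' : (0 : ℝ) < n := by exact_mod_cast p4
      have := mono _ _ (by positivity) hyn
      rw [hrec n p4]
      have : a / √((n + 1 : ℕ) : ℝ) - a / √n / (1 + a / √n) ≤ ρ n / n := by
        rw [le_div_iff₀ hn']; linarith
      linarith
    obtain ⟨M, hM, hyM⟩ : ∃ M, N ≤ M ∧ a / √M ≤ y M := by
      by_contra! hcon
      refine not_forall_sub_ge (u := fun n => -y n) (κ := c₂ - c₁) (L := -a) (N := N) (by linarith)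
        (fun n hn => ?_) fun n hn => ?_
      · have p4 : 1 ≤ n := (hN n hn).2.2
        have : (1 : ℝ) ≤ √n := Real.one_le_sqrt.2 (by exact_mod_cast p4)
        have := div_le_self ha0.le this
        linarith [hcon n hn]
      obtain ⟨⟨p1, p2⟩, p3, p4⟩ := hN n hn
      have hn' : (0 : ℝ) < n := by exact_mod_cast p4
      have q1 := mono2 _ _ (hy n p4).le (hcon n hn).le
      have q2 : a / √n - a / √n / (1 + a / √n) ≤ c₁ / n := by
        rw [le_div_iff₀ hn']; linarith
      have q3 : c₂ / n ≤ ρ n / n := by gcongr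
      rw [hrec n p4, sub_div]
      linarith
    filter_upwards [eventually_ge_atTop M] with n hn
    induction n, hn using Nat.le_induction with
    | base => exact hyM
    | succ n hn ih => exact inv n (hM.trans hn) ih
  refine tendsto_order.2 ⟨fun a ha => ?_, fun a ha => ?_⟩
  · obtain ⟨a', h1, h2⟩ := exists_between (max_lt ha hsC)
    have h3 := (le_max_left _ _).trans_lt h1
    have h4 := (le_max_right _ _).trans_lt h1
    filter_upwards [lower a' h4 h2, eventually_gt_atTop 0] with n hn hn0
    have hp : 0 < √(n : ℝ) := Real.sqrt_pos.2 (by exact_mod_cast hn0)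
    rw [div_le_iff₀ hp] at hn
    linarith
  · obtain ⟨a', h1, h2⟩ := exists_between ha
    filter_upwards [upper a' h1, eventually_gt_atTop 0] with n hn hn0
    have hp : 0 < √(n : ℝ) := Real.sqrt_pos.2 (by exact_mod_cast hn0)
    rw [le_div_iff₀ hp] at hn
    linarith

/-! ### Averaging the coefficients of the recurrence -/

/-- Abel's inequality: a lower bound on all partial sums of `a` passes to the sums weighted by a
nonnegative nonincreasing `w`. -/
theorem sum_mul_antitone_ge {a w : ℕ → ℝ} {M : ℝ} {n : ℕ}
    (hA : ∀ k, -M ≤ ∑ i ∈ Finset.range k, a i) (hw0 : ∀ i, i < n → 0 ≤ w i)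
    (hw : ∀ i, i + 1 < n → w (i + 1) ≤ w i) (hn : 0 < n) :
    -M * w 0 ≤ ∑ i ∈ Finset.range n, a i * w i := by
  have key : ∀ m, m < n →
      (∑ i ∈ Finset.range (m + 1), a i + M) * w m - M * w 0 ≤
        ∑ i ∈ Finset.range (m + 1), a i * w i := by
    intro m
    induction m with
    | zero => intro _; simp; linarith
    | succ m ih =>
      intro hm
      rw [Finset.sum_range_succ _ (m + 1), Finset.sum_range_succ _ (m + 1)]
      have h1 := ih (by omega)
      have h2 := hw m hm
      have h3 := mul_le_mul_of_nonneg_left h2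
        (show 0 ≤ ∑ i ∈ Finset.range (m + 1), a i + M by linarith [hA (m + 1)])
      linarith
  have h := key (n - 1) (by omega)
  rw [Nat.sub_add_cancel hn] at h
  have := mul_nonneg (show 0 ≤ ∑ i ∈ Finset.range n, a i + M by linarith [hA n])
    (hw0 (n - 1) (by omega))
  linarith

theorem sum_sum_eq (b : ℕ → ℝ) (n : ℕ) :
    ∑ m ∈ Finset.range n, ∑ i ∈ Finset.range (m + 1), b i =
      ∑ i ∈ Finset.range n, ((i : ℝ) + 1) * b (n - 1 - i) := by
  induction n with
  | zero => simp
  | succ n ih =>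
    rw [Finset.sum_range_succ, ih, Finset.sum_range_succ' (fun i : ℕ => ((i : ℝ) + 1) * _),
      ← Finset.sum_range_reflect b (n + 1), Finset.sum_range_succ' (fun i => b (n + 1 - 1 - i)), ← add_assoc,
      ← Finset.sum_add_distrib]
    simp only [Nat.add_sub_cancel, Nat.cast_add, Nat.cast_one, Nat.sub_zero, Nat.cast_zero,
      zero_add, one_mul]
    congr 1
    refine Finset.sum_congr rfl fun i _ => ?_
    rw [show n - (i + 1) = n - 1 - i by omega]
    ring

/-- If the partial sums of `g` are asymptotic to those of `2 γ k`, then in the recurrence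
`n b n = ∑ g k * b (n - k)` with `b` monotone one may replace `g k` by `2 γ k`, up to a factor tending
to `1`. By Abel summation against the monotone weights `b (n - k)` the error is at most
`ε W n + M b n`, where `W n` is the denominator below, and the second term is `O(1 / n)` times the
main term. -/
theorem tendsto_ratio {b g : ℕ → ℝ} {γ : ℝ} (hγ : 0 < γ) (hb : ∀ n, 0 < b n) (hmono : Monotone b)
    (hG : Tendsto (fun N : ℕ => (∑ k ∈ Finset.range N, g (k + 1)) / (N : ℝ) ^ 2) atTop (𝓝 γ))
    (hrec : ∀ n : ℕ, n * b n = ∑ k ∈ Finset.range n, g (k + 1) * b (n - 1 - k)) :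
    Tendsto (fun n : ℕ => n * b n / ∑ i ∈ Finset.range n, ((i : ℝ) + 1) * b (n - 1 - i))
      atTop (𝓝 (2 * γ)) := by
  set W : ℕ → ℝ := fun n => ∑ i ∈ Finset.range n, ((i : ℝ) + 1) * b (n - 1 - i) with hW
  have hWpos : ∀ n, 0 < n → 0 < W n := fun n hn =>
    Finset.sum_pos (fun i _ => mul_pos (by positivity) (hb _)) ⟨0, by simpa using hn⟩
  have gauss : ∀ N : ℕ, ∑ k ∈ Finset.range N, ((k : ℝ) + 1) = N * (N + 1) / 2 := by
    intro N
    induction N with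
    | zero => simp
    | succ N ih => rw [Finset.sum_range_succ, ih]; push_cast; ring
  -- partial sums of `g k - 2 γ k` are dominated by those of `ε k`, up to a constant
  have hE : ∀ ε : ℝ, 0 < ε → ∃ M : ℝ, 0 ≤ M ∧ ∀ N : ℕ,
      |∑ k ∈ Finset.range N, (g (k + 1) - 2 * γ * ((k : ℝ) + 1))| ≤ ε * (N * (N + 1) / 2) + M := by
    intro ε hε
    have hiN : Tendsto (fun N : ℕ => (N : ℝ)⁻¹) atTop (𝓝 0) :=
      tendsto_inv_atTop_zero.comp tendsto_natCast_atTop_atTop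
    have h1 := ((hG.sub_const γ).sub (hiN.const_mul γ)).abs
    simp only [sub_self, mul_zero, abs_zero] at h1
    obtain ⟨N₀, hN₀⟩ := eventually_atTop.1
      (((tendsto_order.1 h1).2 (ε / 2) (by positivity)).and (eventually_gt_atTop 0))
    refine ⟨∑ N ∈ Finset.range N₀,
      |∑ k ∈ Finset.range N, (g (k + 1) - 2 * γ * ((k : ℝ) + 1))|, by positivity, fun N => ?_⟩
    rcases lt_or_ge N N₀ with hN | hN
    · have := Finset.single_le_sum (f := fun N : ℕ =>
        |∑ k ∈ Finset.range N, (g (k + 1) - 2 * γ * ((k : ℝ) + 1))|)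
        (fun _ _ => abs_nonneg _) (Finset.mem_range.2 hN)
      have h2 : 0 ≤ ε * (N * (N + 1) / 2) := by positivity
      linarith
    · obtain ⟨h2, h3⟩ := hN₀ N hN
      have hNp : (0 : ℝ) < N := by exact_mod_cast h3
      have h4 : ∑ k ∈ Finset.range N, (g (k + 1) - 2 * γ * ((k : ℝ) + 1)) = (N : ℝ) ^ 2 *
          ((∑ k ∈ Finset.range N, g (k + 1)) / (N : ℝ) ^ 2 - γ - γ * (N : ℝ)⁻¹) := by
        rw [Finset.sum_sub_distrib, ← Finset.mul_sum, gauss]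
        field_simp
        ring
      have h5 : 0 ≤ ∑ N ∈ Finset.range N₀,
        |∑ k ∈ Finset.range N, (g (k + 1) - 2 * γ * ((k : ℝ) + 1))| := by positivity
      rw [h4, abs_mul, abs_of_pos (by positivity : (0 : ℝ) < (N : ℝ) ^ 2)]
      have := mul_le_mul_of_nonneg_left h2.le (by positivity : (0 : ℝ) ≤ (N : ℝ) ^ 2)
      nlinarith
  have main : ∀ ε : ℝ, 0 < ε → ∃ M : ℝ, 0 ≤ M ∧ ∀ n, 0 < n →
      |n * b n / W n - 2 * γ| ≤ ε + M / n * (n * b n / W n) := by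
    intro ε hε
    obtain ⟨M, hM0, hM⟩ := hE ε hε
    refine ⟨M, hM0, fun n hn => ?_⟩
    have hn' : (0 : ℝ) < n := by exact_mod_cast hn
    have hsum : ∀ N : ℕ, ∑ k ∈ Finset.range N, ε * ((k : ℝ) + 1) = ε * (N * (N + 1) / 2) :=
      fun N => by rw [← Finset.mul_sum, gauss]
    have e0 : ∀ i, i + 1 < n → b (n - 1 - (i + 1)) ≤ b (n - 1 - i) := fun i _ =>
      hmono (by omega)
    have l1 := sum_mul_antitone_ge (a := fun k => ε * ((k : ℝ) + 1) -
      (g (k + 1) - 2 * γ * ((k : ℝ) + 1))) (w := fun i => b (n - 1 - i)) (M := M) (n := n)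
      (fun k => by
        rw [Finset.sum_sub_distrib, hsum]; linarith [(abs_le.1 (hM k)).2])
      (fun i _ => (hb _).le) e0 hn
    have l2 := sum_mul_antitone_ge (a := fun k => ε * ((k : ℝ) + 1) +
      (g (k + 1) - 2 * γ * ((k : ℝ) + 1))) (w := fun i => b (n - 1 - i)) (M := M) (n := n)
      (fun k => by
        rw [Finset.sum_add_distrib, hsum]; linarith [(abs_le.1 (hM k)).1])
      (fun i _ => (hb _).le) e0 hn
    simp only [sub_mul, add_mul, Finset.sum_sub_distrib, Finset.sum_add_distrib] at l1 l2
    have hW' : W n = ∑ i ∈ Finset.range n, (i : ℝ) * b (n - 1 - i) +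
        ∑ i ∈ Finset.range n, b (n - 1 - i) := by
      simp only [hW, add_mul, one_mul, Finset.sum_add_distrib]
    have hq : ∀ c : ℝ, ∑ i ∈ Finset.range n, c * ((i : ℝ) + 1) * b (n - 1 - i) = c * W n := fun c => by
      simp only [hW, Finset.mul_sum, mul_assoc]
    rw [hq, hq, ← hrec] at l1 l2
    have l3 : b (n - 1 - 0) ≤ b n := hmono (by omega)
    have l4 := mul_le_mul_of_nonneg_left l3 hM0
    have hWn := hWpos n hn
    have l5 : |n * b n - 2 * γ * W n| ≤ ε * W n + M * b n := by
      rw [abs_le]; constructor <;> linarith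
    have l6 : n * b n / W n - 2 * γ = (n * b n - 2 * γ * W n) / W n := by field_simp
    have l7 : ε + M / n * (n * b n / W n) = (ε * W n + M * b n) / W n := by field_simp
    rw [l6, l7, abs_div, abs_of_pos hWn]
    gcongr
  -- `r n = n b n / W n` is bounded, so the error `(M / n) r n` vanishes
  obtain ⟨K, hK0, hK⟩ : ∃ K : ℝ, 0 < K ∧ ∀ᶠ n : ℕ in atTop, n * b n / W n ≤ K := by
    obtain ⟨M, hM0, hM⟩ := main 1 one_pos
    refine ⟨2 * (1 + 2 * γ), by positivity, ?_⟩
    filter_upwards [eventually_ge_atTop (⌈2 * M⌉₊), eventually_gt_atTop 0] with n hn hn0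
    have hn' : (0 : ℝ) < n := by exact_mod_cast hn0
    have h1 : 2 * M ≤ n := Nat.ceil_le.1 hn
    have h2 := (abs_le.1 (hM n hn0)).2
    have h3 : M / n ≤ 1 / 2 := by rw [div_le_iff₀ hn']; linarith
    have h4 : 0 < n * b n / W n := div_pos (mul_pos hn' (hb n)) (hWpos n hn0)
    nlinarith
  rw [Metric.tendsto_atTop']
  intro ε hε
  obtain ⟨M, hM0, hM⟩ := main (ε / 2) (by positivity)
  have h5 : Tendsto (fun n : ℕ => M / n * K) atTop (𝓝 0) := by
    simpa using (tendsto_const_div_atTop_nhds_zero_nat M).mul_const K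
  obtain ⟨N₀, hN₀⟩ := eventually_atTop.1
    ((hK.and ((tendsto_order.1 h5).2 (ε / 2) (by positivity))).and (eventually_gt_atTop 0))
  refine ⟨N₀, fun n hn => ?_⟩
  obtain ⟨⟨h6, h7⟩, h8⟩ := hN₀ n hn.le
  rw [Real.dist_eq]
  have h9 : M / n * (n * b n / W n) ≤ M / n * K := by gcongr
  linarith [hM n h8]

/-! ### A criterion for the Benford property -/

theorem tendsto_sqrt_mul_log_one_add {y : ℕ → ℝ} {c : ℝ} (hy : ∀ n, 0 < n → 0 ≤ y n)
    (h : Tendsto (fun n : ℕ => √n * y n) atTop (𝓝 c)) :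
    Tendsto (fun n : ℕ => √n * Real.log (1 + y n)) atTop (𝓝 c) := by
  have hsq : Tendsto (fun n : ℕ => √(n : ℝ)) atTop atTop :=
    Real.tendsto_sqrt_atTop.comp tendsto_natCast_atTop_atTop
  have hr : Tendsto (fun n : ℕ => (√(n : ℝ))⁻¹) atTop (𝓝 0) := tendsto_inv_atTop_zero.comp hsq
  have hy0 : Tendsto y atTop (𝓝 0) := by
    have := h.mul hr
    rw [mul_zero] at this
    refine this.congr' ?_
    filter_upwards [eventually_gt_atTop 0] with n hn
    have : (0 : ℝ) < √n := Real.sqrt_pos.2 (by exact_mod_cast hn)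
    field_simp
  have hlo : Tendsto (fun n : ℕ => √n * y n / (1 + y n)) atTop (𝓝 (c / (1 + 0))) :=
    h.div (hy0.const_add 1) (by simp)
  rw [add_zero, div_one] at hlo
  refine tendsto_of_tendsto_of_tendsto_of_le_of_le' hlo h ?_ ?_
  · filter_upwards [eventually_gt_atTop 0] with n hn
    have h0 := hy n hn
    have h1 := Real.one_sub_inv_le_log_of_pos (show 0 < 1 + y n by linarith)
    rw [mul_div_assoc]
    refine mul_le_mul_of_nonneg_left ?_ (Real.sqrt_nonneg _)
    calc y n / (1 + y n) = 1 - (1 + y n)⁻¹ := by field_simp; ring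
      _ ≤ _ := h1
  · filter_upwards [eventually_gt_atTop 0] with n hn
    have h0 := hy n hn
    have h1 := Real.log_le_sub_one_of_pos (show 0 < 1 + y n by linarith)
    exact mul_le_mul_of_nonneg_left (by linarith) (Real.sqrt_nonneg _)

/-- On a window of length at most `1`, a difference of floors is the indicator of the presence of an
integer in `(x - β, x - α]`. -/
theorem floor_sub_floor_eq_ite {x α β : ℝ} (h1 : α ≤ β) (h2 : β ≤ α + 1) :
    (⌊x - α⌋ : ℝ) - ⌊x - β⌋ = if ⌊x - β⌋ < ⌊x - α⌋ then 1 else 0 := by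
  have a1 : ⌊x - β⌋ ≤ ⌊x - α⌋ := Int.floor_le_floor (by linarith)
  have a2 : ⌊x - α⌋ ≤ ⌊x - β⌋ + 1 := by
    rw [← Int.floor_add_one]; exact Int.floor_le_floor (by linarith)
  split_ifs with h
  · have : ⌊x - α⌋ = ⌊x - β⌋ + 1 := by omega
    rw [this]; push_cast; ring
  · have : ⌊x - α⌋ = ⌊x - β⌋ := by omega
    rw [this, sub_self]

/-- For `t ≥ d + 1`, the condition `m ≥ 0` in `BeginsWith` is automatic and beginning with `d` means
that an integer lies in `(log_k t - log_k (d + 1), log_k t - log_k d]`. -/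
theorem beginsWith_iff_floor {k d : ℕ} (hk : 2 ≤ k) (hd : 0 < d) {t : ℝ} (ht : (d : ℝ) + 1 ≤ t) :
    BeginsWith k d t ↔
      ⌊Real.logb k t - Real.logb k (d + 1)⌋ < ⌊Real.logb k t - Real.logb k d⌋ := by
  have hk1 : (1 : ℝ) < k := by exact_mod_cast hk
  have hk0 : (0 : ℝ) < k := by linarith
  have hd0 : (0 : ℝ) < d := by exact_mod_cast hd
  have ht0 : 0 < t := by linarith
  have e : ∀ (z : ℝ) (m : ℕ), 0 < z → Real.logb k (z * (k : ℝ) ^ m) = Real.logb k z + m := by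
    intro z m hz
    rw [Real.logb_mul hz.ne' (by positivity), Real.logb_pow, Real.logb_self_eq_one hk1, mul_one]
  have l1 : ∀ m : ℕ, (d : ℝ) * (k : ℝ) ^ m ≤ |t| ↔ (m : ℤ) ≤ ⌊Real.logb k t - Real.logb k d⌋ := by
    intro m
    rw [abs_of_pos ht0, ← Real.logb_le_logb hk1 (by positivity) ht0, e _ _ hd0, Int.le_floor]
    push_cast
    constructor <;> intro h <;> linarith
  have l2 : ∀ m : ℕ, |t| < ((d : ℝ) + 1) * (k : ℝ) ^ m ↔
      ⌊Real.logb k t - Real.logb k (d + 1)⌋ < (m : ℤ) := by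
    intro m
    rw [abs_of_pos ht0, ← Real.logb_lt_logb_iff hk1 ht0 (by positivity), e _ _ (by positivity),
      Int.floor_lt]
    push_cast
    constructor <;> intro h <;> linarith
  simp only [BeginsWith, l1, l2]
  constructor
  · rintro ⟨m, h1, h2⟩
    exact h2.trans_le h1
  · intro h
    have h0 : 0 ≤ ⌊Real.logb k t - Real.logb k d⌋ := by
      rw [Int.floor_nonneg, sub_nonneg]
      exact Real.logb_le_logb_of_le hk1 hd0 (by linarith)
    refine ⟨⌊Real.logb k t - Real.logb k d⌋.toNat, ?_, ?_⟩ <;> rw [Int.toNat_of_nonneg h0]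
    exact h

/-- The Benford property follows as soon as all translates of `log_k (b n)` have fractional parts of
mean `1/2`: with `α = log_k d` and `β = log_k (d + 1)`, the indicator of beginning with `d` is
`⌊x - α⌋ - ⌊x - β⌋ = (β - α) + {x - β} - {x - α}`. -/
theorem isBenford_of_avg {b : ℕ → ℝ} (hb : Tendsto b atTop atTop)
    (h : ∀ k : ℕ, 2 ≤ k → ∀ γ : ℝ, Tendsto (fun N : ℕ => (N : ℝ)⁻¹ *
      ∑ n ∈ Finset.range N, (Int.fract (Real.logb k (b n) - γ) - 1 / 2)) atTop (𝓝 0)) :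
    IsBenford b := by
  classical
  intro k hk d hd
  have hk1 : (1 : ℝ) < k := by exact_mod_cast hk
  have hd0 : (0 : ℝ) < d := by exact_mod_cast hd
  have hαβ : Real.logb k d ≤ Real.logb k (d + 1) :=
    Real.logb_le_logb_of_le hk1 hd0 (by linarith)
  have hβα : Real.logb k (d + 1) ≤ Real.logb k d + 1 := by
    have h0 : Real.logb k d + 1 = Real.logb k (d * k) := by
      rw [Real.logb_mul hd0.ne' (by linarith), Real.logb_self_eq_one hk1]
    rw [h0]
    refine Real.logb_le_logb_of_le hk1 (by positivity) ?_
    have h1 : (1 : ℝ) ≤ d := by exact_mod_cast hd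
    have h2 : (2 : ℝ) ≤ k := by exact_mod_cast hk
    nlinarith
  have hα := h k hk (Real.logb k d)
  have hβ := h k hk (Real.logb k (d + 1))
  set α := Real.logb k d
  set β := Real.logb k (d + 1)
  set x : ℕ → ℝ := fun n => Real.logb k (b n)
  set e : ℕ → ℝ := fun n => (if n ∈ {n | BeginsWith k d (b n)} then 1 else 0) -
    ((⌊x n - α⌋ : ℝ) - ⌊x n - β⌋) with he
  have he0 : Tendsto e atTop (𝓝 0) := by
    refine tendsto_const_nhds.congr' ?_
    filter_upwards [hb.eventually_ge_atTop ((d : ℝ) + 1)] with n hn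
    simp only [he, Set.mem_ofPred_eq, floor_sub_floor_eq_ite hαβ hβα, beginsWith_iff_floor hk hd hn]
    exact (sub_self _).symm
  have key := (((hβ.sub hα).add he0.cesaro).add_const (β - α))
  simp only [sub_zero, add_zero, zero_add] at key
  refine key.congr' ?_
  filter_upwards [eventually_gt_atTop 0] with N hN
  have hN' : (N : ℝ) ≠ 0 := by exact_mod_cast hN.ne'
  have e1 : ((((Finset.range N).filter
      (fun n => n ∈ {n | BeginsWith k d (b n)})).card : ℕ) : ℝ) =
      ∑ n ∈ Finset.range N, ((Int.fract (x n - β) - 1 / 2) - (Int.fract (x n - α) - 1 / 2) + e n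
        + (β - α)) := by
    rw [Finset.card_filter, Nat.cast_sum]
    refine Finset.sum_congr rfl fun n _ => ?_
    simp only [he, Int.fract, Nat.cast_ite, Nat.cast_one, Nat.cast_zero]
    ring
  have e2 : ∀ u v w : ℕ → ℝ, ∑ n ∈ Finset.range N, (u n - v n + w n + (β - α)) =
      ∑ n ∈ Finset.range N, u n - ∑ n ∈ Finset.range N, v n + ∑ n ∈ Finset.range N, w n +
        N * (β - α) := fun u v w => by
    rw [Finset.sum_add_distrib, Finset.sum_add_distrib, Finset.sum_sub_distrib,
      Finset.sum_const, Finset.card_range, nsmul_eq_mul]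
  rw [e2] at e1
  refine Eq.trans ?_ ((congrArg (fun z : ℝ => (N : ℝ)⁻¹ * z) (e1.symm.trans ?_)).trans
    (inv_mul_eq_div _ _))
  · simp only [mul_add, mul_sub, inv_mul_cancel_left₀ hN', x]
  · congr!

/-- A positive monotone `b` with `n b n ~ C W n`, where `W` is its double summatory function, is
Benford. With `S` the summatory function, `y n = S n / W n` is the relative increment of `W` and
satisfies the recursion of `riccati`, so `log W` has increments `~ √C / √n`. As
`log (b n) = log (W n) - log n + log C + o(1)`, `tendsto_avg_fract_of_close` applies. -/
theorem isBenford_of_ratio {b : ℕ → ℝ} {C : ℝ} (hC : 0 < C) (hb : ∀ n, 0 < b n)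
    (hmono : Monotone b)
    (hr : Tendsto (fun n : ℕ => n * b n /
      ∑ m ∈ Finset.range n, ∑ i ∈ Finset.range (m + 1), b i) atTop (𝓝 C)) :
    IsBenford b := by
  set S : ℕ → ℝ := fun m => ∑ i ∈ Finset.range (m + 1), b i with hS
  set W : ℕ → ℝ := fun n => ∑ m ∈ Finset.range n, S m with hW
  set r : ℕ → ℝ := fun n => n * b n / W n with hrdef
  have hSpos : ∀ n, 0 < S n := fun n => Finset.sum_pos (fun i _ => hb i) (by simp)
  have hWpos : ∀ n, 0 < n → 0 < W n := fun n hn =>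
    Finset.sum_pos (fun _ _ => hSpos _) ⟨0, by simpa using hn⟩
  have hWs : ∀ n, W (n + 1) = W n + S n := fun n => Finset.sum_range_succ _ _
  have hSs : ∀ n, S (n + 1) = S n + b (n + 1) := fun n => Finset.sum_range_succ _ _
  have hrpos : ∀ n, 0 < n → 0 < r n := fun n hn =>
    div_pos (mul_pos (by exact_mod_cast hn) (hb n)) (hWpos n hn)
  set y : ℕ → ℝ := fun n => S n / W n with hydef
  have hy : ∀ n, 0 < n → 0 < y n := fun n hn => div_pos (hSpos n) (hWpos n hn)
  have hρ : Tendsto (fun n : ℕ => r (n + 1) * ((n : ℝ) / (n + 1))) atTop (𝓝 C) := by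
    simpa using (hr.comp (tendsto_add_atTop_nat 1)).mul (tendsto_natCast_div_add_atTop (1 : ℝ))
  have hyC : Tendsto (fun n : ℕ => √n * y n) atTop (𝓝 √C) := by
    refine riccati hC hy hρ fun n hn => ?_
    have hn' : (0 : ℝ) < n := by exact_mod_cast hn
    have h1 := hWpos n hn
    have h2 := hSpos n
    simp only [hydef, hrdef, hWs, hSs]
    push_cast
    field_simp
  -- logarithmic increments of `W n / n`
  have hinc : Tendsto (fun n : ℕ => √n * (Real.log (1 + y n) - Real.log (1 + (n : ℝ)⁻¹)))
      atTop (𝓝 √C) := by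
    have h1 := tendsto_sqrt_mul_log_one_add (fun n hn => (hy n hn).le) hyC
    have h2 : Tendsto (fun n : ℕ => √n * (n : ℝ)⁻¹) atTop (𝓝 0) := by
      have hsq : Tendsto (fun n : ℕ => √(n : ℝ)) atTop atTop :=
        Real.tendsto_sqrt_atTop.comp tendsto_natCast_atTop_atTop
      refine (tendsto_inv_atTop_zero.comp hsq).congr fun n => ?_
      simp only [Function.comp]
      rw [← div_eq_mul_inv, Real.sqrt_div_self', one_div]
    have h3 := tendsto_sqrt_mul_log_one_add (fun n _ => by positivity) h2
    have h4 := h1.sub h3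
    rw [sub_zero] at h4
    exact h4.congr fun n => by ring
  have hbtop : Tendsto b atTop atTop := by
    have hSge : ∀ m : ℕ, ((m : ℝ) + 1) * b 0 ≤ S m := by
      intro m
      have := Finset.card_nsmul_le_sum (Finset.range (m + 1)) b (b 0) fun i _ => hmono (Nat.zero_le i)
      simpa [nsmul_eq_mul] using this
    have hWge : ∀ n : ℕ, b 0 / 2 * (n : ℝ) ^ 2 ≤ W n := by
      intro n
      induction n with
      | zero => simp [hW]
      | succ n ih =>
        rw [hWs]; push_cast
        nlinarith [hSge n, hb 0, (Nat.cast_nonneg n : (0 : ℝ) ≤ n)]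
    have h1 : ∀ᶠ n : ℕ in atTop, C / 2 * (b 0 / 2) * n ≤ b n := by
      filter_upwards [(tendsto_order.1 hr).1 (C / 2) (by linarith), eventually_gt_atTop 0] with n h1 h2
      have hn' : (0 : ℝ) < n := by exact_mod_cast h2
      rw [lt_div_iff₀ (hWpos n h2)] at h1
      have h3 := mul_le_mul_of_nonneg_left (hWge n) (by linarith : 0 ≤ C / 2)
      have h4 : (n : ℝ) * (C / 2 * (b 0 / 2) * n) ≤ n * b n := by nlinarith
      exact le_of_mul_le_mul_left h4 hn'
    refine tendsto_atTop_mono' _ h1 ?_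
    exact tendsto_natCast_atTop_atTop.const_mul_atTop (by have := hb 0; positivity)
  refine isBenford_of_avg hbtop fun k hk γ => ?_
  have hk1 : (1 : ℝ) < k := by exact_mod_cast hk
  have hlk : 0 < Real.log k := Real.log_pos hk1
  refine tendsto_avg_fract_of_close
    (f := fun n => (Real.log (W n) - Real.log n + Real.log C) / Real.log k)
    (c := √C / Real.log k) (div_pos (Real.sqrt_pos.2 hC) hlk) ?_ ?_ γ
  · refine (hinc.div_const (Real.log k)).congr' ?_
    filter_upwards [eventually_gt_atTop 0] with n hn
    have hn' : (0 : ℝ) < n := by exact_mod_cast hn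
    have h1 := hWpos n hn
    have e1 : Real.log (W (n + 1)) = Real.log (W n) + Real.log (1 + y n) := by
      rw [← Real.log_mul h1.ne' (by linarith [hy n hn]), hWs]
      congr 1; simp only [hydef]; field_simp
    have e2 : Real.log ((n + 1 : ℕ) : ℝ) = Real.log n + Real.log (1 + (n : ℝ)⁻¹) := by
      rw [← Real.log_mul hn'.ne' (by positivity)]
      congr 1; push_cast; field_simp
    rw [e1, e2]; ring
  · have h1 := (((Real.continuousAt_log hC.ne').tendsto.comp hr).sub_const (Real.log C)).div_const
      (Real.log k)
    rw [sub_self, zero_div] at h1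
    refine h1.congr' ?_
    filter_upwards [eventually_gt_atTop 0] with n hn
    have hn' : (0 : ℝ) < n := by exact_mod_cast hn
    have h1 := hWpos n hn
    simp only [Function.comp, Real.logb]
    rw [Real.log_div (mul_pos hn' (hb n)).ne' h1.ne', Real.log_mul hn'.ne' (hb n).ne']
    ring

/-! ### Sums of integers not divisible by `s` -/

theorem sum_nonmultiples (s y : ℕ) (hs : 0 < s) :
    (∑ d ∈ Finset.range y, if s ∣ d + 1 then 0 else ((d : ℝ) + 1)) =
      (y : ℝ) * (y + 1) / 2 - s * ((y / s : ℕ) : ℝ) * ((y / s : ℕ) + 1) / 2 := by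
  induction y with
  | zero => simp
  | succ y ih =>
    rw [Finset.sum_range_succ, ih, Nat.succ_div]
    split_ifs with h
    · obtain ⟨q, hq⟩ := h
      have h1 : y / s + 1 = q := by
        have := Nat.succ_div_of_dvd (a := y) (b := s) ⟨q, hq⟩
        rw [← this, hq, Nat.mul_div_cancel_left _ hs]
      have h2 : ((y : ℝ) + 1) = s * ((y / s : ℕ) + 1) := by
        have : ((y + 1 : ℕ) : ℝ) = ((s * q : ℕ) : ℝ) := by rw [hq]
        rw [← h1] at this
        push_cast at this ⊢
        exact this
      push_cast
      linear_combination -h2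
    · push_cast; ring

/-- The sum of the non-multiples of `s` up to `N / (j + 1)`, normalised by `N²`. The index `d` stands for
the integer `d + 1`. -/
theorem tendsto_nonmultiples (s : ℕ) (hs : 0 < s) (j : ℕ) :
    Tendsto (fun N : ℕ => (∑ d ∈ Finset.range (N / (j + 1)),
      if s ∣ d + 1 then 0 else ((d : ℝ) + 1)) / (N : ℝ) ^ 2) atTop
      (𝓝 ((1 - (s : ℝ)⁻¹) / 2 * (((j : ℝ) + 1) ^ 2)⁻¹)) := by
  have hdiv : ∀ m : ℕ, 0 < m → Tendsto (fun N : ℕ => ((N / m : ℕ) : ℝ) / N) atTop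
      (𝓝 (m : ℝ)⁻¹) := by
    intro m hm
    have h := (tendsto_nat_floor_mul_div_atTop (R := ℝ) (a := (m : ℝ)⁻¹) (by positivity)).comp
      tendsto_natCast_atTop_atTop
    refine h.congr fun N => ?_
    simp only [Function.comp]
    rw [inv_mul_eq_div, Nat.floor_div_natCast, Nat.floor_natCast]
  have hiN : Tendsto (fun N : ℕ => (N : ℝ)⁻¹) atTop (𝓝 0) :=
    tendsto_inv_atTop_zero.comp tendsto_natCast_atTop_atTop
  have h1 := hdiv (j + 1) j.succ_pos
  have h2 := hdiv ((j + 1) * s) (by positivity)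
  have h3 := ((h1.mul (h1.add hiN)).div_const 2).sub
    (((h2.const_mul (s : ℝ)).mul (h2.add hiN)).div_const 2)
  have e : (1 - (s : ℝ)⁻¹) / 2 * (((j : ℝ) + 1) ^ 2)⁻¹ =
      ((j + 1 : ℕ) : ℝ)⁻¹ * (((j + 1 : ℕ) : ℝ)⁻¹ + 0) / 2 -
      (s : ℝ) * (((j + 1) * s : ℕ) : ℝ)⁻¹ * ((((j + 1) * s : ℕ) : ℝ)⁻¹ + 0) / 2 := by
    have : (s : ℝ) ≠ 0 := by positivity
    push_cast
    field_simp
    try ring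
  rw [e]
  refine h3.congr' ?_
  filter_upwards [eventually_gt_atTop 0] with N hN
  have hN' : (N : ℝ) ≠ 0 := by exact_mod_cast hN.ne'
  rw [sum_nonmultiples s _ hs, Nat.div_div_eq_div_mul]
  field_simp

theorem nonmultiples_le (s y : ℕ) :
    (∑ d ∈ Finset.range y, if s ∣ d + 1 then 0 else ((d : ℝ) + 1)) ≤ (y : ℝ) ^ 2 := by
  calc _ ≤ ∑ d ∈ Finset.range y, (y : ℝ) := by
        refine Finset.sum_le_sum fun d hd => ?_
        have : ((d + 1 : ℕ) : ℝ) ≤ y := by exact_mod_cast Finset.mem_range.1 hd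
        push_cast at this
        split_ifs
        · positivity
        · exact this
    _ = _ := by simp [sq]

/-! ### Regular partitions -/

open scoped Classical in
/-- The `s`-regular partitions of `n`, as a `Finset`. -/
def regularSet (s n : ℕ) : Finset (Nat.Partition n) :=
  Finset.univ.filter fun p => ∀ i ∈ p.parts, ¬ s ∣ i

theorem mem_regularSet {s n : ℕ} {p : Nat.Partition n} :
    p ∈ regularSet s n ↔ ∀ i ∈ p.parts, ¬ s ∣ i := by
  simp [regularSet]

theorem card_regularSet (s n : ℕ) : (regularSet s n).card = numRegularPartitions s n := by
  classical
  rw [numRegularPartitions, Nat.card_eq_fintype_card, Fintype.card_subtype, regularSet]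

/-- Removing `j` copies of `d` is a bijection from the `s`-regular partitions of `n` with at least `j`
parts `d` to the `s`-regular partitions of `n - d j`. -/
theorem card_le_count (s n d j : ℕ) (hd : 0 < d) (hsd : ¬ s ∣ d) (hn : d * j ≤ n) :
    ((regularSet s n).filter fun p => j ≤ p.parts.count d).card =
      numRegularPartitions s (n - d * j) := by
  rw [← card_regularSet]
  symm
  refine Finset.card_bij (fun q _ => ⟨q.parts + Multiset.replicate j d, ?_, ?_⟩) ?_ ?_ ?_
  · intro i hi
    rcases Multiset.mem_add.1 hi with h | h
    · exact q.parts_pos h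
    · rwa [Multiset.eq_of_mem_replicate h]
  · rw [Multiset.sum_add, q.parts_sum, Multiset.sum_replicate, smul_eq_mul, mul_comm j]
    omega
  · intro q hq
    rw [Finset.mem_filter, mem_regularSet]
    refine ⟨fun i hi => ?_, by simp⟩
    rcases Multiset.mem_add.1 hi with h | h
    · exact mem_regularSet.1 hq i h
    · rwa [Multiset.eq_of_mem_replicate h]
  · intro q _ q' _ h
    rw [Nat.Partition.mk.injEq] at h
    exact Nat.Partition.ext (add_right_cancel h)
  · intro p hp
    rw [Finset.mem_filter, mem_regularSet] at hp
    obtain ⟨r, hr⟩ := Multiset.le_iff_exists_add.1 (Multiset.le_count_iff_replicate_le.1 hp.2)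
    have hsum : r.sum = n - d * j := by
      have := p.parts_sum
      rw [hr, Multiset.sum_add, Multiset.sum_replicate, smul_eq_mul, mul_comm j] at this
      omega
    have hmem : ∀ i ∈ r, i ∈ p.parts := fun i hi => by
      rw [hr]; exact Multiset.mem_add.2 (Or.inr hi)
    refine ⟨⟨r, fun hi => p.parts_pos (hmem _ hi), hsum⟩, ?_, ?_⟩
    · exact mem_regularSet.2 fun i hi => hp.1 i (hmem i hi)
    · exact Nat.Partition.ext ((add_comm _ _).trans hr.symm)

/-- Adding a part `1`, which is allowed because `s ≥ 2`, embeds the `s`-regular partitions of `n` in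
those of `n + 1`. -/
theorem numRegularPartitions_mono (s : ℕ) (hs : 2 ≤ s) : Monotone (numRegularPartitions s) := by
  refine monotone_nat_of_le_succ fun n => ?_
  have h := card_le_count s (n + 1) 1 1 one_pos (by rw [Nat.dvd_one]; omega) (by omega)
  rw [mul_one, Nat.add_sub_cancel] at h
  rw [← h, ← card_regularSet s (n + 1)]
  exact Finset.card_filter_le _ _

theorem numRegularPartitions_pos (s : ℕ) (hs : 2 ≤ s) (n : ℕ) : 0 < numRegularPartitions s n := by
  refine lt_of_lt_of_le ?_ (numRegularPartitions_mono s hs n.zero_le)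
  rw [← card_regularSet, Finset.card_pos]
  exact ⟨⟨0, by simp, by simp⟩, mem_regularSet.2 (by simp)⟩

/-- The size `d` if it is allowed as a part of an `s`-regular partition, and `0` otherwise. -/
def regPart (s d : ℕ) : ℕ := if s ∣ d then 0 else d

/-- The sum of the divisors of `k` that are not divisible by `s`. -/
def regSigma (s k : ℕ) : ℕ := ∑ x ∈ k.divisorsAntidiagonal, regPart s x.1

/-- The recurrence `n b_s(n) = ∑_{k = 1}^n σ(k) b_s(n - k)`, where `σ = regSigma s`: count the total size
of all parts in all `s`-regular partitions of `n`, grouping the copies of `d` by the pairs `(d, j)`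
such that the partition has at least `j` parts `d`. The index `k` is shifted by one. -/
theorem mul_numRegularPartitions (s n : ℕ) :
    n * numRegularPartitions s n =
      ∑ k ∈ Finset.range n, regSigma s (k + 1) * numRegularPartitions s (n - 1 - k) := by
  have h1 : ∀ p ∈ regularSet s n, n = ∑ x ∈ Finset.Icc 1 n ×ˢ Finset.Icc 1 n,
      if x.2 ≤ p.parts.count x.1 then x.1 else 0 := by
    intro p _
    have hle : ∀ i ∈ p.parts, i ≤ n := fun i hi => by
      conv_rhs => rw [← p.parts_sum]
      exact Multiset.le_sum_of_mem hi
    rw [Finset.sum_product]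
    conv_lhs => rw [← p.parts_sum, Finset.sum_multiset_count]
    rw [Finset.sum_subset (s₂ := Finset.Icc 1 n)]
    · refine Finset.sum_congr rfl fun d hd => ?_
      have hd1 := (Finset.mem_Icc.1 hd).1
      have hc : p.parts.count d ≤ n := by
        have h2 := (Multiset.le_count_iff_replicate_le (a := d) (s := p.parts)).1 le_rfl
        obtain ⟨r, hr⟩ := Multiset.le_iff_exists_add.1 h2
        have h3 := congrArg Multiset.sum hr
        rw [Multiset.sum_add, Multiset.sum_replicate, p.parts_sum, smul_eq_mul] at h3
        have := Nat.le_mul_of_pos_right (p.parts.count d) hd1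
        omega
      rw [← Finset.sum_filter, Finset.sum_const]
      congr 1
      have : (Finset.Icc 1 n).filter (fun j => j ≤ p.parts.count d) =
          Finset.Icc 1 (p.parts.count d) := by
        ext j; simp only [Finset.mem_filter, Finset.mem_Icc]; omega
      rw [this, Nat.card_Icc, Nat.add_sub_cancel]
    · intro d hd
      have hd' := Multiset.mem_toFinset.1 hd
      exact Finset.mem_Icc.2 ⟨p.parts_pos hd', hle d hd'⟩
    · intro d _ hd
      rw [Multiset.mem_toFinset] at hd
      rw [Multiset.count_eq_zero_of_notMem hd, zero_smul]
  have h2 : ∀ x ∈ Finset.Icc 1 n ×ˢ Finset.Icc 1 n,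
      (∑ p ∈ regularSet s n, if x.2 ≤ p.parts.count x.1 then x.1 else 0) =
      ∑ k ∈ Finset.range n, if x.1 * x.2 = k + 1 then
        regPart s x.1 * numRegularPartitions s (n - 1 - k) else 0 := by
    rintro ⟨d, j⟩ hx
    -- three cases: `d` is forbidden, `k + 1 = d * j` is in range, or `d * j` exceeds `n`
    simp only [Finset.mem_product, Finset.mem_Icc] at hx ⊢
    obtain ⟨⟨hd, -⟩, hj, -⟩ := hx
    rw [← Finset.sum_filter, Finset.sum_const, smul_eq_mul]
    have hdj : 0 < d * j := Nat.mul_pos hd hj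
    by_cases hsd : s ∣ d
    · rw [Finset.sum_eq_zero fun k _ => by simp [regPart, hsd]]
      rw [Finset.card_eq_zero.2, zero_mul]
      refine Finset.filter_eq_empty_iff.2 fun p hp hjp => ?_
      exact mem_regularSet.1 hp d (Multiset.count_pos.1 (lt_of_lt_of_le hj hjp)) hsd
    by_cases hn : d * j ≤ n
    · rw [card_le_count s n d j hd hsd hn, Finset.sum_eq_single (d * j - 1)]
      · rw [if_pos (by omega), regPart, if_neg hsd, mul_comm]
        congr 2
        omega
      · intro k _ hk
        rw [if_neg (by omega)]
      · intro hk
        rw [Finset.mem_range] at hk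
        omega
    · rw [Finset.sum_eq_zero fun k hk => by
        rw [Finset.mem_range] at hk
        rw [if_neg (by omega)]]
      rw [Finset.card_eq_zero.2, zero_mul]
      refine Finset.filter_eq_empty_iff.2 fun p hp hjp => ?_
      obtain ⟨r, hr⟩ := Multiset.le_iff_exists_add.1 (Multiset.le_count_iff_replicate_le.1 hjp)
      have h3 := congrArg Multiset.sum hr
      rw [Multiset.sum_add, Multiset.sum_replicate, p.parts_sum, smul_eq_mul, mul_comm] at h3
      omega
  calc n * numRegularPartitions s n = ∑ p ∈ regularSet s n, n := by
        rw [Finset.sum_const, card_regularSet, smul_eq_mul, mul_comm]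
    _ = _ := Finset.sum_congr rfl h1
    _ = _ := Finset.sum_comm
    _ = _ := Finset.sum_congr rfl h2
    _ = _ := Finset.sum_comm
    _ = _ := by
      refine Finset.sum_congr rfl fun k hk => ?_
      rw [regSigma, Nat.divisorsAntidiagonal_eq_prod_filter_of_le k.succ_ne_zero
        (Finset.mem_range.1 hk), Finset.sum_mul, Finset.sum_filter]
      rfl

/-- Dirichlet's rearrangement of the summatory function of `regSigma` according to the codivisor. -/
theorem sum_regSigma (s N : ℕ) :
    (∑ k ∈ Finset.range N, (regSigma s (k + 1) : ℝ)) =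
      ∑ j ∈ Finset.range N, ∑ d ∈ Finset.range (N / (j + 1)),
        if s ∣ d + 1 then (0 : ℝ) else (d : ℝ) + 1 := by
  have h1 : ∀ k ∈ Finset.range N, (regSigma s (k + 1) : ℝ) =
      ∑ j ∈ Finset.Icc 1 N, ∑ d ∈ Finset.Icc 1 N,
        if d * j = k + 1 then (regPart s d : ℝ) else 0 := by
    intro k hk
    rw [regSigma, Nat.divisorsAntidiagonal_eq_prod_filter_of_le k.succ_ne_zero
        (Finset.mem_range.1 hk), Finset.sum_filter, Finset.sum_product, Finset.sum_comm]
    push_cast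
    rfl
  rw [Finset.sum_congr rfl h1, Finset.sum_comm]
  have icc : ∀ (M : ℕ) (F : ℕ → ℝ), ∑ j ∈ Finset.Icc 1 M, F j = ∑ j ∈ Finset.range M, F (j + 1) :=
    fun M F => by rw [← Finset.Ico_succ_right_eq_Icc, Finset.sum_Ico_eq_sum_range]; simp [add_comm]
  rw [icc]
  refine Finset.sum_congr rfl fun j _ => ?_
  rw [Finset.sum_comm]
  have h2 : ∀ d ∈ Finset.Icc 1 N, (∑ k ∈ Finset.range N,
      if d * (j + 1) = k + 1 then (regPart s d : ℝ) else 0) =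
      if d ≤ N / (j + 1) then (regPart s d : ℝ) else 0 := by
    intro d hd
    have hd1 := (Finset.mem_Icc.1 hd).1
    have hp : 0 < d * (j + 1) := by positivity
    have hiff := Nat.le_div_iff_mul_le (x := d) (y := N) j.succ_pos
    rw [Nat.succ_eq_add_one] at hiff
    split_ifs with h <;> rw [hiff] at h
    · rw [Finset.sum_eq_single (d * (j + 1) - 1)]
      · rw [if_pos (by omega)]
      · intro k _ hk
        rw [if_neg (by omega)]
      · intro hk
        rw [Finset.mem_range] at hk
        omega
    · refine Finset.sum_eq_zero fun k hk => ?_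
      rw [Finset.mem_range] at hk
      rw [if_neg (by omega)]
  rw [Finset.sum_congr rfl h2, ← Finset.sum_filter]
  have h3 : (Finset.Icc 1 N).filter (fun d => d ≤ N / (j + 1)) = Finset.Icc 1 (N / (j + 1)) := by
    have := Nat.div_le_self N (j + 1)
    ext d; simp only [Finset.mem_filter, Finset.mem_Icc]; omega
  rw [h3, icc]
  refine Finset.sum_congr rfl fun d _ => ?_
  rw [regPart]
  split_ifs <;> simp

/-- The summatory function of `regSigma` grows like `γ N²` for some `γ > 0`: dominated convergence in
`sum_regSigma`, with the majorant `1 / (j + 1)²`. -/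
theorem tendsto_sum_regSigma (s : ℕ) (hs : 2 ≤ s) : ∃ γ : ℝ, 0 < γ ∧
    Tendsto (fun N : ℕ => (∑ k ∈ Finset.range N, (regSigma s (k + 1) : ℝ)) / (N : ℝ) ^ 2)
      atTop (𝓝 γ) := by
  have hsum : Summable fun j : ℕ => (((j : ℝ) + 1) ^ 2)⁻¹ := by
    have := (summable_nat_add_iff 1).2 (Real.summable_nat_pow_inv.2 one_lt_two)
    exact_mod_cast this
  have hs1 : (0 : ℝ) < (1 - (s : ℝ)⁻¹) / 2 := by
    have : (2 : ℝ) ≤ s := by exact_mod_cast hs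
    have := inv_lt_one_of_one_lt₀ (show (1 : ℝ) < s by linarith)
    linarith
  refine ⟨∑' j : ℕ, (1 - (s : ℝ)⁻¹) / 2 * (((j : ℝ) + 1) ^ 2)⁻¹,
    (hsum.mul_left _).tsum_pos (fun j => by positivity) 0 (by positivity), ?_⟩
  -- terms with `j ≥ N` vanish, so the sum over `j < N` is a full series
  have key := tendsto_tsum_of_dominated_convergence hsum
    (tendsto_nonmultiples s (by omega)) (Eventually.of_forall fun N j => ?_)
  · refine key.congr fun N => ?_
    rw [sum_regSigma, Finset.sum_div]
    refine tsum_eq_sum fun j hj => ?_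
    rw [Finset.mem_range, not_lt] at hj
    rw [Nat.div_eq_of_lt (by omega)]
    simp
  · have h0 : (0 : ℝ) ≤ ∑ d ∈ Finset.range (N / (j + 1)), if s ∣ d + 1 then 0 else ((d : ℝ) + 1) :=
      Finset.sum_nonneg fun d _ => by split_ifs <;> positivity
    rw [Real.norm_of_nonneg (by positivity)]
    rcases Nat.eq_zero_or_pos N with rfl | hN
    · simp; positivity
    have hN' : (0 : ℝ) < N := by exact_mod_cast hN
    have h1 := nonmultiples_le s (N / (j + 1))
    have h2 : ((N / (j + 1) : ℕ) : ℝ) ≤ N / (j + 1) := by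
      simpa using (Nat.cast_div_le (α := ℝ) (m := N) (n := j + 1))
    rw [div_le_iff₀ (by positivity)]
    calc _ ≤ _ := h1
      _ ≤ ((N : ℝ) / (j + 1)) ^ 2 := by gcongr
      _ = _ := by field_simp

/-- For every `s ≥ 2`, the `s`-regular partition counting function `b_s(n)`
is Benford. -/
theorem regularPartitions_isBenford (s : ℕ) (hs : 2 ≤ s) :
    IsBenford (fun n => (numRegularPartitions s n : ℝ)) := by
  obtain ⟨γ, hγ, hG⟩ := tendsto_sum_regSigma s hs
  have hb : ∀ n, (0 : ℝ) < numRegularPartitions s n := fun n => by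
    exact_mod_cast numRegularPartitions_pos s hs n
  have hmono : Monotone fun n => (numRegularPartitions s n : ℝ) := fun m n h => by
    exact Nat.cast_le.2 (numRegularPartitions_mono s hs h)
  have hrec : ∀ n : ℕ, (n : ℝ) * numRegularPartitions s n = ∑ k ∈ Finset.range n,
      (regSigma s (k + 1) : ℝ) * numRegularPartitions s (n - 1 - k) := fun n => by
    exact_mod_cast mul_numRegularPartitions s n
  have hr := tendsto_ratio (b := fun n => (numRegularPartitions s n : ℝ))
    (g := fun k => (regSigma s k : ℝ)) hγ hb hmono hG hrec
  refine isBenford_of_ratio (C := 2 * γ) (by positivity) hb hmono (hr.congr fun n => ?_)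
  rw [sum_sum_eq]
end
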